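/- Let K ∈ 𝒦_s^d be a proper spherically convex body and let C ⊂ S^d be a spherical cap with σ_d(K) = σ_d(C) > 0 and radius α_C < π/2. Let α₀ ∈ (0,π/2) be such that α₀ ≤ α_C. Then U₁(K) ≥ (1 + β·Δ₂(K)²)·U₁(C), where β := 2·min{ binom(d+1,2)·sin^{d+1}(α₀)·tan^{−2d}(α_C) / (d + d·binom(d+1,2)·(π/2)²·tan^{−d}(α_C)) , (2/π)²·D(π/2 − α_C) }. -/

import Mathlib

open Real MeasureTheory Filter
open scoped RealInnerProductSpace ENNReal NNReal Topology

noncomputable section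

/-- The ambient Euclidean space `ℝ^{d+1}`. -/
abbrev Esp (d : ℕ) : Type := EuclideanSpace ℝ (Fin (d + 1))

/-- The unit sphere `S^d ⊂ ℝ^{d+1}`. -/
def uSphere (d : ℕ) : Set (Esp d) := Metric.sphere 0 1

/-- The spherical Lebesgue measure `σ_d` (d-dimensional Hausdorff measure restricted
to the unit sphere). -/
def sigmaMeas (d : ℕ) : Measure (Esp d) := (μH[(d : ℝ)]).restrict (uSphere d)

/-- `ω_{d+1} = σ_d(S^d)`, the total surface area of the unit sphere in `ℝ^{d+1}`. -/
def omegaTot (d : ℕ) : ℝ := (sigmaMeas d (uSphere d)).toReal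

/-- `ω_d`, the `(d-1)`-dimensional measure of the unit sphere `S^{d-1} ⊂ ℝ^d`. -/
def omegaSm (d : ℕ) : ℝ :=
  (μH[((d : ℝ) - 1)] (Metric.sphere (0 : EuclideanSpace ℝ (Fin d)) 1)).toReal

/-- `κ_d`, the volume of the unit ball in `ℝ^d`. -/
def kappaVol (d : ℕ) : ℝ :=
  (volume (Metric.ball (0 : EuclideanSpace ℝ (Fin d)) 1)).toReal

/-- The geodesic (angular) distance `d_s(x,y) = arccos ⟨x,y⟩` on the unit sphere. -/
def geo {d : ℕ} (x y : Esp d) : ℝ := Real.arccos ⟪x, y⟫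

/-- The spherical ball (cap) `B(e,α)` of radius `α` centred at `e`. -/
def cap {d : ℕ} (e : Esp d) (α : ℝ) : Set (Esp d) := {x ∈ uSphere d | geo x e ≤ α}

/-- `K ∈ 𝒦̄_s^d`: a spherically convex body, i.e. the intersection of the unit sphere
with a closed convex cone `C ≠ {0}` which is not a linear subspace. -/
def IsSphConvBody (d : ℕ) (K : Set (Esp d)) : Prop :=
  ∃ C : Set (Esp d), IsClosed C ∧ Convex ℝ C ∧
    (∀ x ∈ C, ∀ t : ℝ, 0 ≤ t → t • x ∈ C) ∧
    C ≠ {0} ∧ (∀ L : Submodule ℝ (Esp d), C ≠ (L : Set (Esp d))) ∧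
    K = C ∩ uSphere d

/-- `K ∈ 𝒦_s^d`: a proper spherically convex body, i.e. the intersection of the unit
sphere with a line-free closed convex cone `C ≠ {0}`. -/
def IsProperSphConvBody (d : ℕ) (K : Set (Esp d)) : Prop :=
  ∃ C : Set (Esp d), IsClosed C ∧ Convex ℝ C ∧
    (∀ x ∈ C, ∀ t : ℝ, 0 ≤ t → t • x ∈ C) ∧
    C ≠ {0} ∧ (∀ x ∈ C, x ≠ 0 → -x ∉ C) ∧
    K = C ∩ uSphere d

/-- The spherical mean width functional
`U₁(K) = (1/(2 ω_{d+1})) σ_d({x ∈ S^d : x^⊥ ∩ K ≠ ∅})`. -/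
def U1 (d : ℕ) (K : Set (Esp d)) : ℝ :=
  (1 / (2 * omegaTot d)) * (sigmaMeas d {x | ∃ y ∈ K, ⟪x, y⟫ = 0}).toReal

/-- `D(x) = ∫₀^x sin^{d-1} t dt`. -/
def Dfun (d : ℕ) (x : ℝ) : ℝ := ∫ t in (0:ℝ)..x, Real.sin t ^ (d - 1)

/-- `S_e = S^d ∩ e^⊥`, the great subsphere orthogonal to `e`. -/
def equator {d : ℕ} (e : Esp d) : Set (Esp d) := uSphere d ∩ {x | ⟪x, e⟫ = 0}

/-- The rotation invariant probability measure `σ⁰_{d-1}` on the great subsphere `S_e`. -/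
def sigma0 (d : ℕ) (e : Esp d) : Measure (Esp d) :=
  (μH[((d : ℝ) - 1)] (equator e))⁻¹ • (μH[((d : ℝ) - 1)]).restrict (equator e)

/-- The spherical radial function `α_{K,e}(u)`: the geodesic distance from `e` to the
boundary of `K` along the great circle through `e` in direction `u ∈ S_e`. -/
def sphRadial {d : ℕ} (K : Set (Esp d)) (e u : Esp d) : ℝ :=
  sSup {t : ℝ | 0 ≤ t ∧ t ≤ π / 2 ∧ (Real.cos t) • e + (Real.sin t) • u ∈ K}

/-- The set `-int(K*)`: points `e` of the sphere such that `K` is contained in the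
open hemisphere centred at `e`. -/
def negIntPolar (d : ℕ) (K : Set (Esp d)) : Set (Esp d) :=
  {e ∈ uSphere d | ∀ x ∈ K, 0 < ⟪e, x⟫}

/-- Points `e` of the sphere such that `K ⊆ {x : ⟨x,e⟩ ≥ 0}` (closed hemisphere). -/
def hemiCenters (d : ℕ) (K : Set (Esp d)) : Set (Esp d) :=
  {e ∈ uSphere d | ∀ x ∈ K, 0 ≤ ⟪x, e⟫}

/-- The `σ⁰_{d-1}`-average of `D ∘ α_{K,e}` over `S_e`. -/
def avgD (d : ℕ) (K : Set (Esp d)) (e : Esp d) : ℝ :=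
  ∫ u, Dfun d (sphRadial K e u) ∂(sigma0 d e)

/-- The `L²(S_e, σ⁰_{d-1})`-deviation of `D ∘ α_{K,e}` from its average. -/
def L2dev (d : ℕ) (K : Set (Esp d)) (e : Esp d) : ℝ :=
  Real.sqrt (∫ u, (Dfun d (sphRadial K e u) - avgD d K e) ^ 2 ∂(sigma0 d e))

/-- `Δ₂(K)`: infimum of the `L²` deviations over `e ∈ -int(K*)`. -/
def Delta2 (d : ℕ) (K : Set (Esp d)) : ℝ :=
  sInf (L2dev d K '' negIntPolar d K)

/-- `Δ₂*(K)`: infimum of the `L²` deviations over all `e` with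
`K ⊆ {x : ⟨x,e⟩ ≥ 0}`. -/
def Delta2Star (d : ℕ) (K : Set (Esp d)) : ℝ :=
  sInf (L2dev d K '' hemiCenters d K)

/-- The centred spherical inradius `r_e(K) = max{r ≥ 0 : B(e,r) ⊆ K}`. -/
def rcent (d : ℕ) (K : Set (Esp d)) (e : Esp d) : ℝ :=
  sSup {r : ℝ | 0 ≤ r ∧ cap e r ⊆ K}

/-- The centred spherical circumradius `R_e(K) = min{r ≥ 0 : K ⊆ B(e,r)}`. -/
def Rcent (d : ℕ) (K : Set (Esp d)) (e : Esp d) : ℝ :=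
  sInf {r : ℝ | 0 ≤ r ∧ K ⊆ cap e r}

/-- The spherical inradius `Σ_r(K) = max{r_e(K) : e ∈ K}`. -/
def SigmaR (d : ℕ) (K : Set (Esp d)) : ℝ :=
  sSup (rcent d K '' K)

/-- The deviation functional `ϑ_r(K) = min{R_e(K) - r_e(K) : e ∈ K, r_e(K) = Σ_r(K)}`. -/
def thetaR (d : ℕ) (K : Set (Esp d)) : ℝ :=
  sInf ((fun e => Rcent d K e - rcent d K e) '' {e ∈ K | rcent d K e = SigmaR d K})

/-- `Ũ_e(K) = σ_d({x ∈ S^d : (x-e)^⊥ ∩ K ≠ ∅})`. -/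
def Utilde (d : ℕ) (e : Esp d) (K : Set (Esp d)) : ℝ :=
  (sigmaMeas d {x | ∃ y ∈ K, ⟪x - e, y⟫ = 0}).toReal

/-- The spherical Hausdorff distance `δ_s`, based on the geodesic metric. -/
def sphHausdorff (d : ℕ) (K L : Set (Esp d)) : ℝ :=
  max (⨆ x ∈ K, ⨅ y ∈ L, geo x y) (⨆ y ∈ L, ⨅ x ∈ K, geo x y)

/-- Continuity of a functional on `𝒦̄_s^d` with respect to the spherical Hausdorff
metric `δ_s`. -/
def SphContinuous (d : ℕ) (F : Set (Esp d) → ℝ) : Prop :=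
  ∀ K, IsSphConvBody d K → ∀ ε > (0:ℝ), ∃ δ > (0:ℝ), ∀ L, IsSphConvBody d L →
    sphHausdorff d K L < δ → |F K - F L| < ε

/-- A hitting functional: continuous, nonnegative, vanishing exactly on one-pointed
sets. -/
def IsHittingFunctional (d : ℕ) (Φ : Set (Esp d) → ℝ) : Prop :=
  SphContinuous d Φ ∧ (∀ K, IsSphConvBody d K → 0 ≤ Φ K) ∧
    (∀ K, IsSphConvBody d K → (Φ K = 0 ↔ ∃ p, K = {p}))

/-- A size functional: continuous, nonnegative, not identically zero, vanishing on
one-pointed sets. -/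
def IsSizeFunctional (d : ℕ) (S : Set (Esp d) → ℝ) : Prop :=
  SphContinuous d S ∧ (∀ K, IsSphConvBody d K → 0 ≤ S K) ∧
    (∃ K, IsSphConvBody d K ∧ S K ≠ 0) ∧
    (∀ p ∈ uSphere d, S ({p} : Set (Esp d)) = 0)

/-- The isoperimetric constant `τ(Φ,Σ,a) = inf{Φ(K) : K ∈ 𝒦̄_s^d, Σ(K) ≥ a}`. -/
def tauConst (d : ℕ) (Φ S : Set (Esp d) → ℝ) (a : ℝ) : ℝ :=
  sInf (Φ '' {K | IsSphConvBody d K ∧ a ≤ S K})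

/-- The spherical convex hull of a set `V ⊆ S^d`: the intersection of the sphere with
the closed convex cone generated by `V`. -/
def sphConvHull (d : ℕ) (V : Set (Esp d)) : Set (Esp d) :=
  {x ∈ uSphere d | ∃ y ∈ convexHull ℝ V, ∃ t : ℝ, 0 < t ∧ x = t • y}

/-- A spherical polytope: the intersection of the sphere with a finitely generated
(polyhedral) cone, which is also a spherically convex body. -/
def IsSphPolytope (d : ℕ) (P : Set (Esp d)) : Prop :=
  IsSphConvBody d P ∧ ∃ V : Finset (Esp d),
    (V : Set (Esp d)) ⊆ uSphere d ∧ P = sphConvHull d (V : Set (Esp d))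

/-- The vertices (extreme points) of a spherical polytope. -/
def sphExtremePoints (d : ℕ) (P : Set (Esp d)) : Set (Esp d) :=
  {x ∈ P | x ∉ sphConvHull d (P \ {x})}

/-- The boundary of `K` relative to the sphere. -/
def sphFrontier (d : ℕ) (K : Set (Esp d)) : Set (Esp d) :=
  {x ∈ K | ∀ ε > (0:ℝ), ∃ y ∈ uSphere d, y ∉ K ∧ dist y x < ε}

/-- The functions `h_m(t) = (-1)^{m+1} e^{-t} + 2 ∑_{i=0}^{⌊m/2⌋} t^{m-2i}/(m-2i)!`. -/
def hFun (m : ℕ) (t : ℝ) : ℝ :=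
  (-1 : ℝ) ^ (m + 1) * Real.exp (-t) +
    2 * ∑ i ∈ Finset.range (m / 2 + 1), t ^ (m - 2 * i) / (Nat.factorial (m - 2 * i) : ℝ)

section RotationInvariant

variable {F : Type*} [NormedAddCommGroup F] [InnerProductSpace ℝ F] [FiniteDimensional ℝ F]
  [MeasurableSpace F] [BorelSpace F]

lemma charFun_eq_of_norm_eq (μ : Measure F) (hμ : ∀ T : F ≃ₗᵢ[ℝ] F, μ.map T = μ)
    {s t : F} (hst : ‖s‖ = ‖t‖) : charFun μ s = charFun μ t := by
  have hT : (ℝ ∙ (s - t))ᗮ.reflection s = t := Submodule.reflection_sub hst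
  set T := (ℝ ∙ (s - t))ᗮ.reflection
  conv_rhs => rw [← hμ T]
  rw [charFun_apply, charFun_apply, integral_map T.continuous.aemeasurable (by fun_prop)]
  refine integral_congr_ae (Eventually.of_forall fun x => ?_)
  simp only
  rw [← hT, LinearIsometryEquiv.inner_map_map]

/-- A finite measure on the unit sphere that is invariant under all linear isometries is unique
up to a constant factor. -/
theorem rotationInvariant_unique (μ ν : Measure F) [IsFiniteMeasure μ] [IsFiniteMeasure ν]
    (hμs : ∀ᵐ x ∂μ, ‖x‖ = 1) (hνs : ∀ᵐ x ∂ν, ‖x‖ = 1)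
    (hμ : ∀ T : F ≃ₗᵢ[ℝ] F, μ.map T = μ) (hν : ∀ T : F ≃ₗᵢ[ℝ] F, ν.map T = ν) :
    ν Set.univ • μ = μ Set.univ • ν := by
  have key : ∀ t : F, (ν.real Set.univ : ℂ) * charFun μ t = μ.real Set.univ * charFun ν t := by
    intro t
    have h1 : ∫ v, charFun μ (‖t‖ • v) ∂ν = ν.real Set.univ * charFun μ t := by
      have : ∀ᵐ v ∂ν, charFun μ (‖t‖ • v) = charFun μ t := by
        filter_upwards [hνs] with v hv
        exact charFun_eq_of_norm_eq μ hμ (by rw [norm_smul, hv]; simp)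
      rw [integral_congr_ae this]; simp
    have h2 : ∫ v, charFun ν (‖t‖ • v) ∂μ = μ.real Set.univ * charFun ν t := by
      have : ∀ᵐ v ∂μ, charFun ν (‖t‖ • v) = charFun ν t := by
        filter_upwards [hμs] with v hv
        exact charFun_eq_of_norm_eq ν hν (by rw [norm_smul, hv]; simp)
      rw [integral_congr_ae this]; simp
    rw [← h1, ← h2]
    simp only [charFun_apply]
    rw [integral_integral_swap]
    · refine integral_congr_ae (Eventually.of_forall fun x => ?_)
      refine integral_congr_ae (Eventually.of_forall fun y => ?_)
      simp only [inner_smul_right]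
      rw [real_inner_comm]
    · refine Integrable.of_bound (C := 1) (by unfold Function.uncurry; fun_prop) ?_
      refine Eventually.of_forall fun p => ?_
      unfold Function.uncurry
      rw [Complex.norm_exp_ofReal_mul_I]
  have hfin1 : IsFiniteMeasure (ν Set.univ • μ) := Measure.smul_finite μ (measure_ne_top _ _)
  have hfin2 : IsFiniteMeasure (μ Set.univ • ν) := Measure.smul_finite ν (measure_ne_top _ _)
  refine Measure.ext_of_charFun ?_
  ext t
  have := key t
  rw [charFun_apply, charFun_apply, integral_smul_measure, integral_smul_measure]
  simpa [charFun_apply, Measure.real] using this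

end RotationInvariant

section PrekopaLeindler

open scoped Pointwise in
lemma volume_add_volume_le_of_isCompact {A B : Set ℝ} (hA : IsCompact A) (hB : IsCompact B)
    (hA0 : A.Nonempty) (hB0 : B.Nonempty) : volume A + volume B ≤ volume (A + B) := by
  obtain ⟨a, haA, ha⟩ := hA.exists_isGreatest hA0
  obtain ⟨b, hbB, hb⟩ := hB.exists_isLeast hB0
  have h1 : volume ((fun x => x + b) '' A) = volume A := by
    simp [Set.image_add_right, measure_preimage_add_right]
  have h2 : volume ((fun x => a + x) '' B) = volume B := by
    simp [Set.image_add_left, measure_preimage_add]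
  have hc2 : IsCompact ((fun x => a + x) '' B) := hB.image (by fun_prop)
  rw [← h1, ← h2, ← measure_union₀ hc2.measurableSet.nullMeasurableSet]
  · refine measure_mono (Set.union_subset ?_ ?_)
    · rintro _ ⟨x, hx, rfl⟩
      exact Set.add_mem_add hx hbB
    · rintro _ ⟨x, hx, rfl⟩
      exact Set.add_mem_add haA hx
  · refine measure_mono_null (t := {a + b}) ?_ (by simp)
    rintro _ ⟨⟨x, hx, rfl⟩, ⟨y, hy, hxy⟩⟩
    have h3 := ha hx
    have h4 := hb hy
    simp only at hxy
    simp only [Set.mem_singleton_iff]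
    linarith

lemma volume_add_volume_le_of_midpoint {A B M : Set ℝ} (hA : MeasurableSet A)
    (hB : MeasurableSet B) (hA0 : A.Nonempty) (hB0 : B.Nonempty)
    (hM : ∀ a ∈ A, ∀ b ∈ B, (a + b) / 2 ∈ M) : volume A + volume B ≤ 2 * volume M := by
  rw [hA.measure_eq_iSup_isCompact, hB.measure_eq_iSup_isCompact]
  obtain ⟨a0, ha0⟩ := hA0
  obtain ⟨b0, hb0⟩ := hB0
  have key : ∀ K ⊆ A, IsCompact K → ∀ L ⊆ B, IsCompact L →
      volume K + volume L ≤ 2 * volume M := by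
    intro K hK hKc L hL hLc
    open scoped Pointwise in
    have h1 := volume_add_volume_le_of_isCompact (hKc.insert a0) (hLc.insert b0)
      ⟨a0, by simp⟩ ⟨b0, by simp⟩
    open scoped Pointwise in
    have h2 : (insert a0 K + insert b0 L : Set ℝ) ⊆ (2 : ℝ) • M := by
      rintro _ ⟨x, hx, y, hy, rfl⟩
      refine ⟨(x + y) / 2, hM x ?_ y ?_, by simp only [smul_eq_mul]; ring⟩
      · rcases hx with rfl | hx
        exacts [ha0, hK hx]
      · rcases hy with rfl | hy
        exacts [hb0, hL hy]
    calc volume K + volume L ≤ volume (insert a0 K) + volume (insert b0 L) := by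
          gcongr <;> simp
      _ ≤ _ := h1
      _ ≤ _ := measure_mono h2
      _ = 2 * volume M := by simp
  refine ENNReal.biSup_add_biSup_le' (p := fun K => K ⊆ A) (q := fun K => K ⊆ B)
    ⟨∅, Set.empty_subset _⟩ ⟨∅, Set.empty_subset _⟩ ?_
  intro K hK L hL
  by_cases hKc : IsCompact K
  · by_cases hLc : IsCompact L
    · simpa [hKc, hLc] using key K hK hKc L hL hLc
    · simpa [hKc, hLc] using key K hK hKc ∅ (Set.empty_subset _) isCompact_empty
  · by_cases hLc : IsCompact L
    · simpa [hKc, hLc] using key ∅ (Set.empty_subset _) isCompact_empty L hL hLc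
    · simp [hKc, hLc]

lemma ennreal_four_mul_le_add_sq (x y : ℝ≥0∞) : 4 * (x * y) ≤ (x + y) ^ 2 := by
  rcases eq_or_ne x ∞ with rfl | hx
  · simp
  rcases eq_or_ne y ∞ with rfl | hy
  · simp
  lift x to ℝ≥0 using hx
  lift y to ℝ≥0 using hy
  norm_cast
  rw [← NNReal.coe_le_coe]
  push_cast
  nlinarith [sq_nonneg ((x : ℝ) - y)]

lemma lintegral_add_le_of_midpoint_normalized {f g h : ℝ → ℝ} (hf : Measurable f)
    (hg : Measurable g) (hh : Measurable h) (hf0 : ∀ x, 0 ≤ f x) (hg0 : ∀ x, 0 ≤ g x)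
    (hh0 : ∀ x, 0 ≤ h x) (hf1 : ∀ x, f x ≤ 1) (hg1 : ∀ x, g x ≤ 1)
    (hfs : ∀ c < 1, ∃ x, c < f x) (hgs : ∀ c < 1, ∃ x, c < g x)
    (hfgh : ∀ a b, f a * g b ≤ h ((a + b) / 2) ^ 2) :
    (∫⁻ x, ENNReal.ofReal (f x)) + ∫⁻ x, ENNReal.ofReal (g x) ≤
      2 * ∫⁻ x, ENNReal.ofReal (h x) := by
  rw [lintegral_eq_lintegral_meas_lt _ (Eventually.of_forall hf0) hf.aemeasurable,
    lintegral_eq_lintegral_meas_lt _ (Eventually.of_forall hg0) hg.aemeasurable,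
    lintegral_eq_lintegral_meas_lt _ (Eventually.of_forall hh0) hh.aemeasurable]
  rw [← lintegral_add_left', ← lintegral_const_mul']
  · refine setLIntegral_mono' measurableSet_Ioi fun t ht => ?_
    rcases lt_or_ge t 1 with h1 | h1
    · refine volume_add_volume_le_of_midpoint (measurableSet_lt measurable_const hf)
        (measurableSet_lt measurable_const hg) (hfs t h1) (hgs t h1) ?_
      intro a ha b hb
      simp only [Set.mem_ofPred_eq] at ha hb ⊢
      have h2 := hfgh a b
      have h3 : (0 : ℝ) < t := ht
      refine lt_of_pow_lt_pow_left₀ 2 (hh0 _) (lt_of_lt_of_le ?_ h2)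
      nlinarith
    · have e1 : {a | t < f a} = ∅ := by
        ext x; simpa using (hf1 x).trans h1
      have e2 : {a | t < g a} = ∅ := by
        ext x; simpa using (hg1 x).trans h1
      simp [e1, e2]
  · simp
  · refine (Antitone.measurable fun s t hst => measure_mono fun x hx => ?_).aemeasurable
    exact lt_of_le_of_lt hst (show t < f x from hx)

lemma lintegral_mul_le_of_midpoint_bounded {f g h : ℝ → ℝ} (hf : Measurable f)
    (hg : Measurable g) (hh : Measurable h) (hf0 : ∀ x, 0 ≤ f x) (hg0 : ∀ x, 0 ≤ g x)
    (hh0 : ∀ x, 0 ≤ h x) (hfb : BddAbove (Set.range f)) (hgb : BddAbove (Set.range g))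
    (hfgh : ∀ a b, f a * g b ≤ h ((a + b) / 2) ^ 2) :
    (∫⁻ x, ENNReal.ofReal (f x)) * ∫⁻ x, ENNReal.ofReal (g x) ≤
      (∫⁻ x, ENNReal.ofReal (h x)) ^ 2 := by
  set A := ⨆ x, f x with hA
  set B := ⨆ x, g x with hB
  have hA0 : 0 ≤ A := Real.iSup_nonneg hf0
  have hB0 : 0 ≤ B := Real.iSup_nonneg hg0
  rcases hA0.eq_or_lt with hA0 | hA0
  · have : ∀ x, f x = 0 := fun x => le_antisymm (hA0 ▸ le_ciSup hfb x) (hf0 x)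
    simp [this]
  rcases hB0.eq_or_lt with hB0 | hB0
  · have : ∀ x, g x = 0 := fun x => le_antisymm (hB0 ▸ le_ciSup hgb x) (hg0 x)
    simp [this]
  have hs : 0 < √(A * B) := by positivity
  have key := lintegral_add_le_of_midpoint_normalized (f := fun x => A⁻¹ * f x)
    (g := fun x => B⁻¹ * g x) (h := fun x => (√(A * B))⁻¹ * h x)
    (by fun_prop) (by fun_prop) (by fun_prop) (fun x => by have := hf0 x; positivity)
    (fun x => by have := hg0 x; positivity) (fun x => by have := hh0 x; positivity)
    (fun x => by rw [inv_mul_le_one₀ hA0]; exact le_ciSup hfb x)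
    (fun x => by rw [inv_mul_le_one₀ hB0]; exact le_ciSup hgb x)
    (fun c hc => by
      obtain ⟨x, hx⟩ := exists_lt_of_lt_ciSup (show A * c < A by nlinarith)
      exact ⟨x, by rwa [lt_inv_mul_iff₀ hA0]⟩)
    (fun c hc => by
      obtain ⟨x, hx⟩ := exists_lt_of_lt_ciSup (show B * c < B by nlinarith)
      exact ⟨x, by rwa [lt_inv_mul_iff₀ hB0]⟩)
    (fun a b => by
      have := hfgh a b
      rw [mul_pow, inv_pow, Real.sq_sqrt (by positivity), mul_inv]
      calc A⁻¹ * f a * (B⁻¹ * g b) = A⁻¹ * B⁻¹ * (f a * g b) := by ring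
        _ ≤ _ := by gcongr)
  simp only [ENNReal.ofReal_mul (inv_nonneg.2 hA0.le), ENNReal.ofReal_mul (inv_nonneg.2 hB0.le),
    ENNReal.ofReal_mul (inv_nonneg.2 hs.le)] at key
  rw [lintegral_const_mul' _ _ (by simp), lintegral_const_mul' _ _ (by simp),
    lintegral_const_mul' _ _ (by simp)] at key
  set I := ∫⁻ x, ENNReal.ofReal (f x)
  set J := ∫⁻ x, ENNReal.ofReal (g x)
  set H := ∫⁻ x, ENNReal.ofReal (h x)
  have h4 := (ennreal_four_mul_le_add_sq (ENNReal.ofReal A⁻¹ * I) (ENNReal.ofReal B⁻¹ * J)).trans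
    (pow_le_pow_left' key 2)
  have h5 : ENNReal.ofReal (A * B) * (4 * (ENNReal.ofReal A⁻¹ * I * (ENNReal.ofReal B⁻¹ * J)))
      ≤ ENNReal.ofReal (A * B) * (2 * (ENNReal.ofReal (√(A * B))⁻¹ * H)) ^ 2 := by gcongr
  have e1 : ENNReal.ofReal (A * B) * (4 * (ENNReal.ofReal A⁻¹ * I * (ENNReal.ofReal B⁻¹ * J)))
      = 4 * (I * J) := by
    have : ENNReal.ofReal (A * B) * (ENNReal.ofReal A⁻¹ * ENNReal.ofReal B⁻¹) = 1 := by
      rw [← ENNReal.ofReal_mul (by positivity), ← ENNReal.ofReal_mul (by positivity)]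
      rw [show A * B * (A⁻¹ * B⁻¹) = 1 by field_simp]; simp
    calc _ = ENNReal.ofReal (A * B) * (ENNReal.ofReal A⁻¹ * ENNReal.ofReal B⁻¹) * (4 * (I * J)) := by
          ring
      _ = _ := by rw [this, one_mul]
  have e2 : ENNReal.ofReal (A * B) * (2 * (ENNReal.ofReal (√(A * B))⁻¹ * H)) ^ 2 = 4 * H ^ 2 := by
    have : ENNReal.ofReal (A * B) * ENNReal.ofReal (√(A * B))⁻¹ ^ 2 = 1 := by
      rw [← ENNReal.ofReal_pow (by positivity), ← ENNReal.ofReal_mul (by positivity), inv_pow,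
        Real.sq_sqrt (by positivity), mul_inv_cancel₀ (by positivity)]; simp
    calc _ = ENNReal.ofReal (A * B) * ENNReal.ofReal (√(A * B))⁻¹ ^ 2 * (4 * H ^ 2) := by ring
      _ = _ := by rw [this, one_mul]
  rw [e1, e2] at h5
  exact (ENNReal.mul_le_mul_iff_right (by simp) (by simp)).1 h5

/-- The one-dimensional Prékopa–Leindler inequality (with exponent `1/2`). -/
theorem lintegral_mul_le_of_midpoint {f g : ℝ → ℝ≥0∞} {h : ℝ → ℝ} (hf : Measurable f)
    (hg : Measurable g) (hh : Measurable h) (hh0 : ∀ x, 0 ≤ h x)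
    (hfgh : ∀ a b, f a * g b ≤ ENNReal.ofReal (h ((a + b) / 2) ^ 2)) :
    (∫⁻ x, f x) * ∫⁻ x, g x ≤ (∫⁻ x, ENNReal.ofReal (h x)) ^ 2 := by
  have hlim : ∀ u : ℝ → ℝ≥0∞, Measurable u →
      ⨆ n : ℕ, ∫⁻ x, min (u x) n = ∫⁻ x, u x := by
    intro u hu
    rw [← lintegral_iSup (fun n => hu.min measurable_const)
      (fun m n hmn x => min_le_min le_rfl (by exact_mod_cast hmn))]
    congr 1; ext x
    rw [← inf_iSup_eq, ENNReal.iSup_natCast]; simp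
  have hprod : ∀ m n : ℕ, (∫⁻ x, min (f x) m) * ∫⁻ x, min (g x) n ≤
      (∫⁻ x, ENNReal.ofReal (h x)) ^ 2 := by
    intro m n
    have hfin : ∀ (u : ℝ → ℝ≥0∞) (k : ℕ) x, min (u x) k ≠ ∞ := fun u k x =>
      ne_top_of_le_ne_top (ENNReal.natCast_ne_top k) (min_le_right _ _)
    have hle : ∀ (u : ℝ → ℝ≥0∞) (k : ℕ) x, (min (u x) k).toReal ≤ k := fun u k x => by
      have := ENNReal.toReal_mono (ENNReal.natCast_ne_top k) (min_le_right (u x) k)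
      simpa using this
    have := lintegral_mul_le_of_midpoint_bounded (f := fun x => (min (f x) m).toReal)
      (g := fun x => (min (g x) n).toReal) (h := h) (hf.min measurable_const).ennreal_toReal
      (hg.min measurable_const).ennreal_toReal hh (fun _ => ENNReal.toReal_nonneg)
      (fun _ => ENNReal.toReal_nonneg) hh0
      ⟨m, by rintro _ ⟨x, rfl⟩; exact hle f m x⟩ ⟨n, by rintro _ ⟨x, rfl⟩; exact hle g n x⟩
      (fun a b => by
        rw [← ENNReal.toReal_mul]
        refine ENNReal.toReal_le_of_le_ofReal (sq_nonneg _) (le_trans ?_ (hfgh a b))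
        gcongr <;> exact min_le_left _ _)
    simpa only [ENNReal.ofReal_toReal (hfin _ _ _)] using this
  rw [← hlim f hf, ← hlim g hg]
  simp only [ENNReal.iSup_mul, ENNReal.mul_iSup]
  exact iSup_le fun m => iSup_le fun n => hprod n m

/-- A multiplicative Prékopa–Leindler inequality on the half-line. -/
theorem lintegral_Ioi_mul_le {φ ψ : ℝ → ℝ≥0∞} (hφ : Measurable φ) (hψ : Measurable ψ) {M : ℝ}
    (hM : 0 ≤ M)
    (h : ∀ s, 0 < s → ∀ t, 0 < t → φ s * ψ t ≤ ENNReal.ofReal (M * exp (-(s * t)))) :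
    (∫⁻ s in Set.Ioi 0, φ s) * ∫⁻ t in Set.Ioi 0, ψ t ≤ ENNReal.ofReal (M * (π / 2)) := by
  have hcv : ∀ u : ℝ → ℝ≥0∞, ∫⁻ s in Set.Ioi (0 : ℝ), u s =
      ∫⁻ a, ENNReal.ofReal (exp a) * u (exp a) := by
    intro u
    rw [← Real.range_exp, ← Set.image_univ,
      lintegral_image_eq_lintegral_abs_deriv_mul MeasurableSet.univ
        (fun x _ => (Real.hasDerivAt_exp x).hasDerivWithinAt) Real.exp_injective.injOn]
    simp [abs_of_pos (exp_pos _)]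
  have hgauss : ∫⁻ s in Set.Ioi (0 : ℝ), ENNReal.ofReal (√M * exp (-(s ^ 2 / 2))) =
      ENNReal.ofReal (√M * √(π / 2)) := by
    have hintegrable : Integrable (fun s : ℝ => √M * exp (-(s ^ 2 / 2))) := by
      have := (integrable_exp_neg_mul_sq (b := 1 / 2) (by norm_num)).const_mul (√M)
      refine this.congr (Eventually.of_forall fun s => ?_)
      simp only; ring_nf
    rw [← ofReal_integral_eq_lintegral_ofReal hintegrable.integrableOn
      (Eventually.of_forall fun _ => by positivity), integral_const_mul]
    have := integral_gaussian_Ioi (1 / 2)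
    have e : ∀ s : ℝ, exp (-(s ^ 2 / 2)) = exp (-(1 / 2) * s ^ 2) := fun s => by ring_nf
    simp only [e]
    rw [this]
    congr 2
    rw [show π / 2 = (π / (1 / 2)) / 2 ^ 2 by ring, Real.sqrt_div' (π / (1 / 2))
      (by positivity : (0 : ℝ) ≤ 2 ^ 2),
      Real.sqrt_sq zero_le_two]
  rw [hcv φ, hcv ψ]
  have key := lintegral_mul_le_of_midpoint (f := fun a => ENNReal.ofReal (exp a) * φ (exp a))
    (g := fun a => ENNReal.ofReal (exp a) * ψ (exp a))
    (h := fun a => exp a * (√M * exp (-(exp a ^ 2 / 2)))) (by fun_prop) (by fun_prop)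
    (by fun_prop) (fun a => by positivity) (fun a b => by
      calc _ = ENNReal.ofReal (exp a * exp b) * (φ (exp a) * ψ (exp b)) := by
            rw [ENNReal.ofReal_mul (by positivity)]; ring
        _ ≤ ENNReal.ofReal (exp a * exp b) * ENNReal.ofReal (M * exp (-(exp a * exp b))) := by
            gcongr; exact h _ (exp_pos _) _ (exp_pos _)
        _ = _ := by
            rw [← ENNReal.ofReal_mul (by positivity)]
            congr 1
            have e1 : exp ((a + b) / 2) ^ 2 = exp a * exp b := by
              rw [← Real.exp_nat_mul, ← Real.exp_add]; congr 1; push_cast; ring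
            rw [mul_pow, mul_pow, e1, Real.sq_sqrt hM, ← Real.exp_nat_mul]
            congr 3; push_cast; ring)
  refine key.trans (le_of_eq ?_)
  simp only [ENNReal.ofReal_mul (exp_pos _).le]
  rw [← hcv (fun s => ENNReal.ofReal (√M * exp (-(s ^ 2 / 2)))), hgauss,
    ← ENNReal.ofReal_pow (by positivity), mul_pow, Real.sq_sqrt hM, Real.sq_sqrt (by positivity)]

end PrekopaLeindler

section OrthogonalSplitting

/-- A unit vector `e` splits `ℝ^{d+1}` orthogonally, and the splitting preserves volume. -/
lemma exists_orthogonal_splitting {d : ℕ} {e : Esp d} (he : ‖e‖ = 1) :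
    ∃ ι : EuclideanSpace ℝ (Fin d) →ₗᵢ[ℝ] Esp d, (∀ y, ⟪e, ι y⟫ = 0) ∧
      (∀ x, ⟪e, x⟫ = 0 → ∃ y, ι y = x) ∧
      MeasurePreserving (fun p : ℝ × EuclideanSpace ℝ (Fin d) => p.1 • e + ι p.2) := by
  have he0 : e ≠ 0 := by
    rintro rfl; simp at he
  have : Fact (Module.finrank ℝ (Esp d) = d + 1) := ⟨by simp⟩
  let b := OrthonormalBasis.fromOrthogonalSpanSingleton (𝕜 := ℝ) d he0
  let ι : EuclideanSpace ℝ (Fin d) →ₗᵢ[ℝ] Esp d :=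
    (Submodule.subtypeₗᵢ (ℝ ∙ e)ᗮ).comp b.repr.symm.toLinearIsometry
  have hι : ∀ y, ⟪e, ι y⟫ = 0 := fun y =>
    Submodule.mem_orthogonal_singleton_iff_inner_right.1 (b.repr.symm y).2
  refine ⟨ι, hι, fun x hx => ?_, ?_⟩
  · refine ⟨b.repr ⟨x, Submodule.mem_orthogonal_singleton_iff_inner_right.2 hx⟩, ?_⟩
    simp [ι]
  · let L : WithLp 2 (ℝ × EuclideanSpace ℝ (Fin d)) →ₗ[ℝ] Esp d :=
      { toFun := fun p => p.fst • e + ι p.snd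
        map_add' := fun p q => by simp [add_smul]; abel
        map_smul' := fun c p => by simp [mul_smul] }
    have hL : ∀ p, ‖L p‖ = ‖p‖ := by
      intro p
      have h1 : ‖L p‖ ^ 2 = ‖p‖ ^ 2 := by
        change ‖p.fst • e + ι p.snd‖ ^ 2 = _
        rw [norm_add_sq_real, inner_smul_left, hι, WithLp.prod_norm_sq_eq_of_L2, norm_smul, he,
          LinearIsometry.norm_map]
        simp
      exact (pow_left_inj₀ (norm_nonneg _) (norm_nonneg _) two_ne_zero).1 h1
    let Li : WithLp 2 (ℝ × EuclideanSpace ℝ (Fin d)) →ₗᵢ[ℝ] Esp d := ⟨L, hL⟩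
    have hfr : Module.finrank ℝ (WithLp 2 (ℝ × EuclideanSpace ℝ (Fin d))) =
        Module.finrank ℝ (Esp d) := by
      rw [LinearEquiv.finrank_eq (WithLp.linearEquiv 2 ℝ (ℝ × EuclideanSpace ℝ (Fin d)))]
      simp [add_comm]
    have h2 := (Li.toLinearIsometryEquiv hfr).measurePreserving
    have h3 := WithLp.volume_preserving_toLp ℝ (EuclideanSpace ℝ (Fin d))
    exact h2.comp h3

end OrthogonalSplitting

section FunctionalSantalo

/-- If `k` has mean zero for the weight `h`, then `exp k` has mean at least one. -/
lemma lintegral_le_lintegral_mul_exp {X : Type*} [MeasurableSpace X] {μ : Measure X} {h k : X → ℝ}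
    (h0 : ∀ x, 0 ≤ h x) (hh : Integrable h μ) (hhk : Integrable (fun x => h x * k x) μ)
    (hk : ∫ x, h x * k x ∂μ = 0) :
    ∫⁻ x, ENNReal.ofReal (h x) ∂μ ≤
      ∫⁻ x, ENNReal.ofReal (h x) * ENNReal.ofReal (exp (k x)) ∂μ := by
  have h1 : ∫ x, h x ∂μ = ∫ x, (h x + h x * k x) ∂μ := by
    rw [integral_add hh hhk, hk, add_zero]
  rw [← ofReal_integral_eq_lintegral_ofReal hh (Eventually.of_forall h0), h1]
  calc ENNReal.ofReal (∫ x, (h x + h x * k x) ∂μ)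
      ≤ ∫⁻ x, ENNReal.ofReal (h x + h x * k x) ∂μ := by
        have h2 := integral_eq_lintegral_pos_part_sub_lintegral_neg_part (hh.add hhk)
        simp only [Pi.add_apply] at h2
        rw [h2]
        refine ENNReal.ofReal_le_of_le_toReal ?_
        exact sub_le_self _ ENNReal.toReal_nonneg
    _ ≤ _ := by
        refine lintegral_mono fun x => ?_
        rw [← ENNReal.ofReal_mul (h0 x)]
        refine ENNReal.ofReal_le_ofReal ?_
        nlinarith [Real.add_one_le_exp (k x), h0 x]

/-- The functional Santaló inequality in dimension `n`. -/
def FunctionalSantalo (n : ℕ) : Prop :=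
  ∀ f g : EuclideanSpace ℝ (Fin n) → ℝ≥0∞, Measurable f → Measurable g →
    (∀ x y, f x * g y ≤ ENNReal.ofReal (exp (-⟪x, y⟫))) →
    (∀ z, ∫⁻ x, f x ≤ ∫⁻ x, f x * ENNReal.ofReal (exp ⟪z, x⟫)) →
    (∫⁻ x, f x) * ∫⁻ y, g y ≤ ENNReal.ofReal ((2 * π) ^ n)

variable {n : ℕ}

lemma lintegral_half_mul_le (hP : FunctionalSantalo n)
    {h : ℝ × EuclideanSpace ℝ (Fin n) → ℝ} (hm : Measurable h) (h0 : ∀ q, 0 ≤ h q)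
    (hi : Integrable h) (hi' : Integrable fun q => ‖q‖ * h q) (p w : EuclideanSpace ℝ (Fin n))
    (hb : ∫ q in Set.Ioi (0 : ℝ) ×ˢ Set.univ, h q • (q.2 - p - q.1 • w) = 0)
    {g : ℝ × EuclideanSpace ℝ (Fin n) → ℝ≥0∞} (hg : Measurable g)
    (hfg : ∀ s x t y, ENNReal.ofReal (h (s, p + x)) * g (t, y) ≤
      ENNReal.ofReal (exp (-(s * t + ⟪x, y⟫)))) :
    (∫⁻ q in Set.Ioi (0 : ℝ) ×ˢ Set.univ, ENNReal.ofReal (h q)) *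
      ∫⁻ y, ∫⁻ t in Set.Ioi (-⟪w, y⟫), g (t, y) ≤
        ENNReal.ofReal (π / 2 * (2 * π) ^ n) := by
  set F : EuclideanSpace ℝ (Fin n) → ℝ≥0∞ :=
    fun y => ∫⁻ s in Set.Ioi (0 : ℝ), ENNReal.ofReal (h (s, p + y + s • w)) with hF
  set G : EuclideanSpace ℝ (Fin n) → ℝ≥0∞ :=
    fun y => ∫⁻ t in Set.Ioi (0 : ℝ), g (t - ⟪w, y⟫, y) with hG
  have hFm : Measurable F := by
    apply Measurable.lintegral_prod_right' (ν := volume.restrict (Set.Ioi (0:ℝ)))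
      (f := fun q : EuclideanSpace ℝ (Fin n) × ℝ => ENNReal.ofReal (h (q.2, p + q.1 + q.2 • w)))
    fun_prop
  have hGm : Measurable G := by
    apply Measurable.lintegral_prod_right' (ν := volume.restrict (Set.Ioi (0:ℝ)))
      (f := fun q : EuclideanSpace ℝ (Fin n) × ℝ => g (q.2 - ⟪w, q.1⟫, q.1))
    fun_prop
  have hFG : ∀ x y, F x * G y ≤ ENNReal.ofReal (exp (-⟪x, y⟫) * (π / 2)) := by
    intro x y
    refine lintegral_Ioi_mul_le (by fun_prop) (by fun_prop) (exp_pos _).le fun s _ t _ => ?_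
    have := hfg s (x + s • w) (t - ⟪w, y⟫) y
    rw [← add_assoc] at this
    refine this.trans (le_of_eq ?_)
    rw [← Real.exp_add, inner_add_left, real_inner_smul_left]
    ring_nf
  have hprod : ∀ k : ℝ × EuclideanSpace ℝ (Fin n) → ℝ≥0∞, Measurable k →
      ∫⁻ y, ∫⁻ s in Set.Ioi (0 : ℝ), k (s, p + y + s • w) =
        ∫⁻ q in Set.Ioi (0 : ℝ) ×ˢ Set.univ, k q := by
    intro k hk
    rw [Measure.volume_eq_prod, ← Measure.prod_restrict, Measure.restrict_univ,
      lintegral_prod _ hk.aemeasurable, lintegral_lintegral_swap]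
    · refine lintegral_congr fun s => ?_
      have := lintegral_add_right_eq_self (μ := volume)
        (fun y : EuclideanSpace ℝ (Fin n) => k (s, y)) (p + s • w)
      rw [← this]
      refine lintegral_congr fun y => ?_
      congr 2
      abel
    · exact Measurable.aemeasurable (by fun_prop)
  have hFint : ∫⁻ y, F y = ∫⁻ q in Set.Ioi (0 : ℝ) ×ˢ Set.univ, ENNReal.ofReal (h q) :=
    hprod (fun q => ENNReal.ofReal (h q)) (by fun_prop)
  have hGint : ∫⁻ y, G y = ∫⁻ y, ∫⁻ t in Set.Ioi (-⟪w, y⟫), g (t, y) := by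
    refine lintegral_congr fun y => ?_
    simp only [hG]
    rw [← lintegral_indicator measurableSet_Ioi, ← lintegral_indicator measurableSet_Ioi,
      ← lintegral_add_right_eq_self _ ⟪w, y⟫]
    refine lintegral_congr fun t => ?_
    simp only [Set.indicator, Set.mem_Ioi, neg_lt_iff_pos_add, add_sub_cancel_right]
  have hmin : ∀ z, ∫⁻ x, F x ≤ ∫⁻ x, F x * ENNReal.ofReal (exp ⟪z, x⟫) := by
    intro z
    have h1 := hprod (fun q => ENNReal.ofReal (h q) *
      ENNReal.ofReal (exp ⟪z, q.2 - p - q.1 • w⟫)) (by fun_prop)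
    have h2 : ∫⁻ x, F x * ENNReal.ofReal (exp ⟪z, x⟫) =
        ∫⁻ y, ∫⁻ s in Set.Ioi (0 : ℝ), ENNReal.ofReal (h (s, p + y + s • w)) *
          ENNReal.ofReal (exp ⟪z, (p + y + s • w) - p - s • w⟫) := by
      refine lintegral_congr fun y => ?_
      rw [← lintegral_mul_const _ (by fun_prop)]
      refine lintegral_congr fun s => ?_
      congr 4
      abel
    rw [h2, h1, hFint]
    have hi2 : Integrable (fun q : ℝ × EuclideanSpace ℝ (Fin n) => h q • (q.2 - p - q.1 • w)) := by
      refine Integrable.mono' ((hi'.const_mul (1 + ‖w‖)).add (hi.const_mul ‖p‖))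
        (Measurable.aestronglyMeasurable (by fun_prop)) (Eventually.of_forall fun q => ?_)
      have h3 : ‖q.2 - p - q.1 • w‖ ≤ ‖q‖ + ‖p‖ + ‖q‖ * ‖w‖ := by
        refine (norm_sub_le _ _).trans (add_le_add ((norm_sub_le _ _).trans ?_) ?_)
        · gcongr; exact norm_snd_le q
        · rw [norm_smul]; gcongr; exact norm_fst_le q
      rw [norm_smul, Real.norm_of_nonneg (h0 q)]
      simp only [Pi.add_apply]
      nlinarith [h0 q]
    refine lintegral_le_lintegral_mul_exp h0 hi.restrict ?_ ?_
    · have := (hi2.const_inner (𝕜 := ℝ) z).restrict (s := Set.Ioi (0 : ℝ) ×ˢ Set.univ)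
      simpa [real_inner_smul_right] using this
    · have h4 := integral_inner (𝕜 := ℝ) (hi2.restrict (s := Set.Ioi (0 : ℝ) ×ˢ Set.univ)) z
      rw [hb, inner_zero_right] at h4
      simpa [real_inner_smul_right] using h4
  have hc : (0 : ℝ) < 2 / π := by positivity
  have key := hP F (fun y => ENNReal.ofReal (2 / π) * G y) hFm (by fun_prop) (fun x y => by
    calc F x * (ENNReal.ofReal (2 / π) * G y) = ENNReal.ofReal (2 / π) * (F x * G y) := by ring
      _ ≤ ENNReal.ofReal (2 / π) * ENNReal.ofReal (exp (-⟪x, y⟫) * (π / 2)) := by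
        gcongr; exact hFG x y
      _ = _ := by
        rw [← ENNReal.ofReal_mul hc.le]
        congr 1
        field_simp) hmin
  rw [lintegral_const_mul _ hGm, hFint, hGint] at key
  set A := ∫⁻ q in Set.Ioi (0 : ℝ) ×ˢ Set.univ, ENNReal.ofReal (h q)
  set B := ∫⁻ y, ∫⁻ t in Set.Ioi (-⟪w, y⟫), g (t, y)
  calc A * B = ENNReal.ofReal (π / 2) * (A * (ENNReal.ofReal (2 / π) * B)) := by
        have : ENNReal.ofReal (π / 2) * ENNReal.ofReal (2 / π) = 1 := by
          rw [← ENNReal.ofReal_mul (by positivity)]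
          simp [show π / 2 * (2 / π) = 1 by field_simp]
        calc A * B = 1 * (A * B) := (one_mul _).symm
          _ = _ := by rw [← this]; ring
    _ ≤ ENNReal.ofReal (π / 2) * ENNReal.ofReal ((2 * π) ^ n) := by gcongr
    _ = _ := by rw [← ENNReal.ofReal_mul (by positivity)]

end FunctionalSantalo

section FunctionalSantaloStep

variable {n : ℕ}

/-- A nonnegative integrable function can be halved by a hyperplane orthogonal to the first axis. -/
lemma exists_median {f : ℝ × EuclideanSpace ℝ (Fin n) → ℝ} (hi : Integrable f)
    (hpos : 0 < ∫ q, f q) :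
    ∃ c : ℝ, ∫ q in Set.Ioi c ×ˢ Set.univ, f q = (∫ q, f q) / 2 := by
  set φ : ℝ → ℝ := fun s => ∫ y, f (s, y) with hφ
  have hφi : Integrable φ := Integrable.integral_prod_left hi
  have htot : ∫ s, φ s = ∫ q, f q := (integral_prod f hi).symm
  have hset : ∀ c, ∫ q in Set.Ioi c ×ˢ Set.univ, f q = ∫ s in Set.Ioi c, φ s := by
    intro c
    rw [Measure.volume_eq_prod, setIntegral_prod f (hi.integrableOn)]
    simp [hφ]
  set A := ∫ s in Set.Ioi (0:ℝ), φ s with hA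
  set B := ∫ s in Set.Iic (0:ℝ), φ s with hB
  have hAB : B + A = ∫ q, f q := by
    rw [← htot]; exact intervalIntegral.integral_Iic_add_Ioi hφi.integrableOn hφi.integrableOn
  have hcont : Continuous fun b => ∫ s in (0:ℝ)..b, φ s :=
    intervalIntegral.continuous_primitive (fun a b => hφi.intervalIntegrable) 0
  have htop := intervalIntegral_tendsto_integral_Ioi (0:ℝ) hφi.integrableOn tendsto_id
  have hbot := intervalIntegral_tendsto_integral_Iic (0:ℝ) hφi.integrableOn tendsto_id
  have h1 : ∃ b, (A - B) / 2 ≤ ∫ s in (0:ℝ)..b, φ s :=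
    (htop.eventually (Ici_mem_nhds (show (A - B) / 2 < A by linarith))).exists
  have h2 : ∃ b, ∫ s in (0:ℝ)..b, φ s ≤ (A - B) / 2 := by
    obtain ⟨b, hb⟩ := (hbot.eventually (Ici_mem_nhds (show (B - A) / 2 < B by linarith))).exists
    refine ⟨b, ?_⟩
    rw [intervalIntegral.integral_symm]
    simp only [id] at hb
    linarith
  obtain ⟨c, hc⟩ := mem_range_of_exists_le_of_exists_ge hcont h2 h1
  refine ⟨c, ?_⟩
  rw [hset]
  have h3 := intervalIntegral.integral_Ioi_sub_Ioi' (μ := volume) (a := 0) (b := c) (f := φ)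
    hφi.integrableOn hφi.integrableOn
  simp only at hc
  linarith

lemma measurePreserving_neg_fst : MeasurePreserving
    (fun q : ℝ × EuclideanSpace ℝ (Fin n) => (-q.1, q.2)) :=
  (Measure.measurePreserving_neg (volume : Measure ℝ)).prod (MeasurePreserving.id volume)

lemma measurableEmbedding_neg_fst : MeasurableEmbedding
    (fun q : ℝ × EuclideanSpace ℝ (Fin n) => (-q.1, q.2)) :=
  ((Homeomorph.neg ℝ).prodCongr
    (Homeomorph.refl (EuclideanSpace ℝ (Fin n)))).measurableEmbedding

lemma exists_santalo_point_of_median (hP : FunctionalSantalo n)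
    {h : ℝ × EuclideanSpace ℝ (Fin n) → ℝ} (hm : Measurable h) (h0 : ∀ q, 0 ≤ h q)
    (hi : Integrable h) (hi' : Integrable fun q => ‖q‖ * h q) (hpos : 0 < ∫ q, h q)
    (hmed : ∫ q in Set.Ioi (0 : ℝ) ×ˢ Set.univ, h q = (∫ q, h q) / 2) :
    ∃ p, ∀ g : ℝ × EuclideanSpace ℝ (Fin n) → ℝ≥0∞, Measurable g →
      (∀ s x t y, ENNReal.ofReal (h (s, p + x)) * g (t, y) ≤
        ENNReal.ofReal (exp (-(s * t + ⟪x, y⟫)))) →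
      (∫⁻ q, ENNReal.ofReal (h q)) * ∫⁻ q, g q ≤ ENNReal.ofReal ((2 * π) ^ (n + 1)) := by
  set I := ∫ q, h q with hI
  set P : Set (ℝ × EuclideanSpace ℝ (Fin n)) := Set.Ioi (0 : ℝ) ×ˢ Set.univ with hPdef
  set N : Set (ℝ × EuclideanSpace ℝ (Fin n)) := Set.Iio (0 : ℝ) ×ˢ Set.univ with hNdef
  have hPm : MeasurableSet P := measurableSet_Ioi.prod .univ
  have hNm : MeasurableSet N := measurableSet_Iio.prod .univ
  have hmedN : ∫ q in N, h q = I / 2 := by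
    have h1 : Pᶜ = Set.Iic (0 : ℝ) ×ˢ Set.univ := by
      ext q; simp [hPdef]
    have h2 : ∫ q in N, h q = ∫ q in Pᶜ, h q := by
      rw [h1, hNdef, Measure.volume_eq_prod, ← Measure.prod_restrict, ← Measure.prod_restrict,
        Measure.restrict_congr_set Iio_ae_eq_Iic]
    have h3 := integral_add_compl hPm hi
    rw [hmed, ← h2, ← hI] at h3
    linarith
  have i1 : Integrable fun q : ℝ × EuclideanSpace ℝ (Fin n) => h q * q.1 := by
    refine hi'.mono' (by fun_prop) (Eventually.of_forall fun q => ?_)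
    rw [norm_mul, Real.norm_of_nonneg (h0 q), mul_comm]
    exact mul_le_mul_of_nonneg_right (norm_fst_le q) (h0 q)
  have i2 : Integrable fun q : ℝ × EuclideanSpace ℝ (Fin n) => h q • q.2 := by
    refine hi'.mono' (Measurable.aestronglyMeasurable (by fun_prop))
      (Eventually.of_forall fun q => ?_)
    rw [norm_smul, Real.norm_of_nonneg (h0 q), mul_comm]
    exact mul_le_mul_of_nonneg_right (norm_snd_le q) (h0 q)
  have hsupp : ∀ s : Set (ℝ × EuclideanSpace ℝ (Fin n)), MeasurableSet s → (∀ q ∈ s, q.1 ≠ 0) →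
      0 < ∫ q in s, h q → 0 < ∫ q in s, h q * |q.1| := by
    intro s hs hs0 hh
    have i3 : Integrable fun q : ℝ × EuclideanSpace ℝ (Fin n) => h q * |q.1| := by
      refine i1.norm.congr (Eventually.of_forall fun q => ?_)
      simp [abs_of_nonneg (h0 q)]
    rw [setIntegral_pos_iff_support_of_nonneg_ae (Eventually.of_forall fun q => by
      have := h0 q; simp only [Pi.zero_apply]; positivity) i3.integrableOn]
    rw [setIntegral_pos_iff_support_of_nonneg_ae (Eventually.of_forall h0) hi.integrableOn] at hh
    refine hh.trans_le (measure_mono fun q hq => ⟨?_, hq.2⟩)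
    have := hs0 q hq.2
    have := hq.1
    simp_all
  set S1 := ∫ q in P, h q * q.1 with hS1
  set S2 := ∫ q in N, h q * q.1 with hS2
  set X1 := ∫ q in P, h q • q.2 with hX1
  set X2 := ∫ q in N, h q • q.2 with hX2
  have hS1pos : 0 < S1 := by
    refine (hsupp P hPm (fun q hq => ne_of_gt hq.1) (by linarith)).trans_le (le_of_eq ?_)
    refine setIntegral_congr_fun hPm fun q hq => ?_
    have : 0 < q.1 := hq.1
    simp only [abs_of_pos this]
  have hS2neg : S2 < 0 := by
    have h1 : S2 = -∫ q in N, h q * |q.1| := by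
      rw [← integral_neg]
      refine setIntegral_congr_fun hNm fun q hq => ?_
      have : q.1 < 0 := hq.1
      simp only [abs_of_neg this]
      ring
    have := hsupp N hNm (fun q hq => ne_of_lt hq.1) (by linarith)
    linarith
  have hS : S1 - S2 ≠ 0 := by linarith
  have hI2 : I / 2 ≠ 0 := by linarith
  set w := (S1 - S2)⁻¹ • (X1 - X2) with hw
  set p := (I / 2)⁻¹ • (X1 - S1 • w) with hp
  have hw' : (S1 - S2) • w = X1 - X2 := by rw [hw, smul_inv_smul₀ hS]
  have hp' : (I / 2) • p = X1 - S1 • w := by rw [hp, smul_inv_smul₀ hI2]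
  have hmom : ∀ s : Set (ℝ × EuclideanSpace ℝ (Fin n)), ∫ q in s, h q • (q.2 - p - q.1 • w) =
      (∫ q in s, h q • q.2) - (∫ q in s, h q) • p - (∫ q in s, h q * q.1) • w := by
    intro s
    rw [← integral_smul_const, ← integral_smul_const, ← integral_sub, ← integral_sub]
    · refine integral_congr_ae (Eventually.of_forall fun q => ?_)
      simp only [smul_sub, mul_smul]
    · exact i2.integrableOn.sub (hi.integrableOn.smul_const p)
    · exact i1.integrableOn.smul_const w
    · exact i2.integrableOn
    · exact hi.integrableOn.smul_const p
  refine ⟨p, fun g hg hfg => ?_⟩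
  have key1 := lintegral_half_mul_le hP hm h0 hi hi' p w (by
    rw [hmom, ← hPdef, hmed, hp', ← hX1, ← hS1]; abel) hg hfg
  have mp := measurePreserving_neg_fst (n := n)
  have me := measurableEmbedding_neg_fst (n := n)
  have hpre : (fun q : ℝ × EuclideanSpace ℝ (Fin n) => (-q.1, q.2)) ⁻¹' N = P := by
    ext q; simp [hPdef, hNdef]
  have key2 := lintegral_half_mul_le hP (h := fun q => h (-q.1, q.2)) (by fun_prop)
    (fun q => h0 _) (mp.integrable_comp_of_integrable hi) (by
      refine (mp.integrable_comp_of_integrable hi').congr (Eventually.of_forall fun q => ?_)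
      simp [Prod.norm_def]) p (-w) (by
      have h1 := mp.setIntegral_preimage_emb me
        (fun q => h q • (q.2 - p - q.1 • w)) N
      rw [hpre, hmom, hmedN, hp', ← hX2, ← hS2] at h1
      rw [← hPdef]
      have h2 : X2 - (X1 - S1 • w) - S2 • w = 0 := by
        have : X2 - (X1 - S1 • w) - S2 • w = (S1 - S2) • w - (X1 - X2) := by
          rw [sub_smul]; abel
        rw [this, hw', sub_self]
      rw [h2] at h1
      rw [← h1]
      simp) (g := fun q => g (-q.1, q.2)) (by fun_prop) (fun s x t y => by
      simpa using hfg (-s) x (-t) y)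
  have hl : ∀ s : Set (ℝ × EuclideanSpace ℝ (Fin n)),
      ∫⁻ q in s, ENNReal.ofReal (h q) = ENNReal.ofReal (∫ q in s, h q) := fun s =>
    (ofReal_integral_eq_lintegral_ofReal hi.integrableOn (Eventually.of_forall h0)).symm
  have h3 : ∫⁻ q in P, ENNReal.ofReal (h (-q.1, q.2)) = ENNReal.ofReal (I / 2) := by
    rw [← hmedN, ← hl, ← hpre]
    exact mp.setLIntegral_comp_preimage hNm (f := fun q => ENNReal.ofReal (h q)) (by fun_prop)
  have h4 : ∀ y, ∫⁻ t in Set.Ioi (-⟪-w, y⟫), g (-t, y) = ∫⁻ t in Set.Iio (-⟪w, y⟫), g (t, y) := by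
    intro y
    have := (Measure.measurePreserving_neg (volume : Measure ℝ)).setLIntegral_comp_preimage
      (s := Set.Iio (-⟪w, y⟫)) measurableSet_Iio (f := fun t => g (t, y)) (by fun_prop)
    rw [← this]
    congr 2
    ext t; simp
  rw [← hPdef, hl, hmed] at key1
  rw [← hPdef] at key2
  simp only [h4] at key2
  rw [h3] at key2
  have h5 : ∫⁻ q, g q = (∫⁻ y, ∫⁻ t in Set.Ioi (-⟪w, y⟫), g (t, y)) +
      ∫⁻ y, ∫⁻ t in Set.Iio (-⟪w, y⟫), g (t, y) := by
    rw [Measure.volume_eq_prod, lintegral_prod_symm _ hg.aemeasurable, ← lintegral_add_left]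
    · refine lintegral_congr fun y => ?_
      rw [setLIntegral_congr (Iio_ae_eq_Iic (a := -⟪w, y⟫)), ← Set.compl_Ioi]
      exact (lintegral_add_compl _ measurableSet_Ioi).symm
    · have : ∀ y, ∫⁻ t in Set.Ioi (-⟪w, y⟫), g (t, y) =
          ∫⁻ t, Set.indicator {q : ℝ × EuclideanSpace ℝ (Fin n) | -⟪w, q.2⟫ < q.1} g (t, y) := by
        intro y
        rw [← lintegral_indicator measurableSet_Ioi]
        rfl
      simp only [this]
      refine Measurable.lintegral_prod_left' (hg.indicator ?_)
      exact measurableSet_lt (by fun_prop) (by fun_prop)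
  rw [← ofReal_integral_eq_lintegral_ofReal hi (Eventually.of_forall h0), ← hI, h5,
    show I = 2 * (I / 2) by ring, ENNReal.ofReal_mul zero_le_two, mul_assoc, mul_add]
  refine (mul_le_mul_right (add_le_add key1 key2) _).trans (le_of_eq ?_)
  rw [← ENNReal.ofReal_add (by positivity) (by positivity), ← ENNReal.ofReal_mul zero_le_two]
  congr 1
  ring

lemma exists_santalo_point (hP : FunctionalSantalo n)
    {f : ℝ × EuclideanSpace ℝ (Fin n) → ℝ} (hm : Measurable f) (h0 : ∀ q, 0 ≤ f q)
    (hi : Integrable f) (hi' : Integrable fun q => ‖q‖ * f q) :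
    ∃ c p, ∀ g : ℝ × EuclideanSpace ℝ (Fin n) → ℝ≥0∞, Measurable g →
      (∀ s x t y, ENNReal.ofReal (f (c + s, p + x)) * g (t, y) ≤
        ENNReal.ofReal (exp (-(s * t + ⟪x, y⟫)))) →
      (∫⁻ q, ENNReal.ofReal (f q)) * ∫⁻ q, g q ≤ ENNReal.ofReal ((2 * π) ^ (n + 1)) := by
  have : (volume : Measure (ℝ × EuclideanSpace ℝ (Fin n))).IsAddHaarMeasure :=
    Measure.prod.instIsAddHaarMeasure _ _
  rcases (integral_nonneg (μ := volume) (f := f) h0).eq_or_lt with hz | hpos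
  · refine ⟨0, 0, fun g _ _ => ?_⟩
    rw [← ofReal_integral_eq_lintegral_ofReal hi (Eventually.of_forall h0), ← hz]
    simp
  obtain ⟨c, hc⟩ := exists_median hi hpos
  set v : ℝ × EuclideanSpace ℝ (Fin n) := (c, 0) with hv
  have hshift : ∫ q, f (q + v) = ∫ q, f q := integral_add_right_eq_self f v
  have hmi : Integrable fun q => f (q + v) := hi.comp_add_right v
  obtain ⟨p, hp⟩ := exists_santalo_point_of_median hP (h := fun q => f (q + v)) (by fun_prop)
    (fun q => h0 _) hmi (by
      refine ((hi'.comp_add_right v).add (hmi.const_mul ‖v‖)).mono'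
        (Measurable.aestronglyMeasurable (by fun_prop)) (Eventually.of_forall fun q => ?_)
      have : ‖q‖ ≤ ‖q + v‖ + ‖v‖ := by
        simpa using norm_sub_le (q + v) v
      rw [Real.norm_of_nonneg (mul_nonneg (norm_nonneg _) (h0 _))]
      simp only [Pi.add_apply]
      nlinarith [h0 (q + v)]) (by rwa [hshift]) (by
      rw [hshift, ← hc]
      have := (measurePreserving_add_right volume v).setIntegral_preimage_emb
        (measurableEmbedding_addRight v) f (Set.Ioi c ×ˢ Set.univ)
      rw [← this]
      congr 2
      ext q; simp [hv])
  refine ⟨c, p, fun g hg hfg => ?_⟩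
  have := hp g hg (fun s x t y => by
    have := hfg s x t y
    simpa [hv, add_comm] using this)
  rwa [lintegral_add_right_eq_self (fun q => ENNReal.ofReal (f q)) v] at this

lemma functionalSantalo_zero : FunctionalSantalo 0 := by
  intro f g _ _ hfg _
  rw [volume_euclideanSpace_eq_dirac, lintegral_dirac, lintegral_dirac]
  simpa using hfg 0 0

lemma functionalSantalo_succ (hP : FunctionalSantalo n) : FunctionalSantalo (n + 1) := by
  intro f g hf hg hfg hmin
  set e : Esp n := EuclideanSpace.single 0 1 with he
  have he1 : ‖e‖ = 1 := by simp [he]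
  obtain ⟨ι, hι, -, mp⟩ := exists_orthogonal_splitting he1
  set T : ℝ × EuclideanSpace ℝ (Fin n) → Esp n := fun p => p.1 • e + ι p.2 with hT
  have hTm : Measurable T := mp.measurable
  have hTadd : ∀ p q, T (p + q) = T p + T q := by
    intro p q; simp only [hT, Prod.fst_add, Prod.snd_add, add_smul, map_add]; abel
  have hTin : ∀ p q, ⟪T p, T q⟫ = p.1 * q.1 + ⟪p.2, q.2⟫ := by
    intro p q
    simp only [hT, inner_add_left, inner_add_right, real_inner_smul_left, real_inner_smul_right,
      hι, LinearIsometry.inner_map_map, real_inner_self_eq_norm_sq, he1,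
      real_inner_comm e (ι p.2)]
    ring
  set G : ℕ → ℝ × EuclideanSpace ℝ (Fin n) → ℝ≥0∞ := fun R =>
    (Metric.closedBall 0 (R : ℝ)).indicator fun q => min (g (T q)) R with hG
  have hGm : ∀ R, Measurable (G R) := fun R =>
    ((hg.comp hTm).min measurable_const).indicator Metric.isClosed_closedBall.measurableSet
  have hGle : ∀ R q, G R q ≤ g (T q) := fun R q =>
    Set.indicator_le' (fun _ _ => min_le_left _ _) (fun _ _ => zero_le) q
  have hGleR : ∀ R q, G R q ≤ (Metric.closedBall 0 (R : ℝ)).indicator (fun _ => (R : ℝ≥0∞)) q :=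
    fun R q => Set.indicator_le_indicator (min_le_right _ _)
  have hGtop : ∀ R q, G R q ≠ ∞ := fun R q => by
    refine ne_top_of_le_ne_top ?_ ((hGleR R q).trans (Set.indicator_le_self' (by simp) q))
    simp
  have hstep : ∀ R, (∫⁻ x, f x) * ∫⁻ q, G R q ≤ ENNReal.ofReal ((2 * π) ^ (n + 1)) := by
    intro R
    have hbnd : ∀ q, (G R q).toReal ≤
        (Metric.closedBall 0 (R : ℝ)).indicator (fun _ => (R : ℝ)) q := by
      intro q
      have h1 := hGleR R q
      by_cases hq : q ∈ Metric.closedBall 0 (R : ℝ)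
      · rw [Set.indicator_of_mem hq] at h1 ⊢
        exact ENNReal.toReal_le_of_le_ofReal (by positivity) (by simpa using h1)
      · rw [Set.indicator_of_notMem hq] at h1 ⊢
        simp [nonpos_iff_eq_zero.1 h1]
    have hind : ∀ c : ℝ, Integrable ((Metric.closedBall (0 : ℝ × EuclideanSpace ℝ (Fin n))
        (R : ℝ)).indicator (fun _ => c)) := fun c =>
      (integrable_indicator_iff Metric.isClosed_closedBall.measurableSet).2
        (integrableOn_const (by exact (isCompact_closedBall _ _).measure_lt_top.ne))
    obtain ⟨c, p, hcp⟩ := exists_santalo_point hP (f := fun q => (G R q).toReal)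
      (hGm R).ennreal_toReal (fun q => ENNReal.toReal_nonneg)
      ((hind R).mono' (hGm R).ennreal_toReal.aestronglyMeasurable (Eventually.of_forall fun q => by
        rw [Real.norm_of_nonneg ENNReal.toReal_nonneg]; exact hbnd q))
      ((hind (R * R)).mono' (measurable_norm.mul (hGm R).ennreal_toReal).aestronglyMeasurable
        (Eventually.of_forall fun q => by
        rw [Real.norm_of_nonneg (mul_nonneg (norm_nonneg _) ENNReal.toReal_nonneg)]
        have h1 := hbnd q
        by_cases hq : q ∈ Metric.closedBall 0 (R : ℝ)
        · rw [Set.indicator_of_mem hq] at h1 ⊢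
          have : ‖q‖ ≤ R := by simpa using hq
          gcongr
        · rw [Set.indicator_of_notMem hq] at h1 ⊢
          nlinarith [norm_nonneg q]))
    have h1 := hcp (fun q => f (T q) * ENNReal.ofReal (exp ⟪T (c, p), T q⟫))
      (by have := hf.comp hTm; fun_prop) (fun s x t y => by
      rw [ENNReal.ofReal_toReal (hGtop _ _)]
      calc G R (c + s, p + x) * (f (T (t, y)) * ENNReal.ofReal (exp ⟪T (c, p), T (t, y)⟫))
          ≤ g (T (c + s, p + x)) * (f (T (t, y)) * ENNReal.ofReal (exp ⟪T (c, p), T (t, y)⟫)) := by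
            gcongr; exact hGle _ _
        _ = (f (T (t, y)) * g (T (c + s, p + x))) *
            ENNReal.ofReal (exp ⟪T (c, p), T (t, y)⟫) := by ring
        _ ≤ ENNReal.ofReal (exp (-⟪T (t, y), T (c + s, p + x)⟫)) *
            ENNReal.ofReal (exp ⟪T (c, p), T (t, y)⟫) := by gcongr; exact hfg _ _
        _ = _ := by
            rw [← ENNReal.ofReal_mul (exp_pos _).le, ← Real.exp_add]
            simp only [hTin, inner_add_right, real_inner_comm y]
            congr 2
            ring)
    have h2 := mp.lintegral_comp (f := fun x => f x * ENNReal.ofReal (exp ⟪T (c, p), x⟫))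
      (by fun_prop)
    simp only [ENNReal.ofReal_toReal (hGtop _ _)] at h1
    rw [h2] at h1
    calc _ ≤ (∫⁻ x, f x * ENNReal.ofReal (exp ⟪T (c, p), x⟫)) * ∫⁻ q, G R q := by
          exact mul_le_mul_left (hmin _) _
      _ ≤ _ := by rw [mul_comm]; exact h1
  have hsup : ∀ q, ⨆ R, G R q = g (T q) := by
    intro q
    refine le_antisymm (iSup_le fun R => hGle R q) (le_of_forall_lt fun a ha => ?_)
    obtain ⟨k, hk⟩ := ENNReal.exists_nat_gt (ne_top_of_lt ha)
    obtain ⟨l, hl⟩ := exists_nat_ge ‖q‖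
    refine lt_iSup_iff.2 ⟨max k l, ?_⟩
    rw [hG]
    simp only
    rw [Set.indicator_of_mem]
    · refine lt_min ha (hk.trans_le ?_)
      exact_mod_cast le_max_left k l
    · have : (l : ℝ) ≤ ((max k l : ℕ) : ℝ) := by exact_mod_cast le_max_right k l
      simpa using hl.trans this
  have hmono : Monotone G := by
    intro R R' hRR' q
    have : (R : ℝ) ≤ R' := by exact_mod_cast hRR'
    refine (Set.indicator_le_indicator_of_subset (Metric.closedBall_subset_closedBall this)
      (fun _ => zero_le) q).trans (Set.indicator_le_indicator ?_)
    exact min_le_min le_rfl (by exact_mod_cast hRR')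
  rw [← mp.lintegral_comp hg]
  change (∫⁻ x, f x) * ∫⁻ q, g (T q) ≤ _
  simp only [← hsup]
  rw [lintegral_iSup hGm hmono, ENNReal.mul_iSup]
  exact iSup_le hstep

theorem functionalSantalo (n : ℕ) : FunctionalSantalo n := by
  induction n with
  | zero => exact functionalSantalo_zero
  | succ n ih => exact functionalSantalo_succ ih

end FunctionalSantaloStep

section PolarCoordinates

variable {n : ℕ}

/-- The rotation invariant probability measure on the unit sphere of `ℝ^n`. -/
def sphereProb (n : ℕ) : Measure (EuclideanSpace ℝ (Fin n)) :=
  ((volume : Measure (EuclideanSpace ℝ (Fin n))).toSphere Set.univ)⁻¹ •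
    ((volume : Measure (EuclideanSpace ℝ (Fin n))).toSphere.map Subtype.val)

/-- The total mass of the cone measure on the unit sphere of `ℝ^n`. -/
def sphereMass (n : ℕ) : ℝ≥0∞ :=
  (volume : Measure (EuclideanSpace ℝ (Fin n))).toSphere Set.univ

lemma sphereMass_ne_zero [NeZero n] : sphereMass n ≠ 0 := by
  rw [sphereMass, Measure.toSphere_apply_univ]
  refine mul_ne_zero ?_ (Metric.measure_ball_pos _ _ one_pos).ne'
  simpa using NeZero.ne n

lemma sphereMass_ne_top : sphereMass n ≠ ∞ := measure_ne_top _ _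

instance [NeZero n] : IsProbabilityMeasure (sphereProb n) := ⟨by
  rw [sphereProb, Measure.smul_apply, Measure.map_apply measurable_subtype_coe .univ]
  exact ENNReal.inv_mul_cancel sphereMass_ne_zero sphereMass_ne_top⟩

lemma ae_norm_eq_one_sphereProb : ∀ᵐ x ∂sphereProb n, ‖x‖ = 1 := by
  refine Measure.ae_smul_measure ?_ _
  rw [ae_map_iff measurable_subtype_coe.aemeasurable
    (measurableSet_eq_fun (by fun_prop) (by fun_prop))]
  exact Eventually.of_forall fun x => by simp

lemma sphereProb_map (T : EuclideanSpace ℝ (Fin n) ≃ₗᵢ[ℝ] EuclideanSpace ℝ (Fin n)) :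
    (sphereProb n).map T = sphereProb n := by
  rw [sphereProb, Measure.map_smul]
  congr 1
  have hT : Measurable T := T.continuous.measurable
  ext s hs
  rw [Measure.map_apply hT hs, Measure.map_apply measurable_subtype_coe (hT hs),
    Measure.map_apply measurable_subtype_coe hs,
    Measure.toSphere_apply' _ (measurable_subtype_coe (hT hs)),
    Measure.toSphere_apply' _ (measurable_subtype_coe hs)]
  congr 1
  symm
  rw [← T.measurePreserving.measure_preimage_emb T.toHomeomorph.measurableEmbedding]
  congr 1
  ext x
  simp only [Set.mem_smul, Set.mem_image, Set.mem_preimage, Subtype.exists, mem_sphere_zero_iff_norm]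
  constructor
  · rintro ⟨r, hr, y, ⟨z, hz, hzs, rfl⟩, h⟩
    refine ⟨r, hr, T.symm z, ⟨T.symm z, by simpa using hz, by simpa using hzs, rfl⟩, ?_⟩
    rw [← map_smul, h, T.symm_apply_apply]
  · rintro ⟨r, hr, y, ⟨z, hz, hzs, rfl⟩, rfl⟩
    exact ⟨r, hr, T z, ⟨T z, by simpa using hz, hzs, rfl⟩, by simp⟩

/-- Integration in polar coordinates. -/
lemma lintegral_eq_polar [NeZero n] {H : EuclideanSpace ℝ (Fin n) → ℝ≥0∞} (hH : Measurable H) :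
    ∫⁻ x, H x = sphereMass n * ∫⁻ u, (∫⁻ r in Set.Ioi (0 : ℝ),
      H (r • u) * ENNReal.ofReal (r ^ (n - 1))) ∂sphereProb n := by
  have hm : Measurable fun u : EuclideanSpace ℝ (Fin n) => ∫⁻ r in Set.Ioi (0 : ℝ),
      H (r • u) * ENNReal.ofReal (r ^ (n - 1)) := by
    apply Measurable.lintegral_prod_right' (ν := volume.restrict (Set.Ioi (0:ℝ)))
      (f := fun q : EuclideanSpace ℝ (Fin n) × ℝ => H (q.2 • q.1) * ENNReal.ofReal (q.2 ^ (n - 1)))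
    fun_prop
  rw [sphereProb, lintegral_smul_measure, smul_eq_mul, ← mul_assoc]
  change _ = sphereMass n * (sphereMass n)⁻¹ * _
  rw [ENNReal.mul_inv_cancel sphereMass_ne_zero sphereMass_ne_top, one_mul,
    lintegral_map hm measurable_subtype_coe]
  have mp := (volume : Measure (EuclideanSpace ℝ (Fin n))).measurePreserving_homeomorphUnitSphereProd
  have h1 : ∫⁻ x, H x = ∫⁻ x : ({0}ᶜ : Set (EuclideanSpace ℝ (Fin n))), H x
      ∂(Measure.comap Subtype.val volume) := by
    rw [lintegral_subtype_comap (measurableSet_singleton _).compl, restrict_compl_singleton]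
  have h2 := mp.lintegral_comp (f := fun p => H (p.2.1 • p.1.1)) (by fun_prop)
  rw [h1]
  have h3 : ∀ x : ({0}ᶜ : Set (EuclideanSpace ℝ (Fin n))),
      H ((homeomorphUnitSphereProd _ x).2.1 • (homeomorphUnitSphereProd _ x).1.1) = H x := by
    intro x
    have hx : (x : EuclideanSpace ℝ (Fin n)) ≠ 0 := x.2
    congr 1
    simp only [homeomorphUnitSphereProd_apply_fst_coe, homeomorphUnitSphereProd_apply_snd_coe]
    rw [smul_inv_smul₀ (norm_ne_zero_iff.2 hx)]
  simp only [h3] at h2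
  rw [h2, lintegral_prod _ (Measurable.aemeasurable (by fun_prop))]
  refine lintegral_congr fun u => ?_
  rw [Measure.volumeIoiPow, lintegral_withDensity_eq_lintegral_mul _ (by fun_prop) (by fun_prop),
    finrank_euclideanSpace_fin,
    ← lintegral_subtype_comap measurableSet_Ioi]
  refine lintegral_congr fun r => ?_
  simp [mul_comm]

end PolarCoordinates

section GaussianCones

variable {d : ℕ}

/-- The (unnormalized) Gaussian measure of a set. -/
def gaussMass (A : Set (Esp d)) : ℝ≥0∞ := ∫⁻ x in A, ENNReal.ofReal (exp (-‖x‖ ^ 2 / 2))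

lemma lintegral_gaussian (n : ℕ) :
    ∫⁻ x : EuclideanSpace ℝ (Fin n), ENNReal.ofReal (exp (-‖x‖ ^ 2 / 2)) =
      ENNReal.ofReal ((2 * π) ^ ((n : ℝ) / 2)) := by
  have h := GaussianFourier.integral_rexp_neg_mul_sq_norm (V := EuclideanSpace ℝ (Fin n))
    (b := 1 / 2) (by norm_num)
  have h1 : ∀ x : EuclideanSpace ℝ (Fin n), exp (-(1 / 2) * ‖x‖ ^ 2) = exp (-‖x‖ ^ 2 / 2) := by
    intro x; congr 1; ring
  simp only [h1] at h
  have hr : (2 * π) ^ ((n : ℝ) / 2) = (π / (1 / 2)) ^ ((n : ℝ) / 2) := by congr 1; ring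
  have hpos : 0 < (2 * π) ^ ((n : ℝ) / 2) := by positivity
  rw [finrank_euclideanSpace_fin, ← hr] at h
  rw [← h, ofReal_integral_eq_lintegral_ofReal]
  · by_contra hni
    rw [integral_undef hni] at h
    linarith
  · exact Eventually.of_forall fun x => (exp_pos _).le

lemma gaussMass_univ_ne_top : gaussMass (Set.univ : Set (Esp d)) ≠ ∞ := by
  rw [gaussMass, setLIntegral_univ, lintegral_gaussian]
  exact ENNReal.ofReal_ne_top

lemma gaussMass_univ_ne_zero : gaussMass (Set.univ : Set (Esp d)) ≠ 0 := by
  rw [gaussMass, setLIntegral_univ, lintegral_gaussian]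
  exact (ENNReal.ofReal_pos.2 (by positivity)).ne'

lemma smul_mem_iff_of_cone {A : Set (Esp d)} (hc : ∀ x ∈ A, ∀ t : ℝ, 0 < t → t • x ∈ A)
    {x : Esp d} {t : ℝ} (ht : 0 < t) : t • x ∈ A ↔ x ∈ A :=
  ⟨fun h => by simpa [smul_smul, ht.ne'] using hc _ h t⁻¹ (inv_pos.2 ht), fun h => hc x h t ht⟩

/-- The Gaussian measure of a cone is proportional to its solid angle. -/
lemma gaussMass_cone {A : Set (Esp d)} (hA : MeasurableSet A)
    (hc : ∀ x ∈ A, ∀ t : ℝ, 0 < t → t • x ∈ A) :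
    gaussMass A = gaussMass (Set.univ : Set (Esp d)) * sphereProb (d + 1) A := by
  set J : ℝ≥0∞ := ∫⁻ r in Set.Ioi (0 : ℝ), ENNReal.ofReal (exp (-r ^ 2 / 2)) *
    ENNReal.ofReal (r ^ d) with hJ
  have key : ∀ B : Set (Esp d), MeasurableSet B → (∀ x ∈ B, ∀ t : ℝ, 0 < t → t • x ∈ B) →
      gaussMass B = sphereMass (d + 1) * (J * sphereProb (d + 1) B) := by
    intro B hB hcB
    rw [gaussMass, ← lintegral_indicator hB, lintegral_eq_polar (by
      exact Measurable.indicator (by fun_prop) hB)]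
    congr 1
    rw [← lintegral_indicator_one hB, ← lintegral_const_mul _ (measurable_one.indicator hB)]
    refine lintegral_congr_ae ?_
    filter_upwards [ae_norm_eq_one_sphereProb] with u hu
    by_cases huB : u ∈ B
    · rw [Set.indicator_of_mem huB, Pi.one_apply, mul_one]
      refine setLIntegral_congr_fun measurableSet_Ioi fun r hr => ?_
      have hr : 0 < r := hr
      rw [Set.indicator_of_mem ((smul_mem_iff_of_cone hcB hr).2 huB), norm_smul, hu, mul_one,
        Real.norm_of_nonneg hr.le, Nat.add_sub_cancel]
    · rw [Set.indicator_of_notMem huB, mul_zero]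
      refine (setLIntegral_congr_fun measurableSet_Ioi fun r hr => ?_).trans lintegral_zero
      rw [Set.indicator_of_notMem (fun h => huB ((smul_mem_iff_of_cone hcB hr).1 h)), zero_mul]
  rw [key A hA hc, key Set.univ .univ (fun _ _ _ _ => trivial), measure_univ]
  ring

lemma Dfun_eq_lintegral {x : ℝ} (h0 : 0 ≤ x) (hx : x ≤ π) :
    ENNReal.ofReal (Dfun d x) = ∫⁻ t in Set.Ioc 0 x, ENNReal.ofReal (sin t ^ (d - 1)) := by
  rw [Dfun, intervalIntegral.integral_of_le h0, ofReal_integral_eq_lintegral_ofReal]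
  · exact (Continuous.intervalIntegrable (by fun_prop) _ _).1
  · filter_upwards [ae_restrict_mem measurableSet_Ioc] with t ht
    exact pow_nonneg (sin_nonneg_of_nonneg_of_le_pi ht.1.le (ht.2.trans hx)) _

lemma lintegral_halfplane {k : ℝ → ℝ → ℝ≥0∞} (hk : Measurable (Function.uncurry k)) :
    ∫⁻ s, ∫⁻ r in Set.Ioi (0 : ℝ), k s r =
      ∫⁻ ρ in Set.Ioi (0 : ℝ), ∫⁻ θ in Set.Ioo 0 π,
        ENNReal.ofReal ρ * k (ρ * cos θ) (ρ * sin θ) := by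
  set F : ℝ × ℝ → ℝ≥0∞ := fun p => (Set.Ioi (0 : ℝ)).indicator (fun r => k p.1 r) p.2 with hF
  have hFm : Measurable F := by
    have : F = {p : ℝ × ℝ | 0 < p.2}.indicator (Function.uncurry k) := by
      ext p; simp only [hF, Set.indicator, Function.uncurry]; rfl
    rw [this]
    exact hk.indicator (measurableSet_lt (by fun_prop) (by fun_prop))
  have h1 : ∫⁻ s, ∫⁻ r in Set.Ioi (0 : ℝ), k s r = ∫⁻ p, F p := by
    rw [Measure.volume_eq_prod, lintegral_prod _ hFm.aemeasurable]
    refine lintegral_congr fun s => ?_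
    rw [← lintegral_indicator measurableSet_Ioi]
  rw [h1, ← lintegral_comp_polarCoord_symm, polarCoord_target, Measure.volume_eq_prod,
    ← Measure.prod_restrict, lintegral_prod]
  · refine setLIntegral_congr_fun measurableSet_Ioi fun ρ hρ => ?_
    have hρ : 0 < ρ := hρ
    simp only
    rw [← lintegral_indicator measurableSet_Ioo, ← lintegral_indicator measurableSet_Ioo]
    refine lintegral_congr fun θ => ?_
    simp only [polarCoord_symm_apply, hF, smul_eq_mul]
    by_cases hθ : θ ∈ Set.Ioo 0 π
    · rw [Set.indicator_of_mem hθ, Set.indicator_of_mem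
        (show θ ∈ Set.Ioo (-π) π from ⟨by linarith [hθ.1, pi_pos], hθ.2⟩),
        Set.indicator_of_mem]
      exact mul_pos hρ (sin_pos_of_mem_Ioo hθ)
    · rw [Set.indicator_of_notMem hθ]
      by_cases hθ' : θ ∈ Set.Ioo (-π) π
      · rw [Set.indicator_of_mem hθ', Set.indicator_of_notMem, mul_zero]
        have : θ ≤ 0 := by
          by_contra h
          exact hθ ⟨not_le.1 h, hθ'.2⟩
        have := sin_nonpos_of_nonpos_of_neg_pi_le this hθ'.1.le
        simp only [Set.mem_Ioi, not_lt]
        nlinarith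
      · rw [Set.indicator_of_notMem hθ']
  · refine Measurable.aemeasurable ?_
    have : Measurable (polarCoord.symm : ℝ × ℝ → ℝ × ℝ) := by
      have : (polarCoord.symm : ℝ × ℝ → ℝ × ℝ) = fun p => (p.1 * cos p.2, p.1 * sin p.2) := by
        ext p <;> simp [polarCoord_symm_apply]
      rw [this]
      fun_prop
    fun_prop

lemma gaussian_ray [NeZero d] {e : Esp d} (he : ‖e‖ = 1)
    {ι : EuclideanSpace ℝ (Fin d) →ₗᵢ[ℝ] Esp d} (hι : ∀ y, ⟪e, ι y⟫ = 0)
    {A : Set (Esp d)} (hc : ∀ x ∈ A, ∀ t : ℝ, 0 < t → t • x ∈ A)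
    {u : EuclideanSpace ℝ (Fin d)} (hu : ‖u‖ = 1) {ρ : ℝ} (hρ : 0 < ρ) (θ : ℝ) :
    ENNReal.ofReal ρ *
      (A.indicator (fun x => ENNReal.ofReal (exp (-‖x‖ ^ 2 / 2)))
        ((ρ * cos θ) • e + ι ((ρ * sin θ) • u)) * ENNReal.ofReal ((ρ * sin θ) ^ (d - 1))) =
      ENNReal.ofReal (ρ ^ d * exp (-ρ ^ 2 / 2)) *
        (A.indicator 1 (cos θ • e + sin θ • ι u) * ENNReal.ofReal (sin θ ^ (d - 1))) := by
  have hnorm : ∀ s y, ‖s • e + ι y‖ ^ 2 = s ^ 2 + ‖y‖ ^ 2 := by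
    intro s y
    rw [norm_add_sq_real, inner_smul_left, hι, norm_smul, he, LinearIsometry.norm_map]
    simp
  have h3 : (ρ * cos θ) • e + ι ((ρ * sin θ) • u) = ρ • (cos θ • e + sin θ • ι u) := by
    rw [map_smul, smul_add, smul_smul, smul_smul]
  have h4 : ρ * ρ ^ (d - 1) = ρ ^ d := by
    rw [← pow_succ', Nat.sub_add_cancel (Nat.one_le_iff_ne_zero.2 (NeZero.ne d))]
  by_cases hm : cos θ • e + sin θ • ι u ∈ A
  · rw [h3, Set.indicator_of_mem ((smul_mem_iff_of_cone hc hρ).2 hm),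
      Set.indicator_of_mem hm, ← h3, hnorm, Pi.one_apply, one_mul, norm_smul, hu, mul_one,
      Real.norm_eq_abs, sq_abs, ← ENNReal.ofReal_mul (exp_pos _).le,
      ← ENNReal.ofReal_mul hρ.le, ← ENNReal.ofReal_mul (by positivity), ← h4]
    have h5 : (ρ * cos θ) ^ 2 + (ρ * sin θ) ^ 2 = ρ ^ 2 := by
      nlinarith [sin_sq_add_cos_sq θ]
    rw [h5, mul_pow]
    congr 1
    ring
  · rw [h3, Set.indicator_of_notMem (fun h => hm ((smul_mem_iff_of_cone hc hρ).1 h)),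
      Set.indicator_of_notMem hm]
    simp

/-- The Gaussian measure of a cone in terms of its spherical radial function. -/
lemma gaussMass_radial [NeZero d] {e : Esp d} (he : ‖e‖ = 1)
    {ι : EuclideanSpace ℝ (Fin d) →ₗᵢ[ℝ] Esp d} (hι : ∀ y, ⟪e, ι y⟫ = 0)
    (mp : MeasurePreserving (fun p : ℝ × EuclideanSpace ℝ (Fin d) => p.1 • e + ι p.2))
    {A : Set (Esp d)} (hA : MeasurableSet A) (hc : ∀ x ∈ A, ∀ t : ℝ, 0 < t → t • x ∈ A)
    {α : EuclideanSpace ℝ (Fin d) → ℝ} (h0 : ∀ u, ‖u‖ = 1 → 0 ≤ α u)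
    (hpi : ∀ u, ‖u‖ = 1 → α u ≤ π)
    (hin : ∀ u, ‖u‖ = 1 → ∀ θ ∈ Set.Ioo 0 π, θ < α u → cos θ • e + sin θ • ι u ∈ A)
    (hout : ∀ u, ‖u‖ = 1 → ∀ θ ∈ Set.Ioo 0 π, cos θ • e + sin θ • ι u ∈ A → θ ≤ α u) :
    gaussMass A = sphereMass d * ((∫⁻ ρ in Set.Ioi (0 : ℝ),
      ENNReal.ofReal (ρ ^ d * exp (-ρ ^ 2 / 2))) *
        ∫⁻ u, ENNReal.ofReal (Dfun d (α u)) ∂sphereProb d) := by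
  set J : ℝ≥0∞ := ∫⁻ ρ in Set.Ioi (0 : ℝ), ENNReal.ofReal (ρ ^ d * exp (-ρ ^ 2 / 2)) with hJ
  set H : Esp d → ℝ≥0∞ := A.indicator fun x => ENNReal.ofReal (exp (-‖x‖ ^ 2 / 2)) with hH
  have hHm : Measurable H := Measurable.indicator (by fun_prop) hA
  have hk : Measurable fun q : (EuclideanSpace ℝ (Fin d) × ℝ) × ℝ =>
      H (q.1.2 • e + ι (q.2 • q.1.1)) * ENNReal.ofReal (q.2 ^ (d - 1)) := by
    have := ι.continuous.measurable
    fun_prop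
  rw [gaussMass, ← lintegral_indicator hA, ← mp.lintegral_comp hHm, Measure.volume_eq_prod,
    lintegral_prod (fun a => H (a.1 • e + ι a.2)) (hHm.comp mp.measurable).aemeasurable]
  have h1 : ∀ s : ℝ, ∫⁻ y, H (s • e + ι y) = sphereMass d * ∫⁻ u, (∫⁻ r in Set.Ioi (0 : ℝ),
      H (s • e + ι (r • u)) * ENNReal.ofReal (r ^ (d - 1))) ∂sphereProb d := fun s => by
    rw [lintegral_eq_polar]
    have := ι.continuous.measurable
    fun_prop
  simp only [h1]
  have hk2 : Measurable fun q : EuclideanSpace ℝ (Fin d) × ℝ => ∫⁻ r in Set.Ioi (0 : ℝ),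
      H (q.2 • e + ι (r • q.1)) * ENNReal.ofReal (r ^ (d - 1)) :=
    Measurable.lintegral_prod_right' (ν := volume.restrict (Set.Ioi (0 : ℝ))) hk
  rw [lintegral_const_mul]
  swap
  · exact Measurable.lintegral_prod_left' (μ := sphereProb d) hk2
  congr 1
  have h6 : ∀ u, ‖u‖ = 1 → ∫⁻ θ in Set.Ioo 0 π, A.indicator 1 (cos θ • e + sin θ • ι u) *
      ENNReal.ofReal (sin θ ^ (d - 1)) = ENNReal.ofReal (Dfun d (α u)) := by
    intro u hu
    rw [Dfun_eq_lintegral (h0 u hu) (hpi u hu), ← lintegral_indicator measurableSet_Ioo,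
      ← lintegral_indicator measurableSet_Ioc]
    refine lintegral_congr_ae ?_
    have hne : ∀ c : ℝ, ∀ᵐ θ : ℝ, θ ≠ c := fun c => by simp [ae_iff]
    filter_upwards [hne (α u), hne π] with θ h7 h8
    by_cases hθ : θ ∈ Set.Ioo 0 π
    · rw [Set.indicator_of_mem hθ]
      rcases lt_or_gt_of_ne h7 with h9 | h9
      · rw [Set.indicator_of_mem (hin u hu θ hθ h9), Set.indicator_of_mem
          (show θ ∈ Set.Ioc 0 (α u) from ⟨hθ.1, h9.le⟩)]
        simp
      · rw [Set.indicator_of_notMem (fun h => not_le.2 h9 (hout u hu θ hθ h)),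
          Set.indicator_of_notMem (fun h => not_le.2 h9 h.2), zero_mul]
    · rw [Set.indicator_of_notMem hθ, Set.indicator_of_notMem]
      exact fun h => hθ ⟨h.1, lt_of_le_of_ne (h.2.trans (hpi u hu)) h8⟩
  have hg : Measurable fun q : EuclideanSpace ℝ (Fin d) × ℝ =>
      A.indicator (1 : Esp d → ℝ≥0∞) (cos q.2 • e + sin q.2 • ι q.1) *
        ENNReal.ofReal (sin q.2 ^ (d - 1)) := by
    have := ι.continuous.measurable
    have : Measurable (A.indicator (1 : Esp d → ℝ≥0∞)) := measurable_one.indicator hA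
    fun_prop
  have hD : ∫⁻ u, ENNReal.ofReal (Dfun d (α u)) ∂sphereProb d =
      ∫⁻ u, (∫⁻ θ in Set.Ioo 0 π, A.indicator 1 (cos θ • e + sin θ • ι u) *
        ENNReal.ofReal (sin θ ^ (d - 1))) ∂sphereProb d :=
    lintegral_congr_ae (ae_norm_eq_one_sphereProb.mono fun u hu => (h6 u hu).symm)
  rw [hD, lintegral_lintegral_swap, ← lintegral_const_mul _ (Measurable.lintegral_prod_right'
    (ν := volume.restrict (Set.Ioo 0 π)) hg)]
  · refine lintegral_congr_ae (ae_norm_eq_one_sphereProb.mono fun u hu => ?_)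
    simp only
    have hku : Measurable (Function.uncurry fun s r : ℝ =>
        H (s • e + ι (r • u)) * ENNReal.ofReal (r ^ (d - 1))) := by
      have := ι.continuous.measurable
      simp only [Function.uncurry_def]
      fun_prop
    rw [lintegral_halfplane hku]
    have hgu := hg.comp (by fun_prop : Measurable fun θ : ℝ => (u, θ))
    rw [hJ, ← lintegral_mul_const _ (by fun_prop)]
    refine setLIntegral_congr_fun measurableSet_Ioi fun ρ hρ => ?_
    rw [setLIntegral_congr_fun measurableSet_Ioo fun θ _ =>
      gaussian_ray he hι hc hu hρ θ]
    exact lintegral_const_mul _ hgu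
  · exact (hk2.comp measurable_swap).aemeasurable

lemma Dfun_nonneg {x : ℝ} (h0 : 0 ≤ x) (hx : x ≤ π) : 0 ≤ Dfun d x :=
  intervalIntegral.integral_nonneg h0 fun _ ht =>
    pow_nonneg (sin_nonneg_of_nonneg_of_le_pi ht.1 (ht.2.trans hx)) _

/-- The solid angle of a cone in terms of its spherical radial function. -/
lemma sphereProb_radial [NeZero d] {e : Esp d} (he : ‖e‖ = 1)
    {ι : EuclideanSpace ℝ (Fin d) →ₗᵢ[ℝ] Esp d} (hι : ∀ y, ⟪e, ι y⟫ = 0)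
    (mp : MeasurePreserving (fun p : ℝ × EuclideanSpace ℝ (Fin d) => p.1 • e + ι p.2))
    {A : Set (Esp d)} (hA : MeasurableSet A) (hc : ∀ x ∈ A, ∀ t : ℝ, 0 < t → t • x ∈ A)
    {α : EuclideanSpace ℝ (Fin d) → ℝ} (h0 : ∀ u, ‖u‖ = 1 → 0 ≤ α u)
    (hpi : ∀ u, ‖u‖ = 1 → α u ≤ π)
    (hin : ∀ u, ‖u‖ = 1 → ∀ θ ∈ Set.Ioo 0 π, θ < α u → cos θ • e + sin θ • ι u ∈ A)
    (hout : ∀ u, ‖u‖ = 1 → ∀ θ ∈ Set.Ioo 0 π, cos θ • e + sin θ • ι u ∈ A → θ ≤ α u) :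
    sphereProb (d + 1) A * ENNReal.ofReal (Dfun d π) =
      ∫⁻ u, ENNReal.ofReal (Dfun d (α u)) ∂sphereProb d := by
  have h1 := gaussMass_radial he hι mp hA hc h0 hpi hin hout
  have h2 := gaussMass_radial he hι mp .univ (fun _ _ _ _ => trivial) (α := fun _ => π)
    (fun _ _ => pi_pos.le) (fun _ _ => le_rfl) (fun _ _ _ _ _ => trivial)
    (fun _ _ _ h _ => h.2.le)
  rw [lintegral_const, measure_univ, mul_one] at h2
  set J : ℝ≥0∞ := ∫⁻ ρ in Set.Ioi (0 : ℝ), ENNReal.ofReal (ρ ^ d * exp (-ρ ^ 2 / 2))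
  rw [gaussMass_cone hA hc, h2] at h1
  have hne : sphereMass d * (J * ENNReal.ofReal (Dfun d π)) ≠ 0 := h2 ▸ gaussMass_univ_ne_zero
  have hnt : sphereMass d * (J * ENNReal.ofReal (Dfun d π)) ≠ ∞ := h2 ▸ gaussMass_univ_ne_top
  have hJ0 : J ≠ 0 := fun h => hne (by rw [h]; simp)
  have hDne : ENNReal.ofReal (Dfun d π) ≠ 0 := fun h => hne (by rw [h]; simp)
  have hJt : J ≠ ∞ := fun h => hnt (by
    rw [h, ENNReal.top_mul hDne, ENNReal.mul_top sphereMass_ne_zero])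
  have h3 : sphereMass d * J * (sphereProb (d + 1) A * ENNReal.ofReal (Dfun d π)) =
      sphereMass d * J * ∫⁻ u, ENNReal.ofReal (Dfun d (α u)) ∂sphereProb d := by
    rw [mul_assoc _ _ (lintegral _ _), ← h1]
    ring
  exact (ENNReal.mul_right_inj (mul_ne_zero sphereMass_ne_zero hJ0)
    (ENNReal.mul_ne_top sphereMass_ne_top hJt)).1 h3

end GaussianCones

section HeightFunction

variable {d : ℕ} {C : Set (Esp d)} {e : Esp d} {ι : EuclideanSpace ℝ (Fin d) →ₗᵢ[ℝ] Esp d}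

/-- A closed convex cone `C` with `e` in its interior which meets the half-space
`{x | ⟪e, x⟫ ≤ 0}` in the origin only. -/
structure IsAxialCone (C : Set (Esp d)) (e : Esp d) : Prop where
  isClosed : IsClosed C
  add_mem : ∀ x ∈ C, ∀ y ∈ C, x + y ∈ C
  smul_mem : ∀ x ∈ C, ∀ t : ℝ, 0 ≤ t → t • x ∈ C
  mem_interior : e ∈ interior C
  inner_pos : ∀ x ∈ C, x ≠ 0 → 0 < ⟪e, x⟫

/-- The function whose epigraph over `e^⊥` is the cone `C`. -/
def coneHeight (C : Set (Esp d)) (e : Esp d) (ι : EuclideanSpace ℝ (Fin d) →ₗᵢ[ℝ] Esp d)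
    (y : EuclideanSpace ℝ (Fin d)) : ℝ :=
  sInf {s : ℝ | s • e + ι y ∈ C}

lemma exists_pos_add_smul_mem_of_mem_interior {x : Esp d} (hx : x ∈ interior C) (v : Esp d) :
    ∃ ε : ℝ, 0 < ε ∧ x + ε • v ∈ C := by
  have h1 : Tendsto (fun t : ℝ => x + t • v) (𝓝[>] 0) (𝓝 x) := by
    have : Continuous fun t : ℝ => x + t • v := by fun_prop
    simpa using (this.tendsto 0).mono_left nhdsWithin_le_nhds
  have h2 := h1.eventually (mem_interior_iff_mem_nhds.1 hx)
  obtain ⟨t, ht, ht0⟩ := (h2.and self_mem_nhdsWithin).exists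
  exact ⟨t, ht0, ht⟩

lemma inner_axis (he : ‖e‖ = 1) (hι : ∀ y, ⟪e, ι y⟫ = 0) (s : ℝ) (y : EuclideanSpace ℝ (Fin d)) :
    ⟪e, s • e + ι y⟫ = s := by
  rw [inner_add_right, inner_smul_right, hι, real_inner_self_eq_norm_sq, he]
  ring

lemma add_axis_ne_zero (he : ‖e‖ = 1) (hι : ∀ y, ⟪e, ι y⟫ = 0) (s : ℝ)
    {y : EuclideanSpace ℝ (Fin d)} (hy : y ≠ 0) : s • e + ι y ≠ 0 := by
  intro h
  have h1 := inner_axis he hι s y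
  rw [h, inner_zero_right] at h1
  rw [← h1, zero_smul, zero_add] at h
  exact hy (ι.injective (by rw [h, map_zero]))

namespace IsAxialCone

lemma inner_nonneg (hC : IsAxialCone C e) {x : Esp d} (hx : x ∈ C) : 0 ≤ ⟪e, x⟫ := by
  by_cases h : x = 0
  · simp [h]
  · exact (hC.inner_pos x hx h).le

lemma mem_iff_coneHeight_le (hC : IsAxialCone C e) (he : ‖e‖ = 1) (hι : ∀ y, ⟪e, ι y⟫ = 0)
    {s : ℝ} {y : EuclideanSpace ℝ (Fin d)} :
    s • e + ι y ∈ C ↔ coneHeight C e ι y ≤ s := by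
  have hbdd : BddBelow {s : ℝ | s • e + ι y ∈ C} :=
    ⟨0, fun s hs => by simpa [inner_axis he hι] using hC.inner_nonneg hs⟩
  have hclosed : IsClosed {s : ℝ | s • e + ι y ∈ C} :=
    hC.isClosed.preimage (by fun_prop : Continuous fun s : ℝ => s • e + ι y)
  have hne : {s : ℝ | s • e + ι y ∈ C}.Nonempty := by
    obtain ⟨ε, hε, h⟩ := exists_pos_add_smul_mem_of_mem_interior hC.mem_interior (ι y)
    refine ⟨ε⁻¹, ?_⟩
    have := hC.smul_mem _ h ε⁻¹ (by positivity)
    rwa [smul_add, smul_smul, inv_mul_cancel₀ hε.ne', one_smul] at this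
  refine ⟨fun h => csInf_le hbdd h, fun h => ?_⟩
  have h1 := hC.add_mem _ (hclosed.csInf_mem hne hbdd) _
    (hC.smul_mem e (interior_subset hC.mem_interior) (s - coneHeight C e ι y) (sub_nonneg.2 h))
  convert h1 using 1
  rw [coneHeight, sub_smul]
  abel

lemma coneHeight_mem (hC : IsAxialCone C e) (he : ‖e‖ = 1) (hι : ∀ y, ⟪e, ι y⟫ = 0)
    (y : EuclideanSpace ℝ (Fin d)) : coneHeight C e ι y • e + ι y ∈ C :=
  (hC.mem_iff_coneHeight_le he hι).2 le_rfl

lemma coneHeight_pos (hC : IsAxialCone C e) (he : ‖e‖ = 1) (hι : ∀ y, ⟪e, ι y⟫ = 0)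
    {y : EuclideanSpace ℝ (Fin d)} (hy : y ≠ 0) : 0 < coneHeight C e ι y := by
  simpa [inner_axis he hι] using
    hC.inner_pos _ (hC.coneHeight_mem he hι y) (add_axis_ne_zero he hι _ hy)

lemma coneHeight_smul (hC : IsAxialCone C e) (he : ‖e‖ = 1) (hι : ∀ y, ⟪e, ι y⟫ = 0)
    {r : ℝ} (hr : 0 < r) (y : EuclideanSpace ℝ (Fin d)) :
    coneHeight C e ι (r • y) = r * coneHeight C e ι y := by
  refine eq_of_forall_ge_iff fun s => ?_
  rw [← hC.mem_iff_coneHeight_le he hι, ← le_div_iff₀' hr, ← hC.mem_iff_coneHeight_le he hι,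
    ← smul_mem_iff_of_cone (fun x hx t ht => hC.smul_mem x hx t (le_of_lt ht)) hr
      (x := (s / r) • e + ι y), smul_add, smul_smul, mul_div_cancel₀ _ hr.ne', map_smul]

lemma measurable_coneHeight (hC : IsAxialCone C e) (he : ‖e‖ = 1) (hι : ∀ y, ⟪e, ι y⟫ = 0) :
    Measurable (coneHeight C e ι) := by
  refine measurable_of_Iic fun s => ?_
  have : coneHeight C e ι ⁻¹' Set.Iic s = {y | s • e + ι y ∈ C} := by
    ext y
    exact (hC.mem_iff_coneHeight_le he hι).symm
  rw [this]
  have hcont : Continuous fun y => s • e + ι y := continuous_const.add ι.continuous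
  exact (hC.isClosed.preimage hcont).measurableSet

end IsAxialCone

/-- The angle between `e` and the boundary of the cone `C` in direction `u`. -/
def coneAngle (C : Set (Esp d)) (e : Esp d) (ι : EuclideanSpace ℝ (Fin d) →ₗᵢ[ℝ] Esp d)
    (u : EuclideanSpace ℝ (Fin d)) : ℝ :=
  π / 2 - arctan (coneHeight C e ι u)

namespace IsAxialCone

lemma measurable_coneAngle (hC : IsAxialCone C e) (he : ‖e‖ = 1) (hι : ∀ y, ⟪e, ι y⟫ = 0) :
    Measurable (coneAngle C e ι) :=
  measurable_const.sub (measurable_arctan.comp (hC.measurable_coneHeight he hι))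

lemma coneAngle_mem_Ioo (hC : IsAxialCone C e) (he : ‖e‖ = 1) (hι : ∀ y, ⟪e, ι y⟫ = 0)
    {u : EuclideanSpace ℝ (Fin d)} (hu : ‖u‖ = 1) : coneAngle C e ι u ∈ Set.Ioo 0 (π / 2) := by
  have h := hC.coneHeight_pos he hι (y := u) (by rintro rfl; simp at hu)
  refine ⟨sub_pos.2 (arctan_lt_pi_div_two _), ?_⟩
  have := arctan_pos.2 h
  rw [coneAngle]; linarith

lemma _root_.tan_coneAngle (u : EuclideanSpace ℝ (Fin d)) :
    tan (coneAngle C e ι u) = (coneHeight C e ι u)⁻¹ := by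
  rw [coneAngle, tan_pi_div_two_sub, tan_arctan]

lemma mem_iff_le_coneAngle (hC : IsAxialCone C e) (he : ‖e‖ = 1) (hι : ∀ y, ⟪e, ι y⟫ = 0)
    {u : EuclideanSpace ℝ (Fin d)} {θ : ℝ} (hθ : θ ∈ Set.Ioo 0 π) :
    cos θ • e + sin θ • ι u ∈ C ↔ θ ≤ coneAngle C e ι u := by
  have hs := sin_pos_of_mem_Ioo hθ
  have h1 : cos θ • e + sin θ • ι u = sin θ • ((cos θ / sin θ) • e + ι u) := by
    rw [smul_add, smul_smul, mul_div_cancel₀ _ hs.ne']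
  have h2 : cos θ / sin θ = tan (π / 2 - θ) := by
    rw [tan_pi_div_two_sub, tan_eq_sin_div_cos, inv_div]
  have h3 : arctan (tan (π / 2 - θ)) = π / 2 - θ :=
    arctan_tan (by linarith [hθ.2]) (by linarith [hθ.1])
  rw [h1, smul_mem_iff_of_cone (fun x hx t ht => hC.smul_mem x hx t (le_of_lt ht)) hs,
    hC.mem_iff_coneHeight_le he hι, h2, ← arctan_strictMono.le_iff_le, h3, coneAngle, le_sub_comm]

lemma sphRadial_eq (hC : IsAxialCone C e) (he : ‖e‖ = 1) (hι : ∀ y, ⟪e, ι y⟫ = 0)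
    {u : EuclideanSpace ℝ (Fin d)} (hu : ‖u‖ = 1) :
    sphRadial (C ∩ uSphere d) e (ι u) = coneAngle C e ι u := by
  have hα := hC.coneAngle_mem_Ioo he hι hu
  have hnorm : ∀ t : ℝ, cos t • e + sin t • ι u ∈ uSphere d := by
    intro t
    have : ‖cos t • e + sin t • ι u‖ ^ 2 = 1 := by
      rw [norm_add_sq_real, inner_smul_left, inner_smul_right, hι, norm_smul, norm_smul, he,
        ι.norm_map, hu]
      simp [sq_abs]
    rw [uSphere, mem_sphere_zero_iff_norm]
    nlinarith [norm_nonneg (cos t • e + sin t • ι u)]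
  rw [sphRadial]
  have : {t : ℝ | 0 ≤ t ∧ t ≤ π / 2 ∧ cos t • e + sin t • ι u ∈ C ∩ uSphere d} =
      Set.Icc 0 (coneAngle C e ι u) := by
    ext t
    simp only [Set.mem_ofPred_eq, Set.mem_inter_iff, hnorm, and_true, Set.mem_Icc]
    constructor
    · rintro ⟨h0, h1, h2⟩
      refine ⟨h0, ?_⟩
      rcases h0.eq_or_lt with rfl | h0
      · exact hα.1.le
      · exact (hC.mem_iff_le_coneAngle he hι ⟨h0, by linarith [pi_pos]⟩).1 h2
    · rintro ⟨h0, h1⟩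
      refine ⟨h0, h1.trans hα.2.le, ?_⟩
      rcases h0.eq_or_lt with rfl | h0
      · simpa using interior_subset hC.mem_interior
      · exact (hC.mem_iff_le_coneAngle he hι ⟨h0, by linarith [pi_pos, hα.2]⟩).2 h1
  rw [this, csSup_Icc hα.1.le]

/-- The solid angle of an axial cone. -/
lemma sphereProb_eq [NeZero d] (hC : IsAxialCone C e) (he : ‖e‖ = 1) (hι : ∀ y, ⟪e, ι y⟫ = 0)
    (mp : MeasurePreserving (fun p : ℝ × EuclideanSpace ℝ (Fin d) => p.1 • e + ι p.2)) :
    sphereProb (d + 1) C * ENNReal.ofReal (Dfun d π) =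
      ∫⁻ u, ENNReal.ofReal (Dfun d (coneAngle C e ι u)) ∂sphereProb d :=
  sphereProb_radial he hι mp hC.isClosed.measurableSet
    (fun x hx t ht => hC.smul_mem x hx t ht.le)
    (fun _ hu => (hC.coneAngle_mem_Ioo he hι hu).1.le)
    (fun _ hu => by linarith [(hC.coneAngle_mem_Ioo he hι hu).2, pi_pos])
    (fun _ _ _ hθ h => (hC.mem_iff_le_coneAngle he hι hθ).2 h.le)
    (fun _ _ _ hθ h => (hC.mem_iff_le_coneAngle he hι hθ).1 h)

end IsAxialCone

/-- The dual cone. -/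
def dualCone (C : Set (Esp d)) : Set (Esp d) := {x | ∀ y ∈ C, 0 ≤ ⟪x, y⟫}

/-- On a closed cone, a positive linear functional dominates a multiple of the norm. -/
lemma exists_pos_mul_norm_le_inner (hcl : IsClosed C)
    (hsmul : ∀ x ∈ C, ∀ t : ℝ, 0 ≤ t → t • x ∈ C) {v : Esp d}
    (hv : ∀ x ∈ C, x ≠ 0 → 0 < ⟪v, x⟫) : ∃ δ : ℝ, 0 < δ ∧ ∀ x ∈ C, δ * ‖x‖ ≤ ⟪v, x⟫ := by
  have hcomp : IsCompact (C ∩ Metric.sphere (0 : Esp d) 1) :=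
    (isCompact_sphere _ _).inter_left hcl
  rcases (C ∩ Metric.sphere (0 : Esp d) 1).eq_empty_or_nonempty with hemp | hne
  · refine ⟨1, one_pos, fun x hx => ?_⟩
    by_cases h : x = 0
    · simp [h]
    · exfalso
      have : ‖x‖⁻¹ • x ∈ C ∩ Metric.sphere (0 : Esp d) 1 :=
        ⟨hsmul x hx _ (by positivity), by simp [norm_smul, h]⟩
      rw [hemp] at this
      exact this
  · obtain ⟨x₀, hx₀, hmin⟩ := hcomp.exists_isMinOn hne
      (by fun_prop : ContinuousOn (fun x => ⟪v, x⟫) _)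
    have hx₀0 : x₀ ≠ 0 := by
      rintro rfl
      simpa using hx₀.2
    refine ⟨⟪v, x₀⟫, hv x₀ hx₀.1 hx₀0, fun x hx => ?_⟩
    by_cases h : x = 0
    · simp [h]
    · have h1 : ‖x‖⁻¹ • x ∈ C ∩ Metric.sphere (0 : Esp d) 1 :=
        ⟨hsmul x hx _ (by positivity), by simp [norm_smul, h]⟩
      have h2 : ⟪v, x₀⟫ ≤ ⟪v, ‖x‖⁻¹ • x⟫ := hmin h1
      rw [inner_smul_right] at h2
      have h3 : 0 < ‖x‖ := norm_pos_iff.2 h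
      calc ⟪v, x₀⟫ * ‖x‖ ≤ ‖x‖⁻¹ * ⟪v, x⟫ * ‖x‖ := by gcongr
        _ = ⟪v, x⟫ := by field_simp

lemma IsAxialCone.dual (hC : IsAxialCone C e) : IsAxialCone (dualCone C) e where
  isClosed := by
    have : dualCone C = ⋂ y ∈ C, {x | 0 ≤ ⟪x, y⟫} := by ext; simp [dualCone]
    rw [this]
    exact isClosed_biInter fun y _ => isClosed_le (by fun_prop) (by fun_prop)
  add_mem x hx y hy z hz := by
    rw [inner_add_left]
    exact add_nonneg (hx z hz) (hy z hz)
  smul_mem x hx t ht z hz := by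
    rw [real_inner_smul_left]
    exact mul_nonneg ht (hx z hz)
  mem_interior := by
    obtain ⟨δ, hδ, h⟩ := exists_pos_mul_norm_le_inner hC.isClosed hC.smul_mem hC.inner_pos
    refine _root_.mem_interior.2 ⟨Metric.ball e δ, fun w hw x hx => ?_, Metric.isOpen_ball,
      Metric.mem_ball_self hδ⟩
    rw [Metric.mem_ball, dist_eq_norm] at hw
    have h1 := (abs_le.1 (abs_real_inner_le_norm (w - e) x)).1
    rw [inner_sub_left] at h1
    have h2 := h x hx
    nlinarith [norm_nonneg x]
  inner_pos x hx hx0 := by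
    obtain ⟨ε, hε, h⟩ := exists_pos_add_smul_mem_of_mem_interior hC.mem_interior (-x)
    have h1 := hx _ h
    rw [inner_add_right, inner_smul_right, inner_neg_right, real_inner_self_eq_norm_sq] at h1
    rw [real_inner_comm]
    have : 0 < ‖x‖ := norm_pos_iff.2 hx0
    have : 0 < ε * ‖x‖ ^ 2 := by positivity
    linarith

lemma IsAxialCone.coneHeight_mul_dual (hC : IsAxialCone C e) (he : ‖e‖ = 1)
    (hι : ∀ y, ⟪e, ι y⟫ = 0) (y y' : EuclideanSpace ℝ (Fin d)) :
    0 ≤ coneHeight C e ι y * coneHeight (dualCone C) e ι y' + ⟪y, y'⟫ := by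
  have h := hC.dual.coneHeight_mem he hι y' _ (hC.coneHeight_mem he hι y)
  rw [inner_add_left, inner_smul_left, inner_axis he hι, inner_add_right, inner_smul_right,
    real_inner_comm, hι, ι.inner_map_map, real_inner_comm] at h
  simp only [mul_zero, zero_add, conj_trivial] at h
  linarith

end HeightFunction

section ConeSantalo

variable {d : ℕ} {C : Set (Esp d)} {e : Esp d} {ι : EuclideanSpace ℝ (Fin d) →ₗᵢ[ℝ] Esp d}

lemma lintegral_Ioi_comp_mul {F : ℝ → ℝ≥0∞} (hF : Measurable F) {c : ℝ} (hc : 0 < c) :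
    ∫⁻ r in Set.Ioi (0 : ℝ), F (c * r) = ENNReal.ofReal c⁻¹ * ∫⁻ r in Set.Ioi (0 : ℝ), F r := by
  have h1 := Measure.map_addHaar_smul (volume : Measure ℝ) hc.ne'
  rw [Module.finrank_self, pow_one, abs_of_pos (inv_pos.2 hc)] at h1
  rw [← lintegral_indicator measurableSet_Ioi, ← lintegral_indicator measurableSet_Ioi,
    ← smul_eq_mul, ← lintegral_smul_measure, ← h1,
    lintegral_map (hF.indicator measurableSet_Ioi) (by fun_prop)]
  refine lintegral_congr fun r => ?_
  simp only [Set.indicator, smul_eq_mul, Set.mem_Ioi, mul_pos_iff_of_pos_left hc]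

lemma IsAxialCone.lintegral_exp_coneHeight [NeZero d] (hC : IsAxialCone C e) (he : ‖e‖ = 1)
    (hι : ∀ y, ⟪e, ι y⟫ = 0) :
    ∫⁻ y, ENNReal.ofReal (exp (-coneHeight C e ι y ^ 2 / 2)) =
      ENNReal.ofReal ((2 * π) ^ ((d : ℝ) / 2)) *
        ∫⁻ u, ENNReal.ofReal (tan (coneAngle C e ι u) ^ d) ∂sphereProb d := by
  set F : ℝ → ℝ≥0∞ := fun r => ENNReal.ofReal (exp (-r ^ 2 / 2)) * ENNReal.ofReal (r ^ (d - 1))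
    with hF
  have hFm : Measurable F := by fun_prop
  have hm := hC.measurable_coneHeight he hι
  have hG : ENNReal.ofReal ((2 * π) ^ ((d : ℝ) / 2)) =
      sphereMass d * ∫⁻ r in Set.Ioi (0 : ℝ), F r := by
    rw [← lintegral_gaussian, lintegral_eq_polar (by fun_prop)]
    congr 1
    rw [lintegral_congr_ae (g := fun _ => ∫⁻ r in Set.Ioi (0 : ℝ), F r), lintegral_const,
      measure_univ, mul_one]
    filter_upwards [ae_norm_eq_one_sphereProb] with u hu
    refine setLIntegral_congr_fun measurableSet_Ioi fun r hr => ?_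
    have hr : 0 < r := hr
    rw [norm_smul, hu, mul_one, Real.norm_of_nonneg hr.le]
  have ht : Measurable fun u => ENNReal.ofReal (tan (coneAngle C e ι u) ^ d) := by
    simp only [tan_coneAngle]
    fun_prop
  rw [lintegral_eq_polar (by fun_prop), hG, mul_assoc, ← lintegral_const_mul _ ht]
  congr 1
  refine lintegral_congr_ae ?_
  filter_upwards [ae_norm_eq_one_sphereProb] with u hu
  have hc : 0 < coneHeight C e ι u := hC.coneHeight_pos he hι (by rintro rfl; simp at hu)
  rw [tan_coneAngle]
  set c := coneHeight C e ι u with hcdef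
  have h1 : ∀ r ∈ Set.Ioi (0 : ℝ), ENNReal.ofReal (exp (-coneHeight C e ι (r • u) ^ 2 / 2)) *
      ENNReal.ofReal (r ^ (d - 1)) = ENNReal.ofReal (c⁻¹ ^ (d - 1)) * F (c * r) := by
    intro r hr
    have hr : 0 < r := hr
    rw [hC.coneHeight_smul he hι hr, ← hcdef, hF]
    simp only
    rw [mul_left_comm (ENNReal.ofReal (c⁻¹ ^ (d - 1))), ← ENNReal.ofReal_mul (p := c⁻¹ ^ (d - 1))
      (by positivity), mul_comm c r, ← mul_pow, mul_comm r c, inv_mul_cancel_left₀ hc.ne']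
  rw [setLIntegral_congr_fun measurableSet_Ioi h1, lintegral_const_mul _ (by fun_prop),
    lintegral_Ioi_comp_mul hFm hc, ← mul_assoc, ← ENNReal.ofReal_mul (by positivity), ← pow_succ,
    Nat.sub_add_cancel (Nat.one_le_iff_ne_zero.2 (NeZero.ne d)), mul_comm]

/-- The Blaschke–Santaló inequality for an axial cone and its dual. -/
lemma IsAxialCone.lintegral_tan_pow_mul_le_one [NeZero d] (hC : IsAxialCone C e) (he : ‖e‖ = 1)
    (hι : ∀ y, ⟪e, ι y⟫ = 0)
    (hmin : ∀ z, ∫⁻ y, ENNReal.ofReal (exp (-coneHeight C e ι y ^ 2 / 2)) ≤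
      ∫⁻ y, ENNReal.ofReal (exp (-coneHeight C e ι y ^ 2 / 2)) * ENNReal.ofReal (exp ⟪z, y⟫)) :
    (∫⁻ u, ENNReal.ofReal (tan (coneAngle C e ι u) ^ d) ∂sphereProb d) *
      ∫⁻ u, ENNReal.ofReal (tan (coneAngle (dualCone C) e ι u) ^ d) ∂sphereProb d ≤ 1 := by
  have hm := hC.measurable_coneHeight he hι
  have hm' := hC.dual.measurable_coneHeight he hι
  have h := functionalSantalo d (fun y => ENNReal.ofReal (exp (-coneHeight C e ι y ^ 2 / 2)))
    (fun y => ENNReal.ofReal (exp (-coneHeight (dualCone C) e ι (-y) ^ 2 / 2)))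
    (by fun_prop) (by fun_prop) (fun x y => by
      rw [← ENNReal.ofReal_mul (exp_pos _).le, ← exp_add]
      refine ENNReal.ofReal_le_ofReal (exp_le_exp.2 ?_)
      have h1 := hC.coneHeight_mul_dual he hι x (-y)
      rw [inner_neg_right] at h1
      nlinarith [sq_nonneg (coneHeight C e ι x - coneHeight (dualCone C) e ι (-y))]) hmin
  rw [lintegral_neg_eq_self (fun y => ENNReal.ofReal
      (exp (-coneHeight (dualCone C) e ι y ^ 2 / 2))),
    hC.lintegral_exp_coneHeight he hι, hC.dual.lintegral_exp_coneHeight he hι] at h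
  have hZ : ENNReal.ofReal ((2 * π) ^ d) = ENNReal.ofReal ((2 * π) ^ ((d : ℝ) / 2)) *
      ENNReal.ofReal ((2 * π) ^ ((d : ℝ) / 2)) := by
    rw [← ENNReal.ofReal_mul (by positivity), ← rpow_add (by positivity), add_halves, rpow_natCast]
  rw [mul_mul_mul_comm, hZ] at h
  set Z := ENNReal.ofReal ((2 * π) ^ ((d : ℝ) / 2))
  have hZ0 : Z * Z ≠ 0 := by
    have : Z ≠ 0 := (ENNReal.ofReal_pos.2 (by positivity)).ne'
    exact mul_ne_zero this this
  have hZt : Z * Z ≠ ∞ := ENNReal.mul_ne_top ENNReal.ofReal_ne_top ENNReal.ofReal_ne_top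
  rwa [ENNReal.mul_le_iff_le_inv hZ0 hZt, ENNReal.inv_mul_cancel hZ0 hZt] at h

lemma integrable_one_add_norm_sq_mul_exp {n : ℕ} {c : ℝ} (hc : 0 < c) :
    Integrable fun x : EuclideanSpace ℝ (Fin n) => (1 + ‖x‖ ^ 2) * exp (-c * ‖x‖ ^ 2) := by
  have h : ∀ b : ℝ, 0 < b → Integrable fun x : EuclideanSpace ℝ (Fin n) => exp (-b * ‖x‖ ^ 2) := by
    intro b hb
    by_contra hni
    have h1 := GaussianFourier.integral_rexp_neg_mul_sq_norm (V := EuclideanSpace ℝ (Fin n)) hb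
    rw [integral_undef hni] at h1
    have : 0 < (π / b) ^ ((Module.finrank ℝ (EuclideanSpace ℝ (Fin n)) : ℝ) / 2) := by positivity
    linarith
  refine ((h (c / 2) (by positivity)).const_mul (1 + 2 / c)).mono' (by fun_prop)
    (Eventually.of_forall fun x => ?_)
  rw [Real.norm_of_nonneg (by positivity)]
  have h1 : exp (-c * ‖x‖ ^ 2) = exp (-(c / 2) * ‖x‖ ^ 2) * exp (-(c / 2) * ‖x‖ ^ 2) := by
    rw [← exp_add]; congr 1; ring
  have h2 : (1 + ‖x‖ ^ 2) * exp (-(c / 2) * ‖x‖ ^ 2) ≤ 1 + 2 / c := by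
    have h3 := add_one_le_exp (c / 2 * ‖x‖ ^ 2)
    have h4 : exp (-(c / 2) * ‖x‖ ^ 2) = (exp (c / 2 * ‖x‖ ^ 2))⁻¹ := by
      rw [← exp_neg]; congr 1; ring
    rw [h4, ← div_eq_mul_inv, div_le_iff₀ (exp_pos _)]
    have h5 : 1 + ‖x‖ ^ 2 ≤ (1 + 2 / c) * (c / 2 * ‖x‖ ^ 2 + 1) := by
      have : (1 + 2 / c) * (c / 2 * ‖x‖ ^ 2 + 1) = 1 + ‖x‖ ^ 2 + (c / 2 * ‖x‖ ^ 2 + 2 / c) := by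
        field_simp; ring
      rw [this]
      have : 0 ≤ c / 2 * ‖x‖ ^ 2 + 2 / c := by positivity
      linarith
    exact h5.trans (by gcongr)
  rw [h1, ← mul_assoc]
  gcongr

lemma integral_Ici_mul_exp (a : ℝ) :
    ∫ s in Set.Ici a, s * exp (-s ^ 2 / 2) = exp (-a ^ 2 / 2) := by
  rw [integral_Ici_eq_integral_Ioi]
  have hderiv : ∀ s : ℝ, HasDerivAt (fun s : ℝ => -exp (-s ^ 2 / 2)) (s * exp (-s ^ 2 / 2)) s := by
    intro s
    have h1 : HasDerivAt (fun s : ℝ => -s ^ 2 / 2) (-s) s := by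
      have := ((hasDerivAt_pow 2 s).neg).div_const 2
      convert! this using 1
      simp
      ring
    have := h1.exp.neg
    convert! this using 1
    ring
  have hintegrable : Integrable fun s : ℝ => s * exp (-s ^ 2 / 2) := by
    have := integrable_mul_exp_neg_mul_sq (b := 1 / 2) (by norm_num)
    refine this.congr (Eventually.of_forall fun s => ?_)
    simp only
    congr 2; ring
  have htend : Tendsto (fun s : ℝ => -exp (-s ^ 2 / 2)) atTop (𝓝 0) := by
    rw [← neg_zero]
    refine (tendsto_exp_atBot.comp ?_).neg
    have : Tendsto (fun s : ℝ => s ^ 2 / 2) atTop atTop :=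
      (tendsto_pow_atTop two_ne_zero).atTop_div_const two_pos
    exact (tendsto_neg_atTop_atBot.comp this).congr fun s => (neg_div _ _).symm
  rw [integral_Ioi_of_hasDerivAt_of_tendsto (hderiv a).continuousAt.continuousWithinAt
    (fun s _ => hderiv s) hintegrable.integrableOn htend]
  ring

/-- The centering condition on an axial cone yields the minimality property of its
height function. -/
lemma IsAxialCone.lintegral_exp_coneHeight_le (hC : IsAxialCone C e) (he : ‖e‖ = 1)
    (hι : ∀ y, ⟪e, ι y⟫ = 0)
    (mp : MeasurePreserving (fun p : ℝ × EuclideanSpace ℝ (Fin d) => p.1 • e + ι p.2))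
    (hbar : ∀ z, ⟪e, z⟫ = 0 → ∫ x in C, ⟪e, x⟫ * ⟪z, x⟫ * exp (-⟪e, x⟫ ^ 2 / 2) = 0)
    (z : EuclideanSpace ℝ (Fin d)) :
    ∫⁻ y, ENNReal.ofReal (exp (-coneHeight C e ι y ^ 2 / 2)) ≤
      ∫⁻ y, ENNReal.ofReal (exp (-coneHeight C e ι y ^ 2 / 2)) * ENNReal.ofReal (exp ⟪z, y⟫) := by
  have hm := hC.measurable_coneHeight he hι
  obtain ⟨δ, hδ, hδC⟩ := exists_pos_mul_norm_le_inner hC.isClosed hC.smul_mem hC.inner_pos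
  have hnorm : ∀ s y, ‖s • e + ι y‖ ^ 2 = s ^ 2 + ‖y‖ ^ 2 := by
    intro s y
    rw [norm_add_sq_real, inner_smul_left, hι, norm_smul, he, LinearIsometry.norm_map]
    simp
  have hlow : ∀ y, δ ^ 2 * ‖y‖ ^ 2 ≤ coneHeight C e ι y ^ 2 := by
    intro y
    have h1 := hδC _ (hC.coneHeight_mem he hι y)
    rw [inner_axis he hι] at h1
    have h2 := hnorm (coneHeight C e ι y) y
    have h3 : ‖y‖ ≤ ‖coneHeight C e ι y • e + ι y‖ :=
      le_of_sq_le_sq (by rw [h2]; nlinarith [sq_nonneg (coneHeight C e ι y)]) (norm_nonneg _)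
    rw [← mul_pow]
    exact pow_le_pow_left₀ (by positivity) ((by gcongr : δ * ‖y‖ ≤ _).trans h1) 2
  have hexp : ∀ y, exp (-coneHeight C e ι y ^ 2 / 2) ≤ exp (-(δ ^ 2 / 2) * ‖y‖ ^ 2) := fun y =>
    exp_le_exp.2 (by linarith [hlow y])
  have hdom := integrable_one_add_norm_sq_mul_exp (n := d) (c := δ ^ 2 / 2) (by positivity)
  refine lintegral_le_lintegral_mul_exp (fun _ => (exp_pos _).le) ?_ ?_ ?_
  · refine hdom.mono' (by fun_prop) (Eventually.of_forall fun y => ?_)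
    rw [Real.norm_of_nonneg (exp_pos _).le]
    refine (hexp y).trans (le_mul_of_one_le_left (exp_pos _).le ?_)
    nlinarith [sq_nonneg ‖y‖]
  · refine (hdom.const_mul ‖z‖).mono' (by fun_prop) (Eventually.of_forall fun y => ?_)
    rw [norm_mul, Real.norm_of_nonneg (exp_pos _).le, mul_comm, ← mul_assoc]
    refine mul_le_mul ?_ (hexp y) (exp_pos _).le (by positivity)
    refine (norm_inner_le_norm z y).trans ?_
    gcongr
    nlinarith [sq_nonneg (‖y‖ - 1)]
  · set g : Esp d → ℝ := C.indicator fun x => ⟪e, x⟫ * ⟪ι z, x⟫ * exp (-⟪e, x⟫ ^ 2 / 2) with hg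
    have hgi : Integrable g := by
      have hdom' := integrable_one_add_norm_sq_mul_exp (n := d + 1) (c := δ ^ 2 / 2) (by positivity)
      refine (hdom'.const_mul ‖z‖).mono' ?_ (Eventually.of_forall fun x => ?_)
      · exact (Measurable.indicator (by fun_prop) hC.isClosed.measurableSet).aestronglyMeasurable
      · rw [hg, norm_indicator_eq_indicator_norm]
        by_cases hx : x ∈ C
        swap
        · rw [Set.indicator_of_notMem hx]
          positivity
        rw [Set.indicator_of_mem hx]
        rw [norm_mul, norm_mul, Real.norm_of_nonneg (exp_pos _).le]
        have h1 : ‖⟪e, x⟫‖ ≤ ‖x‖ := by simpa [he] using norm_inner_le_norm (𝕜 := ℝ) e x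
        have h2 : ‖⟪ι z, x⟫‖ ≤ ‖z‖ * ‖x‖ := by simpa using norm_inner_le_norm (𝕜 := ℝ) (ι z) x
        have h3 : exp (-⟪e, x⟫ ^ 2 / 2) ≤ exp (-(δ ^ 2 / 2) * ‖x‖ ^ 2) := by
          refine exp_le_exp.2 ?_
          have h4 := pow_le_pow_left₀ (by positivity) (hδC x hx) 2
          rw [mul_pow] at h4
          linarith
        calc ‖⟪e, x⟫‖ * ‖⟪ι z, x⟫‖ * exp (-⟪e, x⟫ ^ 2 / 2)
            ≤ ‖x‖ * (‖z‖ * ‖x‖) * exp (-(δ ^ 2 / 2) * ‖x‖ ^ 2) := by gcongr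
          _ = ‖z‖ * (‖x‖ ^ 2 * exp (-(δ ^ 2 / 2) * ‖x‖ ^ 2)) := by ring
          _ ≤ ‖z‖ * ((1 + ‖x‖ ^ 2) * exp (-(δ ^ 2 / 2) * ‖x‖ ^ 2)) := by gcongr; linarith
    have h0 : ∫ x, g x = 0 := by
      rw [hg, integral_indicator hC.isClosed.measurableSet]
      exact hbar _ (hι z)
    have hemb : ∫ p : ℝ × EuclideanSpace ℝ (Fin d), g (p.1 • e + ι p.2) = ∫ x, g x := by
      rw [← mp.map_eq, integral_map mp.measurable.aemeasurable]
      rw [mp.map_eq]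
      exact hgi.aestronglyMeasurable
    have hgi' : Integrable fun p : ℝ × EuclideanSpace ℝ (Fin d) => g (p.1 • e + ι p.2) :=
      mp.integrable_comp_of_integrable hgi
    rw [Measure.volume_eq_prod] at hemb hgi'
    rw [integral_prod_symm _ hgi', h0] at hemb
    rw [← hemb]
    refine integral_congr_ae (Eventually.of_forall fun y => ?_)
    have h1 : ∀ s : ℝ, g (s • e + ι y) =
        (Set.Ici (coneHeight C e ι y)).indicator (fun s => ⟪z, y⟫ * (s * exp (-s ^ 2 / 2))) s := by
      intro s
      by_cases hs : coneHeight C e ι y ≤ s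
      · rw [hg, Set.indicator_of_mem ((hC.mem_iff_coneHeight_le he hι).2 hs),
          Set.indicator_of_mem (Set.mem_Ici.2 hs), inner_axis he hι, inner_add_right,
          inner_smul_right, real_inner_comm, hι, ι.inner_map_map]
        ring
      · rw [hg, Set.indicator_of_notMem (fun h => hs ((hC.mem_iff_coneHeight_le he hι).1 h)),
          Set.indicator_of_notMem (by simpa using hs)]
    simp only [h1]
    rw [integral_indicator measurableSet_Ici, integral_const_mul, integral_Ici_mul_exp, mul_comm]

end ConeSantalo

section ChoiceOfAxis

variable {d : ℕ} {C : Set (Esp d)}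

/-- A closed convex cone that contains no line. -/
structure IsPointedCone (C : Set (Esp d)) : Prop where
  isClosed : IsClosed C
  convex : Convex ℝ C
  smul_mem : ∀ x ∈ C, ∀ t : ℝ, 0 ≤ t → t • x ∈ C
  neg_notMem : ∀ x ∈ C, x ≠ 0 → -x ∉ C

namespace IsPointedCone

lemma add_mem (hC : IsPointedCone C) {x y : Esp d} (hx : x ∈ C) (hy : y ∈ C) : x + y ∈ C := by
  have h := hC.smul_mem _ (hC.convex hx hy (by norm_num : (0 : ℝ) ≤ 1 / 2)
    (by norm_num : (0 : ℝ) ≤ 1 / 2) (by norm_num)) 2 two_pos.le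
  simpa [smul_add, smul_smul] using h

lemma eq_zero_of_add_eq_zero (hC : IsPointedCone C) {x y : Esp d} (hx : x ∈ C) (hy : y ∈ C)
    (h : x + y = 0) : x = 0 := by
  by_contra hx0
  exact hC.neg_notMem x hx hx0 (by rwa [← eq_neg_of_add_eq_zero_right h])

lemma exists_inner_pos_at (hC : IsPointedCone C) {x : Esp d} (hx : x ∈ C) (hx0 : x ≠ 0) :
    ∃ v : Esp d, (∀ y ∈ C, 0 ≤ ⟪v, y⟫) ∧ 0 < ⟪v, x⟫ := by
  obtain ⟨f, u, hu, hf⟩ :=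
    geometric_hahn_banach_point_closed hC.convex hC.isClosed (hC.neg_notMem x hx hx0)
  have hv : ∀ y, ⟪(InnerProductSpace.toDual ℝ (Esp d)).symm f, y⟫ = f y := fun y =>
    InnerProductSpace.toDual_symm_apply
  have hu0 : u < 0 := by simpa using hf _ (hC.smul_mem x hx 0 le_rfl)
  refine ⟨(InnerProductSpace.toDual ℝ (Esp d)).symm f, fun y hy => ?_, ?_⟩
  · rw [hv]
    by_contra! hlt
    have h1 := hf _ (hC.smul_mem y hy (u / f y) (div_nonneg_of_nonpos hu0.le hlt.le))
    rw [map_smul, smul_eq_mul, div_mul_cancel₀ _ hlt.ne] at h1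
    exact lt_irrefl _ h1
  · rw [hv]
    rw [map_neg] at hu
    linarith

/-- A pointed cone is contained in an open half-space, up to the origin. -/
lemma exists_inner_pos (hC : IsPointedCone C) :
    ∃ v : Esp d, ∀ x ∈ C, x ≠ 0 → 0 < ⟪v, x⟫ := by
  have hcomp : IsCompact (C ∩ Metric.sphere (0 : Esp d) 1) :=
    (isCompact_sphere _ _).inter_left hC.isClosed
  obtain ⟨v, -, hv⟩ := hcomp.induction_on
    (p := fun s => ∃ v : Esp d, (∀ y ∈ C, 0 ≤ ⟪v, y⟫) ∧ ∀ y ∈ s, y ∈ C → 0 < ⟪v, y⟫)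
    ⟨0, by simp, by simp⟩
    (fun s t hst ⟨v, h1, h2⟩ => ⟨v, h1, fun y hy => h2 y (hst hy)⟩)
    (fun s t ⟨v, h1, h2⟩ ⟨w, h3, h4⟩ => ⟨v + w,
      fun y hy => by rw [inner_add_left]; exact add_nonneg (h1 y hy) (h3 y hy),
      fun y hy hyC => by
        rw [inner_add_left]
        rcases hy with hy | hy
        · exact add_pos_of_pos_of_nonneg (h2 y hy hyC) (h3 y hyC)
        · exact add_pos_of_nonneg_of_pos (h1 y hyC) (h4 y hy hyC)⟩)
    (fun x hx => by
      have hx0 : x ≠ 0 := by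
        rintro rfl
        simpa using hx.2
      obtain ⟨v, h1, h2⟩ := hC.exists_inner_pos_at hx.1 hx0
      refine ⟨{y | 0 < ⟪v, y⟫}, mem_nhdsWithin_of_mem_nhds ?_, v, h1, fun y hy _ => hy⟩
      exact (isOpen_lt (by fun_prop) (by fun_prop)).mem_nhds h2)
  refine ⟨v, fun x hx hx0 => ?_⟩
  have hpos : 0 < ‖x‖⁻¹ := inv_pos.2 (norm_pos_iff.2 hx0)
  have hmem := hC.smul_mem x hx _ hpos.le
  have h := hv (‖x‖⁻¹ • x) ⟨hmem, by simp [norm_smul, hx0]⟩ hmem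
  rw [inner_smul_right] at h
  exact pos_of_mul_pos_right h hpos.le

end IsPointedCone

/-- The functional minimized in order to find the axis. -/
def axisPotential (C : Set (Esp d)) (v : Esp d) : ℝ≥0∞ :=
  ∫⁻ x in C, ENNReal.ofReal (exp (-⟪v, x⟫ ^ 2 / 2))

lemma lowerSemicontinuous_axisPotential : LowerSemicontinuous (axisPotential C) := by
  intro v
  refine lowerSemicontinuousAt_iff_le_liminf.2 ?_
  refine le_trans (le_of_eq (lintegral_congr fun x => ?_))
    (lintegral_liminf_le' (f := fun (w : Esp d) x => ENNReal.ofReal (exp (-⟪w, x⟫ ^ 2 / 2)))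
      (fun w => by fun_prop))
  have hcont : Continuous fun w : Esp d => ENNReal.ofReal (exp (-⟪w, x⟫ ^ 2 / 2)) :=
    ENNReal.continuous_ofReal.comp (by fun_prop)
  exact (hcont.tendsto v).liminf_eq.symm

lemma axisPotential_neg (v : Esp d) : axisPotential C (-v) = axisPotential C v := by
  simp [axisPotential]

/-- Integrability of the relevant integrands over a cone in an open half-space. -/
lemma integrableOn_of_le_exp {δ : ℝ} (hδ : 0 < δ) {v : Esp d} (hv : ∀ x ∈ C, δ * ‖x‖ ≤ ⟪v, x⟫)
    (hcl : IsClosed C) {g : Esp d → ℝ} (hg : Measurable g) {M : ℝ}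
    (hgM : ∀ x, ‖g x‖ ≤ M * (1 + ‖x‖ ^ 2)) :
    IntegrableOn (fun x => g x * exp (-⟪v, x⟫ ^ 2 / 2)) C := by
  have hdom := integrable_one_add_norm_sq_mul_exp (n := d + 1) (c := δ ^ 2 / 2) (by positivity)
  refine (hdom.const_mul M).integrableOn.mono' (by fun_prop) ?_
  filter_upwards [ae_restrict_mem hcl.measurableSet] with x hx
  rw [norm_mul, Real.norm_of_nonneg (exp_pos _).le, ← mul_assoc]
  refine mul_le_mul (hgM x) (exp_le_exp.2 ?_) (exp_pos _).le ((norm_nonneg _).trans (hgM x))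
  have h4 := pow_le_pow_left₀ (by positivity) (hv x hx) 2
  rw [mul_pow] at h4
  linarith

lemma axisPotential_eq_ofReal {δ : ℝ} (hδ : 0 < δ) {v : Esp d}
    (hv : ∀ x ∈ C, δ * ‖x‖ ≤ ⟪v, x⟫) (hcl : IsClosed C) :
    axisPotential C v = ENNReal.ofReal (∫ x in C, exp (-⟪v, x⟫ ^ 2 / 2)) := by
  rw [axisPotential, ofReal_integral_eq_lintegral_ofReal]
  · have := integrableOn_of_le_exp hδ hv hcl (g := fun _ => 1) (by fun_prop) (M := 1)
      (fun x => by simp)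
    simp only [one_mul] at this
    exact this
  · exact Eventually.of_forall fun x => (exp_pos _).le

lemma IsPointedCone.exists_min (hC : IsPointedCone C) :
    ∃ v : Esp d, axisPotential C v ≠ ∞ ∧ ∀ w, axisPotential C v + ENNReal.ofReal (‖v‖ ^ 2 / 2) ≤
      axisPotential C w + ENNReal.ofReal (‖w‖ ^ 2 / 2) := by
  obtain ⟨v₀, hv₀⟩ := hC.exists_inner_pos
  obtain ⟨δ, hδ, hδC⟩ := exists_pos_mul_norm_le_inner hC.isClosed hC.smul_mem hv₀
  set Φ : Esp d → ℝ≥0∞ := fun w => axisPotential C w + ENNReal.ofReal (‖w‖ ^ 2 / 2) with hΦ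
  have hfin : Φ v₀ ≠ ∞ := by
    rw [hΦ]
    simp only
    rw [axisPotential_eq_ofReal hδ hδC hC.isClosed]
    exact ENNReal.add_ne_top.2 ⟨ENNReal.ofReal_ne_top, ENNReal.ofReal_ne_top⟩
  have hcont : Continuous fun w : Esp d => ENNReal.ofReal (‖w‖ ^ 2 / 2) :=
    ENNReal.continuous_ofReal.comp (by fun_prop)
  have hlsc : LowerSemicontinuous Φ := lowerSemicontinuous_axisPotential.add hcont.lowerSemicontinuous
  set R : ℝ := ‖v₀‖ + 2 * (Φ v₀).toReal + 1 with hR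
  have hT : 0 ≤ (Φ v₀).toReal := ENNReal.toReal_nonneg
  obtain ⟨v, -, hv⟩ := (hlsc.lowerSemicontinuousOn (Metric.closedBall 0 R)).exists_isMinOn
    ⟨v₀, by simp [hR]; linarith⟩ (isCompact_closedBall _ _)
  have hvv₀ : Φ v ≤ Φ v₀ := hv (by simp [hR]; linarith)
  refine ⟨v, fun h => hfin (top_le_iff.1 (le_trans ?_ hvv₀)), fun w => ?_⟩
  · simp [hΦ, h]
  · by_cases hw : w ∈ Metric.closedBall (0 : Esp d) R
    · exact hv hw
    · refine hvv₀.trans (le_trans ?_ le_add_self)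
      rw [← ENNReal.ofReal_toReal hfin]
      refine ENNReal.ofReal_le_ofReal ?_
      have hw' : R < ‖w‖ := by simpa using hw
      have := norm_nonneg v₀
      nlinarith

/-- If the potential is finite at `v`, then `v` is orthogonal to no nonzero vector of the cone. -/
lemma IsPointedCone.inner_ne_zero (hC : IsPointedCone C) (hvol : volume C ≠ 0) {v : Esp d}
    (hv : axisPotential C v ≠ ∞) {x : Esp d} (hx : x ∈ C) (hx0 : x ≠ 0) : ⟪v, x⟫ ≠ 0 := by
  intro h0
  set w : Esp d → ℝ≥0∞ := fun y => ENNReal.ofReal (exp (-⟪v, y⟫ ^ 2 / 2)) with hw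
  have hwm : Measurable w := by fun_prop
  set T : ℕ → Set (Esp d) := fun n => {y | y - (n : ℝ) • x ∈ C} with hT
  have hTcl : ∀ n, IsClosed (T n) := fun n =>
    hC.isClosed.preimage (by fun_prop : Continuous fun y : Esp d => y - (n : ℝ) • x)
  have hTeq : ∀ n, volume.withDensity w (T n) = axisPotential C v := by
    intro n
    rw [withDensity_apply _ (hTcl n).measurableSet, ← lintegral_indicator (hTcl n).measurableSet,
      axisPotential, ← lintegral_indicator hC.isClosed.measurableSet,
      ← lintegral_sub_right_eq_self (C.indicator _) ((n : ℝ) • x)]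
    refine lintegral_congr fun y => ?_
    by_cases hy : y - (n : ℝ) • x ∈ C
    · rw [Set.indicator_of_mem (show y ∈ T n from hy), Set.indicator_of_mem hy, hw]
      simp only
      rw [inner_sub_right, inner_smul_right, h0, mul_zero, sub_zero]
    · rw [Set.indicator_of_notMem (show y ∉ T n from hy), Set.indicator_of_notMem hy]
  have hanti : Antitone T := by
    refine antitone_nat_of_succ_le fun n y hy => ?_
    have h1 := hC.add_mem hy hx
    have h2 : y - ((n + 1 : ℕ) : ℝ) • x + x = y - (n : ℝ) • x := by
      push_cast
      rw [add_smul, one_smul]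
      abel
    rw [h2] at h1
    exact h1
  have hempty : ⋂ n, T n = ∅ := by
    rw [Set.eq_empty_iff_forall_notMem]
    intro y hy
    rw [Set.mem_iInter] at hy
    refine hC.neg_notMem x hx hx0 ?_
    have h1 : Tendsto (fun n : ℕ => ((n : ℝ) + 1)⁻¹ • y - x) atTop (𝓝 ((0 : ℝ) • y - x)) := by
      refine Tendsto.sub (Tendsto.smul ?_ tendsto_const_nhds) tendsto_const_nhds
      simpa using tendsto_one_div_add_atTop_nhds_zero_nat (𝕜 := ℝ)
    rw [zero_smul, zero_sub] at h1
    refine hC.isClosed.mem_of_tendsto h1 (Eventually.of_forall fun n => ?_)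
    have hn : (0 : ℝ) < (n : ℝ) + 1 := by positivity
    have h2 := hC.smul_mem _ (hy (n + 1)) ((n : ℝ) + 1)⁻¹ (by positivity)
    rwa [smul_sub, smul_smul, Nat.cast_add_one, inv_mul_cancel₀ hn.ne', one_smul] at h2
  have hlim := tendsto_measure_iInter_atTop (μ := volume.withDensity w)
    (fun n => (hTcl n).measurableSet.nullMeasurableSet) hanti ⟨0, by rw [hTeq]; exact hv⟩
  rw [hempty, measure_empty] at hlim
  have hzero : axisPotential C v = 0 := by
    refine tendsto_nhds_unique (f := (volume.withDensity w) ∘ T) ?_ hlim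
    have : (volume.withDensity w) ∘ T = fun _ => axisPotential C v := funext hTeq
    rw [this]
    exact tendsto_const_nhds
  rw [axisPotential, setLIntegral_eq_zero_iff hC.isClosed.measurableSet hwm] at hzero
  refine hvol (measure_mono_null (fun y hy => ?_) (ae_iff.1 hzero))
  simp only [Set.mem_ofPred_eq, not_forall]
  exact ⟨hy, (ENNReal.ofReal_pos.2 (exp_pos _)).ne'⟩

lemma IsPointedCone.inner_pos_or_neg (hC : IsPointedCone C) {v : Esp d}
    (hv : ∀ x ∈ C, x ≠ 0 → ⟪v, x⟫ ≠ 0) :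
    (∀ x ∈ C, x ≠ 0 → 0 < ⟪v, x⟫) ∨ (∀ x ∈ C, x ≠ 0 → 0 < ⟪-v, x⟫) := by
  by_contra! h
  obtain ⟨⟨x, hx, hx0, h1⟩, y, hy, hy0, h2⟩ := h
  have h1 := lt_of_le_of_ne h1 (hv x hx hx0)
  rw [inner_neg_left, neg_nonpos] at h2
  have h2 := lt_of_le_of_ne h2 (hv y hy hy0).symm
  have hx' := hC.smul_mem x hx ⟪v, y⟫ h2.le
  have hy' := hC.smul_mem y hy (-⟪v, x⟫) (neg_nonneg.2 h1.le)
  refine hv _ (hC.add_mem hx' hy') (fun h => ?_) ?_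
  · have := hC.eq_zero_of_add_eq_zero hx' hy' h
    exact (smul_ne_zero h2.ne' hx0) this
  · rw [inner_add_right, inner_smul_right, inner_smul_right]
    ring

lemma hasDerivAt_integral_exp_inner {δ : ℝ} (hδ : 0 < δ) {v : Esp d}
    (hv : ∀ x ∈ C, δ * ‖x‖ ≤ ⟪v, x⟫) (hcl : IsClosed C) (z : Esp d) :
    HasDerivAt (fun t : ℝ => ∫ x in C, exp (-⟪v + t • z, x⟫ ^ 2 / 2))
      (-∫ x in C, ⟪v, x⟫ * ⟪z, x⟫ * exp (-⟪v, x⟫ ^ 2 / 2)) 0 := by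
  have hs : {t : ℝ | |t| < 1 ∧ |t| * ‖z‖ < δ / 2} ∈ 𝓝 (0 : ℝ) := by
    have h1 : Continuous fun t : ℝ => |t| := by fun_prop
    have h2 : Continuous fun t : ℝ => |t| * ‖z‖ := by fun_prop
    exact ((isOpen_lt h1 continuous_const).inter (isOpen_lt h2 continuous_const)).mem_nhds
      ⟨by simp, by simpa using hδ⟩
  have hintegrable : IntegrableOn (fun x : Esp d => exp (-⟪v + (0 : ℝ) • z, x⟫ ^ 2 / 2)) C := by
    have := integrableOn_of_le_exp hδ hv hcl (g := fun _ => 1) (by fun_prop) (M := 1)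
      (fun x => by simp)
    simpa using this
  have hdom : IntegrableOn (fun x : Esp d => (‖v‖ + ‖z‖) * ‖z‖ *
      ((1 + ‖x‖ ^ 2) * exp (-(δ ^ 2 / 8) * ‖x‖ ^ 2))) C :=
    ((integrable_one_add_norm_sq_mul_exp (n := d + 1) (by positivity)).const_mul _).integrableOn
  have key := hasDerivAt_integral_of_dominated_loc_of_deriv_le (μ := volume.restrict C)
    (F := fun (t : ℝ) (x : Esp d) => exp (-⟪v + t • z, x⟫ ^ 2 / 2))
    (F' := fun (t : ℝ) (x : Esp d) =>
      -(⟪v + t • z, x⟫ * ⟪z, x⟫ * exp (-⟪v + t • z, x⟫ ^ 2 / 2)))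
    hs (Eventually.of_forall fun t => by fun_prop) hintegrable (by fun_prop)
    (by
      filter_upwards [ae_restrict_mem hcl.measurableSet] with x hx t ht
      obtain ⟨ht1, ht2⟩ := ht
      have h1 : |⟪v + t • z, x⟫| ≤ (‖v‖ + ‖z‖) * ‖x‖ := by
        refine (abs_real_inner_le_norm _ _).trans ?_
        gcongr
        refine (norm_add_le _ _).trans ?_
        rw [norm_smul, Real.norm_eq_abs]
        nlinarith [norm_nonneg z]
      have h2 : |⟪z, x⟫| ≤ ‖z‖ * ‖x‖ := abs_real_inner_le_norm _ _
      have h3 : δ / 2 * ‖x‖ ≤ ⟪v + t • z, x⟫ := by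
        rw [inner_add_left, real_inner_smul_left]
        have h4 : -(|t| * (‖z‖ * ‖x‖)) ≤ t * ⟪z, x⟫ := by
          refine (neg_le_neg ?_).trans (neg_abs_le _)
          rw [abs_mul]
          gcongr
        nlinarith [hv x hx, norm_nonneg x]
      have h5 := pow_le_pow_left₀ (by positivity) h3 2
      rw [norm_neg, norm_mul, norm_mul, Real.norm_eq_abs, Real.norm_eq_abs,
        Real.norm_of_nonneg (exp_pos _).le, ← mul_assoc]
      refine mul_le_mul ?_ (exp_le_exp.2 (by nlinarith)) (exp_pos _).le (by positivity)
      calc |⟪v + t • z, x⟫| * |⟪z, x⟫| ≤ ((‖v‖ + ‖z‖) * ‖x‖) * (‖z‖ * ‖x‖) := by gcongr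
        _ = (‖v‖ + ‖z‖) * ‖z‖ * ‖x‖ ^ 2 := by ring
        _ ≤ (‖v‖ + ‖z‖) * ‖z‖ * (1 + ‖x‖ ^ 2) := by gcongr; linarith)
    hdom
    (by
      refine Eventually.of_forall fun x t _ => ?_
      have h1 : HasDerivAt (fun t : ℝ => ⟪v + t • z, x⟫) ⟪z, x⟫ t := by
        have : (fun t : ℝ => ⟪v + t • z, x⟫) = fun t => ⟪v, x⟫ + t * ⟪z, x⟫ := by
          funext t
          rw [inner_add_left, real_inner_smul_left]
        rw [this]
        simpa using ((hasDerivAt_id t).mul_const ⟪z, x⟫).const_add ⟪v, x⟫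
      convert! (((h1.pow 2).neg).div_const 2).exp using 1
      simp
      ring)
  have h := key.2
  simp only [zero_smul, add_zero] at h
  rwa [integral_neg] at h

/-- The stationarity condition at a minimizer. -/
lemma integral_eq_inner_of_min {δ : ℝ} (hδ : 0 < δ) {v : Esp d}
    (hv : ∀ x ∈ C, δ * ‖x‖ ≤ ⟪v, x⟫) (hcl : IsClosed C)
    (hmin : ∀ w, axisPotential C v + ENNReal.ofReal (‖v‖ ^ 2 / 2) ≤
      axisPotential C w + ENNReal.ofReal (‖w‖ ^ 2 / 2)) (z : Esp d) :
    ∫ x in C, ⟪v, x⟫ * ⟪z, x⟫ * exp (-⟪v, x⟫ ^ 2 / 2) = ⟪v, z⟫ := by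
  have h1 := hasDerivAt_integral_exp_inner hδ hv hcl z
  have h2 : HasDerivAt (fun t : ℝ => ‖v + t • z‖ ^ 2 / 2) ⟪v, z⟫ 0 := by
    have : (fun t : ℝ => ‖v + t • z‖ ^ 2 / 2) =
        fun t => (‖v‖ ^ 2 + 2 * (t * ⟪v, z⟫) + t ^ 2 * ‖z‖ ^ 2) / 2 := by
      funext t
      rw [norm_add_sq_real, real_inner_smul_right, norm_smul, mul_pow, Real.norm_eq_abs, sq_abs]
    rw [this]
    have h3 := ((((hasDerivAt_id (0 : ℝ)).mul_const ⟪v, z⟫).const_mul 2).const_add (‖v‖ ^ 2)).add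
      (((hasDerivAt_id (0 : ℝ)).pow 2).mul_const (‖z‖ ^ 2))
    convert! h3.div_const 2 using 1
    simp
  have hloc : IsLocalMin (fun t : ℝ => (∫ x in C, exp (-⟪v + t • z, x⟫ ^ 2 / 2)) +
      ‖v + t • z‖ ^ 2 / 2) 0 := by
    have hs : {t : ℝ | |t| * ‖z‖ < δ / 2} ∈ 𝓝 (0 : ℝ) :=
      (isOpen_lt (by fun_prop) (by fun_prop)).mem_nhds (by simpa using hδ)
    filter_upwards [hs] with t ht
    have h3 : ∀ x ∈ C, δ / 2 * ‖x‖ ≤ ⟪v + t • z, x⟫ := by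
      intro x hx
      rw [inner_add_left, real_inner_smul_left]
      have h4 : -(|t| * (‖z‖ * ‖x‖)) ≤ t * ⟪z, x⟫ := by
        refine (neg_le_neg ?_).trans (neg_abs_le _)
        rw [abs_mul]
        exact mul_le_mul_of_nonneg_left (abs_real_inner_le_norm _ _) (abs_nonneg _)
      have ht' : |t| * ‖z‖ < δ / 2 := ht
      nlinarith [hv x hx, norm_nonneg x]
    have h5 := hmin (v + t • z)
    have hnn : ∀ w : Esp d, 0 ≤ ∫ x in C, exp (-⟪w, x⟫ ^ 2 / 2) :=
      fun w => integral_nonneg fun x => (exp_pos _).le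
    rw [axisPotential_eq_ofReal hδ hv hcl, axisPotential_eq_ofReal (by positivity) h3 hcl,
      ← ENNReal.ofReal_add (hnn _) (by positivity), ← ENNReal.ofReal_add (hnn _) (by positivity),
      ENNReal.ofReal_le_ofReal_iff (add_nonneg (hnn _) (by positivity))] at h5
    simpa using h5
  have h6 := hloc.hasDerivAt_eq_zero (h1.add h2)
  linarith

lemma IsPointedCone.interior_nonempty (hC : IsPointedCone C) (hvol : volume C ≠ 0) :
    (interior C).Nonempty := by
  rw [Set.nonempty_iff_ne_empty]
  intro h
  have h1 := hC.convex.addHaar_frontier volume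
  rw [hC.isClosed.frontier_eq, h, Set.sdiff_empty] at h1
  exact hvol h1

lemma IsPointedCone.smul_interior (hC : IsPointedCone C) {r : ℝ} (hr : 0 < r) {x : Esp d}
    (hx : x ∈ interior C) : r • x ∈ interior C := by
  rw [mem_interior_iff_mem_nhds] at hx ⊢
  have h1 : Tendsto (fun y : Esp d => r⁻¹ • y) (𝓝 (r • x)) (𝓝 x) := by
    have : Continuous fun y : Esp d => r⁻¹ • y := by fun_prop
    simpa [smul_smul, inv_mul_cancel₀ hr.ne'] using this.tendsto (r • x)
  filter_upwards [h1 hx] with y hy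
  have := hC.smul_mem _ hy r hr.le
  rwa [smul_smul, mul_inv_cancel₀ hr.ne', one_smul] at this

lemma IsPointedCone.add_interior (hC : IsPointedCone C) {x y : Esp d}
    (hx : x ∈ interior C) (hy : y ∈ C) : x + y ∈ interior C := by
  rw [mem_interior_iff_mem_nhds] at hx ⊢
  have h1 : Tendsto (fun w : Esp d => w - y) (𝓝 (x + y)) (𝓝 x) := by
    have : Continuous fun w : Esp d => w - y := by fun_prop
    simpa using this.tendsto (x + y)
  filter_upwards [h1 hx] with w hw
  have := hC.add_mem hw hy
  rwa [sub_add_cancel] at this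

lemma IsPointedCone.mem_interior_of_stationary (hC : IsPointedCone C) (hvol : volume C ≠ 0)
    {δ : ℝ} (hδ : 0 < δ) {v : Esp d} (hv : ∀ x ∈ C, δ * ‖x‖ ≤ ⟪v, x⟫)
    (hst : ∀ z, ∫ x in C, ⟪v, x⟫ * ⟪z, x⟫ * exp (-⟪v, x⟫ ^ 2 / 2) = ⟪v, z⟫) :
    v ∈ interior C := by
  by_contra hvC
  obtain ⟨f, hf⟩ := geometric_hahn_banach_open_point hC.convex.interior isOpen_interior hvC
  obtain ⟨a, ha⟩ := hC.interior_nonempty hvol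
  have hfC : ∀ x ∈ C, f x ≤ 0 := by
    intro x hx
    by_contra! hlt
    have h1 := hf _ (hC.add_interior ha
      (hC.smul_mem x hx (max 0 ((f v - f a) / f x)) (le_max_left _ _)))
    rw [map_add, map_smul, smul_eq_mul] at h1
    have h2 := mul_le_mul_of_nonneg_right (le_max_right 0 ((f v - f a) / f x)) hlt.le
    rw [div_mul_cancel₀ _ hlt.ne'] at h2
    linarith
  have hfint : ∀ x ∈ interior C, f x < 0 := by
    intro x hx
    refine lt_of_le_of_ne (hfC x (interior_subset hx)) fun h0 => ?_
    have hall : ∀ y, f y ≤ 0 := by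
      intro y
      have hcont : Continuous fun t : ℝ => x + t • y := by fun_prop
      have h1 : ∀ᶠ t : ℝ in 𝓝 0, x + t • y ∈ interior C := by
        refine hcont.continuousAt.eventually_mem (isOpen_interior.mem_nhds ?_)
        simpa using hx
      obtain ⟨t, ht, htpos⟩ := ((h1.filter_mono nhdsWithin_le_nhds).and
        (self_mem_nhdsWithin (s := Set.Ioi (0 : ℝ)))).exists
      have h2 := hfC _ (interior_subset ht)
      rw [map_add, h0, zero_add, map_smul, smul_eq_mul] at h2
      exact nonpos_of_mul_nonpos_right h2 htpos
    have h3 := hall (-a)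
    have h4 := hall a
    have h5 := hall v
    have h6 := hf a ha
    rw [map_neg] at h3
    linarith
  have hfv : 0 ≤ f v := by
    by_contra! hlt
    have hc : Continuous fun t : ℝ => t * f a := by fun_prop
    have h1 : ∀ᶠ t : ℝ in 𝓝 0, f v < t * f a :=
      hc.continuousAt.eventually_const_lt (by simpa using hlt)
    obtain ⟨t, ht, htpos⟩ := ((h1.filter_mono nhdsWithin_le_nhds).and
      (self_mem_nhdsWithin (s := Set.Ioi (0 : ℝ)))).exists
    have h2 := hf _ (hC.smul_interior htpos ha)
    rw [map_smul, smul_eq_mul] at h2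
    linarith
  set w : Esp d := (InnerProductSpace.toDual ℝ (Esp d)).symm f with hw
  have hwf : ∀ y, ⟪w, y⟫ = f y := fun y => InnerProductSpace.toDual_symm_apply
  have h1 := hst (-w)
  have hneg : ⟪v, -w⟫ ≤ 0 := by
    rw [inner_neg_right, real_inner_comm, hwf]
    linarith
  have hvpos : ∀ x ∈ C, x ≠ 0 → 0 < ⟪v, x⟫ := fun x hx hx0 =>
    lt_of_lt_of_le (mul_pos hδ (norm_pos_iff.2 hx0)) (hv x hx)
  have hpos : 0 < ∫ x in C, ⟪v, x⟫ * ⟪-w, x⟫ * exp (-⟪v, x⟫ ^ 2 / 2) := by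
    rw [setIntegral_pos_iff_support_of_nonneg_ae]
    · refine lt_of_lt_of_le (isOpen_interior.measure_pos volume ⟨a, ha⟩)
        (measure_mono fun x hx => ⟨?_, interior_subset hx⟩)
      have hx0 : x ≠ 0 := by
        rintro rfl
        simpa using hfint _ hx
      rw [Function.mem_support, inner_neg_left, hwf]
      have := hvpos x (interior_subset hx) hx0
      have := hfint x hx
      exact mul_ne_zero (mul_ne_zero (by linarith) (by linarith)) (exp_pos _).ne'
    · filter_upwards [ae_restrict_mem hC.isClosed.measurableSet] with x hx
      rw [inner_neg_left, hwf]
      have h3 : 0 ≤ ⟪v, x⟫ := le_trans (by positivity) (hv x hx)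
      exact mul_nonneg (mul_nonneg h3 (neg_nonneg.2 (hfC x hx))) (exp_pos _).le
    · refine integrableOn_of_le_exp hδ hv hC.isClosed
        (g := fun x => ⟪v, x⟫ * ⟪-w, x⟫) (by fun_prop) (M := ‖v‖ * ‖w‖) fun x => ?_
      rw [norm_mul]
      calc ‖⟪v, x⟫‖ * ‖⟪-w, x⟫‖ ≤ (‖v‖ * ‖x‖) * (‖-w‖ * ‖x‖) :=
            mul_le_mul (norm_inner_le_norm _ _) (norm_inner_le_norm _ _) (norm_nonneg _)
              (by positivity)
        _ = ‖v‖ * ‖w‖ * ‖x‖ ^ 2 := by rw [norm_neg]; ring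
        _ ≤ ‖v‖ * ‖w‖ * (1 + ‖x‖ ^ 2) := by gcongr; linarith
  linarith

open scoped Pointwise in
/-- A pointed cone of positive volume has an axis satisfying a centering condition. -/
theorem IsPointedCone.exists_axis (hC : IsPointedCone C) (hvol : volume C ≠ 0) :
    ∃ e : Esp d, ‖e‖ = 1 ∧ IsAxialCone C e ∧
      ∀ z, ⟪e, z⟫ = 0 → ∫ x in C, ⟪e, x⟫ * ⟪z, x⟫ * exp (-⟪e, x⟫ ^ 2 / 2) = 0 := by
  obtain ⟨v, hvpos, hmin⟩ : ∃ v : Esp d, (∀ x ∈ C, x ≠ 0 → 0 < ⟪v, x⟫) ∧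
      ∀ w, axisPotential C v + ENNReal.ofReal (‖v‖ ^ 2 / 2) ≤
        axisPotential C w + ENNReal.ofReal (‖w‖ ^ 2 / 2) := by
    obtain ⟨v, hv, hmin⟩ := hC.exists_min
    rcases hC.inner_pos_or_neg (fun x hx hx0 => hC.inner_ne_zero hvol hv hx hx0) with h | h
    · exact ⟨v, h, hmin⟩
    · exact ⟨-v, h, by simpa only [axisPotential_neg, norm_neg] using hmin⟩
  obtain ⟨δ, hδ, hδC⟩ := exists_pos_mul_norm_le_inner hC.isClosed hC.smul_mem hvpos
  have hst := integral_eq_inner_of_min hδ hδC hC.isClosed hmin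
  have hintegrable := hC.mem_interior_of_stationary hvol hδ hδC hst
  obtain ⟨y, hy, hy0⟩ : ∃ y ∈ C, y ≠ 0 := by
    by_contra! h
    have hsub : C ⊆ {0} := fun y hy => h y hy
    exact hvol (measure_mono_null hsub (measure_singleton 0))
  have hv0 : v ≠ 0 := by
    rintro rfl
    simpa using hvpos y hy hy0
  have hr : 0 < ‖v‖ := norm_pos_iff.2 hv0
  refine ⟨‖v‖⁻¹ • v, by simp [norm_smul, hv0], ⟨hC.isClosed, fun x hx y hy => hC.add_mem hx hy,
    hC.smul_mem, hC.smul_interior (inv_pos.2 hr) hintegrable, fun x hx hx0 => ?_⟩, fun z hz => ?_⟩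
  · rw [real_inner_smul_left]
    exact mul_pos (inv_pos.2 hr) (hvpos x hx hx0)
  · set e : Esp d := ‖v‖⁻¹ • v with he
    have hve : v = ‖v‖ • e := by rw [he, smul_smul, mul_inv_cancel₀ hr.ne', one_smul]
    have hCr : ‖v‖ • C = C := by
      ext x
      rw [Set.mem_smul_set_iff_inv_smul_mem₀ hr.ne']
      refine ⟨fun h => ?_, fun h => hC.smul_mem x h _ (inv_nonneg.2 hr.le)⟩
      have := hC.smul_mem _ h _ hr.le
      rwa [smul_smul, mul_inv_cancel₀ hr.ne', one_smul] at this
    have h1 := Measure.setIntegral_comp_smul_of_pos volume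
      (fun x : Esp d => ⟪e, x⟫ * ⟪z, x⟫ * exp (-⟪e, x⟫ ^ 2 / 2)) C hr
    rw [hCr] at h1
    have h2 : ∀ x : Esp d, ⟪e, ‖v‖ • x⟫ * ⟪z, ‖v‖ • x⟫ * exp (-⟪e, ‖v‖ • x⟫ ^ 2 / 2) =
        ‖v‖ * (⟪v, x⟫ * ⟪z, x⟫ * exp (-⟪v, x⟫ ^ 2 / 2)) := by
      intro x
      have : ⟪e, ‖v‖ • x⟫ = ⟪v, x⟫ := by
        rw [he, real_inner_smul_left, real_inner_smul_right, inv_mul_cancel_left₀ hr.ne']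
      rw [this, real_inner_smul_right]
      ring
    have hvz : ⟪v, z⟫ = 0 := by rw [hve, real_inner_smul_left, hz, mul_zero]
    simp only [h2] at h1
    rw [integral_const_mul, hst z, hvz, mul_zero] at h1
    rcases smul_eq_zero.1 h1.symm with h3 | h3
    · exact absurd h3 (by positivity)
    · exact h3

end ChoiceOfAxis

section HausdorffMeasureOnSphere

lemma hausdorffMeasure_restrict_sphere_map {n : ℕ} (s : ℝ)
    (T : EuclideanSpace ℝ (Fin n) ≃ₗᵢ[ℝ] EuclideanSpace ℝ (Fin n)) :
    ((μH[s]).restrict (Metric.sphere (0 : EuclideanSpace ℝ (Fin n)) 1)).map T =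
      (μH[s]).restrict (Metric.sphere (0 : EuclideanSpace ℝ (Fin n)) 1) := by
  have hT : Measurable T := T.continuous.measurable
  ext A hA
  rw [Measure.map_apply hT hA, Measure.restrict_apply (hT hA), Measure.restrict_apply hA]
  conv_rhs => rw [← T.toIsometryEquiv.hausdorffMeasure_preimage]
  congr 1
  ext x
  simp

/-- A finite Hausdorff measure on the unit sphere is a multiple of the uniform distribution. -/
lemma hausdorffMeasure_restrict_sphere_eq {n : ℕ} [NeZero n] {s : ℝ}
    (hfin : μH[s] (Metric.sphere (0 : EuclideanSpace ℝ (Fin n)) 1) ≠ ∞) :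
    (μH[s]).restrict (Metric.sphere (0 : EuclideanSpace ℝ (Fin n)) 1) =
      μH[s] (Metric.sphere (0 : EuclideanSpace ℝ (Fin n)) 1) • sphereProb n := by
  have : IsFiniteMeasure
      ((μH[s]).restrict (Metric.sphere (0 : EuclideanSpace ℝ (Fin n)) 1)) :=
    ⟨by rw [Measure.restrict_apply_univ]; exact hfin.lt_top⟩
  have h := rotationInvariant_unique
    ((μH[s]).restrict (Metric.sphere (0 : EuclideanSpace ℝ (Fin n)) 1)) (sphereProb n)
    ((ae_restrict_mem Metric.isClosed_sphere.measurableSet).mono fun x hx => by simpa using hx)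
    ae_norm_eq_one_sphereProb (hausdorffMeasure_restrict_sphere_map s) sphereProb_map
  rwa [measure_univ, one_smul, Measure.restrict_apply_univ] at h

variable {d : ℕ} {e : Esp d} {ι : EuclideanSpace ℝ (Fin d) →ₗᵢ[ℝ] Esp d}

lemma equator_eq_image (hι : ∀ y, ⟪e, ι y⟫ = 0) (hι' : ∀ x, ⟪e, x⟫ = 0 → ∃ y, ι y = x) :
    equator e = ι '' Metric.sphere 0 1 := by
  ext x
  constructor
  · rintro ⟨hx, hxe⟩
    obtain ⟨y, rfl⟩ := hι' x (by rw [real_inner_comm]; exact hxe)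
    exact ⟨y, by simpa [uSphere] using hx, rfl⟩
  · rintro ⟨y, hy, rfl⟩
    exact ⟨by simpa [uSphere] using hy, (real_inner_comm _ _).trans (hι y)⟩

lemma sigma0_eq (hι : ∀ y, ⟪e, ι y⟫ = 0) (hι' : ∀ x, ⟪e, x⟫ = 0 → ∃ y, ι y = x) (hd : 1 ≤ d) :
    sigma0 d e = (μH[(d : ℝ) - 1] (Metric.sphere (0 : EuclideanSpace ℝ (Fin d)) 1))⁻¹ •
      ((μH[(d : ℝ) - 1]).restrict (Metric.sphere (0 : EuclideanSpace ℝ (Fin d)) 1)).map ι := by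
  have hd' : (0 : ℝ) ≤ (d : ℝ) - 1 := by
    have : (1 : ℝ) ≤ d := by exact_mod_cast hd
    linarith
  have hm : Measurable ι := ι.continuous.measurable
  rw [sigma0, equator_eq_image hι hι', ι.isometry.hausdorffMeasure_image (.inl hd')]
  congr 1
  ext A hA
  rw [Measure.map_apply hm hA, Measure.restrict_apply hA, Measure.restrict_apply (hm hA),
    ← ι.isometry.hausdorffMeasure_image (.inl hd'), Set.image_preimage_inter]

/-- Integrals over the equator either vanish or are averages over the sphere in `ℝ^d`. -/
lemma integral_sigma0 (hι : ∀ y, ⟪e, ι y⟫ = 0) (hι' : ∀ x, ⟪e, x⟫ = 0 → ∃ y, ι y = x)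
    (hd : 1 ≤ d) :
    (∀ f : Esp d → ℝ, ∫ x, f x ∂sigma0 d e = 0) ∨
      ∀ f : Esp d → ℝ, ∫ x, f x ∂sigma0 d e = ∫ u, f (ι u) ∂sphereProb d := by
  have : NeZero d := ⟨by omega⟩
  rw [sigma0_eq hι hι' hd]
  by_cases hfin : μH[(d : ℝ) - 1] (Metric.sphere (0 : EuclideanSpace ℝ (Fin d)) 1) = ∞
  · left
    intro f
    simp [hfin]
  by_cases h0 : μH[(d : ℝ) - 1] (Metric.sphere (0 : EuclideanSpace ℝ (Fin d)) 1) = 0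
  · left
    intro f
    rw [Measure.restrict_eq_zero.2 h0]
    simp
  · right
    intro f
    rw [hausdorffMeasure_restrict_sphere_eq hfin, Measure.map_smul, smul_smul,
      ENNReal.inv_mul_cancel h0 hfin, one_smul]
    exact ι.isometry.isClosedEmbedding.measurableEmbedding.integral_map f

lemma L2dev_sq_le (hι : ∀ y, ⟪e, ι y⟫ = 0) (hι' : ∀ x, ⟪e, x⟫ = 0 → ∃ y, ι y = x)
    (hd : 1 ≤ d) (K : Set (Esp d)) :
    L2dev d K e ^ 2 ≤ ∫ u, (Dfun d (sphRadial K e (ι u)) -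
      ∫ w, Dfun d (sphRadial K e (ι w)) ∂sphereProb d) ^ 2 ∂sphereProb d := by
  rcases integral_sigma0 hι hι' hd with h | h
  · rw [L2dev, h]
    simp only [Real.sqrt_zero, ne_eq, OfNat.ofNat_ne_zero, not_false_eq_true, zero_pow]
    exact integral_nonneg fun u => sq_nonneg _
  · rw [L2dev, h, avgD, h, Real.sq_sqrt (integral_nonneg fun u => sq_nonneg _)]

lemma Delta2_nonneg (K : Set (Esp d)) : 0 ≤ Delta2 d K := by
  refine Real.sInf_nonneg ?_
  rintro _ ⟨e, -, rfl⟩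
  exact Real.sqrt_nonneg _

lemma Delta2_le {K : Set (Esp d)} (he : e ∈ negIntPolar d K) : Delta2 d K ≤ L2dev d K e := by
  refine csInf_le ⟨0, ?_⟩ ⟨e, he, rfl⟩
  rintro _ ⟨e, -, rfl⟩
  exact Real.sqrt_nonneg _

/-- The deviation of a body from caps is bounded by the variance with respect to any axis. -/
lemma IsAxialCone.Delta2_sq_le {C : Set (Esp d)} (hC : IsAxialCone C e) (he : ‖e‖ = 1)
    (hι : ∀ y, ⟪e, ι y⟫ = 0) (hι' : ∀ x, ⟪e, x⟫ = 0 → ∃ y, ι y = x) (hd : 1 ≤ d) :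
    Delta2 d (C ∩ uSphere d) ^ 2 ≤ ∫ u, (Dfun d (coneAngle C e ι u) -
      ∫ w, Dfun d (coneAngle C e ι w) ∂sphereProb d) ^ 2 ∂sphereProb d := by
  have hmem : e ∈ negIntPolar d (C ∩ uSphere d) := by
    refine ⟨by simpa [uSphere] using he, fun x hx => hC.inner_pos x hx.1 ?_⟩
    rintro rfl
    simpa [uSphere] using hx.2
  refine (pow_le_pow_left₀ (Delta2_nonneg _) (Delta2_le hmem) 2).trans
    ((L2dev_sq_le hι hι' hd _).trans (le_of_eq ?_))
  have hcongr : ∀ᵐ u ∂sphereProb d, Dfun d (sphRadial (C ∩ uSphere d) e (ι u)) =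
      Dfun d (coneAngle C e ι u) :=
    ae_norm_eq_one_sphereProb.mono fun u hu => by rw [hC.sphRadial_eq he hι hu]
  rw [integral_congr_ae hcongr]
  exact integral_congr_ae (hcongr.mono fun u hu => by simp only [hu])

end HausdorffMeasureOnSphere

section MeanWidth

variable {d : ℕ}

lemma hasDerivAt_Dfun (x : ℝ) : HasDerivAt (Dfun d) (sin x ^ (d - 1)) x := by
  have hc : Continuous fun t : ℝ => sin t ^ (d - 1) := by fun_prop
  exact intervalIntegral.integral_hasDerivAt_right (hc.intervalIntegrable _ _)
    (hc.stronglyMeasurableAtFilter _ _) hc.continuousAt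

lemma continuous_Dfun : Continuous (Dfun d) :=
  continuous_iff_continuousAt.2 fun x => (hasDerivAt_Dfun x).continuousAt

lemma Dfun_pi : Dfun d π = 2 * Dfun d (π / 2) := by
  have hc : Continuous fun t : ℝ => sin t ^ (d - 1) := by fun_prop
  have h1 : ∫ t in (π / 2)..π, sin t ^ (d - 1) = Dfun d (π / 2) := by
    have := intervalIntegral.integral_comp_sub_left (a := 0) (b := π / 2)
      (fun t : ℝ => sin t ^ (d - 1)) π
    simp only [sin_pi_sub, sub_zero] at this
    rw [Dfun, this]
    congr 1
    ring
  rw [Dfun, ← intervalIntegral.integral_add_adjacent_intervals (b := π / 2)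
    (hc.intervalIntegrable _ _) (hc.intervalIntegrable _ _), h1, Dfun]
  ring

lemma strictMonoOn_Dfun : StrictMonoOn (Dfun d) (Set.Icc 0 π) := by
  refine strictMonoOn_of_deriv_pos (convex_Icc _ _) continuous_Dfun.continuousOn fun x hx => ?_
  rw [interior_Icc] at hx
  rw [(hasDerivAt_Dfun x).deriv]
  exact pow_pos (sin_pos_of_mem_Ioo hx) _

lemma Dfun_le_one (hd : 2 ≤ d) {x : ℝ} (h0 : 0 ≤ x) (hx : x ≤ π / 2) : Dfun d x ≤ 1 := by
  have h1 : Dfun d x ≤ ∫ t in (0 : ℝ)..x, sin t := by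
    refine intervalIntegral.integral_mono_on h0 (Continuous.intervalIntegrable (by fun_prop) _ _)
      (Continuous.intervalIntegrable (by fun_prop) _ _) fun t ht => ?_
    have hs : 0 ≤ sin t := sin_nonneg_of_nonneg_of_le_pi ht.1 (by linarith [ht.2, pi_pos])
    exact pow_le_of_le_one hs (sin_le_one t) (by omega)
  rw [integral_sin, cos_zero] at h1
  linarith [cos_nonneg_of_neg_pi_div_two_le_of_le (by linarith [pi_pos]) hx]

section Axial

variable {C : Set (Esp d)} {e : Esp d} {ι : EuclideanSpace ℝ (Fin d) →ₗᵢ[ℝ] Esp d}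

lemma IsAxialCone.integrable_Dfun [NeZero d] (hd : 2 ≤ d) (hC : IsAxialCone C e) (he : ‖e‖ = 1)
    (hι : ∀ y, ⟪e, ι y⟫ = 0) :
    Integrable (fun u => Dfun d (coneAngle C e ι u)) (sphereProb d) := by
  refine Integrable.of_bound
    (continuous_Dfun.measurable.comp (hC.measurable_coneAngle he hι)).aestronglyMeasurable 1 ?_
  filter_upwards [ae_norm_eq_one_sphereProb] with u hu
  have h := hC.coneAngle_mem_Ioo he hι hu
  rw [Real.norm_of_nonneg (Dfun_nonneg h.1.le (by linarith [h.2, pi_pos]))]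
  exact Dfun_le_one hd h.1.le h.2.le

lemma IsAxialCone.integral_Dfun [NeZero d] (hC : IsAxialCone C e) (he : ‖e‖ = 1)
    (hι : ∀ y, ⟪e, ι y⟫ = 0)
    (mp : MeasurePreserving (fun p : ℝ × EuclideanSpace ℝ (Fin d) => p.1 • e + ι p.2)) :
    ∫ u, Dfun d (coneAngle C e ι u) ∂sphereProb d =
      (sphereProb (d + 1)).real C * Dfun d π := by
  have hm : Measurable fun u => Dfun d (coneAngle C e ι u) :=
    continuous_Dfun.measurable.comp (hC.measurable_coneAngle he hι)
  rw [integral_eq_lintegral_of_nonneg_ae _ hm.aestronglyMeasurable,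
    ← hC.sphereProb_eq he hι mp, ENNReal.toReal_mul,
    ENNReal.toReal_ofReal (Dfun_nonneg pi_pos.le le_rfl), Measure.real]
  filter_upwards [ae_norm_eq_one_sphereProb] with u hu
  have h := hC.coneAngle_mem_Ioo he hι hu
  exact Dfun_nonneg h.1.le (by linarith [h.2, pi_pos])

lemma sphereProb_real_neg {n : ℕ} (A : Set (EuclideanSpace ℝ (Fin n))) :
    (sphereProb n).real (-A) = (sphereProb n).real A := by
  conv_rhs => rw [Measure.real, ← sphereProb_map (LinearIsometryEquiv.neg ℝ)]
  rw [Measure.real]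
  congr 1
  exact ((LinearIsometryEquiv.neg ℝ).toHomeomorph.toMeasurableEquiv.map_apply A).symm

/-- A hyperplane that misses a cone bounds a half-space containing it. -/
lemma IsAxialCone.one_le_hit (hC : IsAxialCone C e) :
    1 ≤ (sphereProb (d + 1)).real {x | ∃ y ∈ C ∩ uSphere d, ⟪x, y⟫ = 0} +
      2 * (sphereProb (d + 1)).real (dualCone C) := by
  have hcover : (Set.univ : Set (Esp d)) ⊆
      {x | ∃ y ∈ C ∩ uSphere d, ⟪x, y⟫ = 0} ∪ (dualCone C ∪ -dualCone C) := by
    intro x _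
    by_contra hx
    rw [Set.mem_union, Set.mem_union, not_or, not_or] at hx
    obtain ⟨h1, h2, h3⟩ := hx
    simp only [dualCone, Set.mem_neg, Set.mem_ofPred_eq, not_forall, not_le, inner_neg_left,
      neg_neg_iff_pos] at h2 h3
    obtain ⟨y, hy, hxy⟩ := h2
    obtain ⟨z, hz, hxz⟩ := h3
    set w : Esp d := ⟪x, z⟫ • y + (-⟪x, y⟫) • z with hw
    have hwC : w ∈ C := hC.add_mem _ (hC.smul_mem y hy _ hxz.le) _
      (hC.smul_mem z hz _ (neg_nonneg.2 hxy.le))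
    have hy0 : y ≠ 0 := by rintro rfl; simp at hxy
    have hz0 : z ≠ 0 := by rintro rfl; simp at hxz
    have hw0 : w ≠ 0 := by
      intro h0
      have h4 : ⟪e, w⟫ = 0 := by rw [h0, inner_zero_right]
      rw [hw, inner_add_right, real_inner_smul_right, real_inner_smul_right] at h4
      nlinarith [mul_pos hxz (hC.inner_pos y hy hy0),
        mul_pos (neg_pos.2 hxy) (hC.inner_pos z hz hz0)]
    refine h1 ⟨‖w‖⁻¹ • w, ⟨hC.smul_mem w hwC _ (by positivity), ?_⟩, ?_⟩
    · simp [uSphere, norm_smul, hw0]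
    · rw [real_inner_smul_right, hw, inner_add_right, real_inner_smul_right,
        real_inner_smul_right]
      ring
  have h1 := measureReal_mono (μ := sphereProb (d + 1)) hcover
  rw [probReal_univ] at h1
  refine h1.trans ((measureReal_union_le _ _).trans ?_)
  have h2 := measureReal_union_le (μ := sphereProb (d + 1)) (dualCone C) (-dualCone C)
  rw [sphereProb_real_neg] at h2
  linarith

end Axial

section Cap

variable {e : Esp d} {a : ℝ}

lemma norm_cos_smul_add_sin_smul (he : ‖e‖ = 1)
    {ι : EuclideanSpace ℝ (Fin d) →ₗᵢ[ℝ] Esp d} (hι : ∀ y, ⟪e, ι y⟫ = 0)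
    {u : EuclideanSpace ℝ (Fin d)} (hu : ‖u‖ = 1) (θ : ℝ) : ‖cos θ • e + sin θ • ι u‖ = 1 := by
  have h : ‖cos θ • e + sin θ • ι u‖ ^ 2 = 1 := by
    rw [norm_add_sq_real, real_inner_smul_left, real_inner_smul_right, hι, norm_smul, norm_smul, he,
      LinearIsometry.norm_map, hu, mul_one, mul_one, Real.norm_eq_abs, Real.norm_eq_abs, sq_abs,
      sq_abs]
    linarith [sin_sq_add_cos_sq θ]
  exact (pow_eq_one_iff_of_nonneg (norm_nonneg _) two_ne_zero).1 h

lemma inner_cos_smul_add_sin_smul (he : ‖e‖ = 1)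
    {ι : EuclideanSpace ℝ (Fin d) →ₗᵢ[ℝ] Esp d} (hι : ∀ y, ⟪e, ι y⟫ = 0)
    (u : EuclideanSpace ℝ (Fin d)) (θ : ℝ) : ⟪cos θ • e + sin θ • ι u, e⟫ = cos θ := by
  rw [inner_add_left, real_inner_smul_left, real_inner_smul_left, real_inner_comm e (ι u), hι,
    real_inner_self_eq_norm_sq, he]
  ring

lemma sphereProb_cap [NeZero d] (he : ‖e‖ = 1) (ha : 0 < a) (ha' : a < π / 2) :
    (sphereProb (d + 1)).real (cap e a) * Dfun d π = Dfun d a := by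
  obtain ⟨ι, hι, -, mp⟩ := exists_orthogonal_splitting he
  have hcont : Continuous fun x : Esp d => ⟪x, e⟫ := by fun_prop
  have hcl : IsClosed {x : Esp d | cos a * ‖x‖ ≤ ⟪x, e⟫} := isClosed_le (by fun_prop) hcont
  have h := sphereProb_radial he hι mp (A := {x : Esp d | cos a * ‖x‖ ≤ ⟪x, e⟫})
    hcl.measurableSet
    (fun x hx t ht => by
      have hx' : cos a * ‖x‖ ≤ ⟪x, e⟫ := hx
      change cos a * ‖t • x‖ ≤ ⟪t • x, e⟫
      rw [norm_smul, Real.norm_of_nonneg ht.le, real_inner_smul_left]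
      nlinarith)
    (α := fun _ => a) (fun _ _ => ha.le) (fun _ _ => by linarith [pi_pos])
    (fun u hu θ hθ h => by
      change cos a * _ ≤ _
      rw [norm_cos_smul_add_sin_smul he hι hu, inner_cos_smul_add_sin_smul he hι, mul_one]
      exact cos_le_cos_of_nonneg_of_le_pi hθ.1.le (by linarith [pi_pos]) h.le)
    (fun u hu θ hθ h => by
      change cos a * _ ≤ _ at h
      rw [norm_cos_smul_add_sin_smul he hι hu, inner_cos_smul_add_sin_smul he hι, mul_one] at h
      exact (strictAntiOn_cos.le_iff_ge ⟨ha.le, by linarith [pi_pos]⟩ ⟨hθ.1.le, hθ.2.le⟩).1 h)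
  rw [lintegral_const, measure_univ, mul_one] at h
  have h2 := congrArg ENNReal.toReal h
  rw [ENNReal.toReal_mul, ENNReal.toReal_ofReal (Dfun_nonneg pi_pos.le le_rfl),
    ENNReal.toReal_ofReal (Dfun_nonneg ha.le (by linarith [pi_pos]))] at h2
  rw [← h2, Measure.real]
  congr 2
  refine measure_congr (ae_norm_eq_one_sphereProb.mono fun x hx => propext ?_)
  change x ∈ cap e a ↔ cos a * ‖x‖ ≤ ⟪x, e⟫
  have h1 : |⟪x, e⟫| ≤ 1 := by simpa [hx, he] using abs_real_inner_le_norm x e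
  have h3 : x ∈ uSphere d := by simpa [uSphere] using hx
  have h4 : x ∈ cap e a ↔ arccos ⟪x, e⟫ ≤ a := ⟨fun h => h.2, fun h => ⟨h3, h⟩⟩
  rw [h4, hx, mul_one, ← strictAntiOn_cos.le_iff_ge ⟨ha.le, by linarith [pi_pos]⟩
    ⟨arccos_nonneg _, arccos_le_pi _⟩, cos_arccos (abs_le.1 h1).1 (abs_le.1 h1).2]

/-- The hyperplanes hitting a cap are those whose normals are not too close to the axis. -/
lemma hit_cap_le [NeZero d] (he : ‖e‖ = 1) (ha : 0 < a) (ha' : a < π / 2) :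
    (sphereProb (d + 1)).real {x | ∃ y ∈ cap e a, ⟪x, y⟫ = 0} * Dfun d π ≤
      Dfun d π - 2 * Dfun d (π / 2 - a) := by
  obtain ⟨ι, hι, -, mp⟩ := exists_orthogonal_splitting he
  have hsin : 0 < sin a := sin_pos_of_pos_of_lt_pi ha (by linarith [pi_pos])
  have hcos : 0 < cos a := cos_pos_of_mem_Ioo ⟨by linarith, ha'⟩
  have hcont : Continuous fun x : Esp d => ⟪x, e⟫ := by fun_prop
  set O : Set (Esp d) := {x | sin a * ‖x‖ < ⟪x, e⟫} with hO
  have hOm : MeasurableSet O := (isOpen_lt (by fun_prop) hcont).measurableSet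
  have h := sphereProb_radial he hι mp (A := O) hOm
    (fun x hx t ht => by
      have hx' : sin a * ‖x‖ < ⟪x, e⟫ := hx
      change sin a * ‖t • x‖ < ⟪t • x, e⟫
      rw [norm_smul, Real.norm_of_nonneg ht.le, real_inner_smul_left]
      nlinarith)
    (α := fun _ => π / 2 - a) (fun _ _ => by linarith) (fun _ _ => by linarith [pi_pos])
    (fun u hu θ hθ h => by
      change sin a * _ < _
      rw [norm_cos_smul_add_sin_smul he hι hu, inner_cos_smul_add_sin_smul he hι, mul_one,
        ← cos_pi_div_two_sub]
      exact cos_lt_cos_of_nonneg_of_le_pi hθ.1.le (by linarith [pi_pos]) h)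
    (fun u hu θ hθ h => by
      change sin a * _ < _ at h
      rw [norm_cos_smul_add_sin_smul he hι hu, inner_cos_smul_add_sin_smul he hι, mul_one,
        ← cos_pi_div_two_sub] at h
      exact ((strictAntiOn_cos.lt_iff_gt ⟨by linarith, by linarith [pi_pos]⟩
        ⟨hθ.1.le, hθ.2.le⟩).1 h).le)
  rw [lintegral_const, measure_univ, mul_one] at h
  have h2 := congrArg ENNReal.toReal h
  rw [ENNReal.toReal_mul, ENNReal.toReal_ofReal (Dfun_nonneg pi_pos.le le_rfl),
    ENNReal.toReal_ofReal (Dfun_nonneg (by linarith) (by linarith [pi_pos]))] at h2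
  have hdisj : Disjoint O (-O) := by
    rw [Set.disjoint_left]
    intro x h3 h4
    change sin a * ‖x‖ < ⟪x, e⟫ at h3
    change sin a * ‖-x‖ < ⟪-x, e⟫ at h4
    rw [norm_neg, inner_neg_left] at h4
    have : 0 ≤ sin a * ‖x‖ := by positivity
    linarith
  have hsub : {x | ∃ y ∈ cap e a, ⟪x, y⟫ = 0} ⊆ (O ∪ -O)ᶜ := by
    rintro x ⟨y, ⟨hy, hye⟩, hxy⟩
    have hy1 : ‖y‖ = 1 := by simpa [uSphere] using hy
    have h1 : |⟪y, e⟫| ≤ 1 := by simpa [hy1, he] using abs_real_inner_le_norm y e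
    have hq : cos a ≤ ⟪y, e⟫ := by
      rw [← cos_arccos (abs_le.1 h1).1 (abs_le.1 h1).2]
      exact cos_le_cos_of_nonneg_of_le_pi (arccos_nonneg _) (by linarith [pi_pos]) hye
    have h3 : ⟪x, e⟫ = ⟪x, e - ⟪y, e⟫ • y⟫ := by
      rw [inner_sub_right, real_inner_smul_right, hxy, mul_zero, sub_zero]
    have h4 : ‖e - ⟪y, e⟫ • y‖ ^ 2 = 1 - ⟪y, e⟫ ^ 2 := by
      rw [norm_sub_sq_real, he, norm_smul, hy1, real_inner_smul_right, real_inner_comm,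
        Real.norm_eq_abs, mul_one, sq_abs]
      ring
    have h5 : ‖e - ⟪y, e⟫ • y‖ ≤ sin a := by
      refine abs_le_of_sq_le_sq' ?_ hsin.le |>.2
      rw [h4]
      nlinarith [sin_sq_add_cos_sq a]
    have h6 : |⟪x, e⟫| ≤ sin a * ‖x‖ := by
      rw [h3]
      refine (abs_real_inner_le_norm _ _).trans ?_
      rw [mul_comm]
      gcongr
    have h7 := abs_le.1 h6
    rintro (h8 | h8)
    · change sin a * ‖x‖ < ⟪x, e⟫ at h8
      linarith
    · change sin a * ‖-x‖ < ⟪-x, e⟫ at h8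
      rw [norm_neg, inner_neg_left] at h8
      linarith
  have h9 := measureReal_mono (μ := sphereProb (d + 1)) hsub
  rw [probReal_compl_eq_one_sub (hOm.union hOm.neg), measureReal_union hdisj hOm.neg,
    sphereProb_real_neg] at h9
  have h10 := mul_le_mul_of_nonneg_right h9 (Dfun_nonneg (d := d) pi_pos.le le_rfl)
  refine h10.trans (le_of_eq ?_)
  rw [← h2, Measure.real]
  ring

end Cap

lemma sigmaMeas_eq (hfin : sigmaMeas d Set.univ ≠ ∞) :
    sigmaMeas d = sigmaMeas d Set.univ • sphereProb (d + 1) := by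
  rw [sigmaMeas, Measure.restrict_apply_univ] at hfin
  rw [sigmaMeas, Measure.restrict_apply_univ]
  exact hausdorffMeasure_restrict_sphere_eq hfin

lemma omegaTot_eq : omegaTot d = (sigmaMeas d Set.univ).toReal := by
  rw [omegaTot, sigmaMeas, Measure.restrict_apply_self, Measure.restrict_apply_univ]

lemma U1_eq (hfin : sigmaMeas d Set.univ ≠ ∞) (h0 : sigmaMeas d Set.univ ≠ 0) (K : Set (Esp d)) :
    U1 d K = (sphereProb (d + 1)).real {x | ∃ y ∈ K, ⟪x, y⟫ = 0} / 2 := by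
  have hpos := (ENNReal.toReal_pos h0 hfin).ne'
  have h : (sigmaMeas d {x | ∃ y ∈ K, ⟪x, y⟫ = 0}).toReal = (sigmaMeas d Set.univ).toReal *
      (sphereProb (d + 1)).real {x | ∃ y ∈ K, ⟪x, y⟫ = 0} := by
    conv_lhs => rw [sigmaMeas_eq hfin]
    rw [Measure.smul_apply, smul_eq_mul, ENNReal.toReal_mul, Measure.real]
  rw [U1, omegaTot_eq, h]
  field_simp

end MeanWidth

section TangentEstimates

variable {d : ℕ}

lemma le_of_deriv_sign {l r a : ℝ} {Φ φ : ℝ → ℝ} (ha : a ∈ Set.Ioo l r)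
    (hderiv : ∀ x ∈ Set.Ioo l r, HasDerivAt Φ (φ x) x)
    (hle : ∀ x ∈ Set.Ioo l r, x ≤ a → φ x ≤ 0) (hge : ∀ x ∈ Set.Ioo l r, a ≤ x → 0 ≤ φ x)
    {x : ℝ} (hx : x ∈ Set.Ioo l r) : Φ a ≤ Φ x := by
  have hcont : ContinuousOn Φ (Set.Ioo l r) := fun y hy =>
    (hderiv y hy).continuousAt.continuousWithinAt
  rcases le_total x a with hxa | hxa
  · have hsub : Set.Icc x a ⊆ Set.Ioo l r := Set.Icc_subset_Ioo hx.1 ha.2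
    refine antitoneOn_of_deriv_nonpos (convex_Icc x a) (hcont.mono hsub)
      (fun y hy => (hderiv y (hsub (interior_subset hy))).differentiableAt.differentiableWithinAt)
      (fun y hy => ?_) ⟨le_rfl, hxa⟩ ⟨hxa, le_rfl⟩ hxa
    rw [(hderiv y (hsub (interior_subset hy))).deriv]
    exact hle y (hsub (interior_subset hy)) (interior_subset hy).2
  · have hsub : Set.Icc a x ⊆ Set.Ioo l r := Set.Icc_subset_Ioo ha.1 hx.2
    refine monotoneOn_of_deriv_nonneg (convex_Icc a x) (hcont.mono hsub)
      (fun y hy => (hderiv y (hsub (interior_subset hy))).differentiableAt.differentiableWithinAt)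
      (fun y hy => ?_) ⟨le_rfl, hxa⟩ ⟨hxa, le_rfl⟩ hxa
    rw [(hderiv y (hsub (interior_subset hy))).deriv]
    exact hge y (hsub (interior_subset hy)) (interior_subset hy).1

lemma sin_cos_pos {x : ℝ} (hx : x ∈ Set.Ioo 0 (π / 2)) : 0 < sin x ∧ 0 < cos x :=
  ⟨sin_pos_of_pos_of_lt_pi hx.1 (by linarith [hx.2, pi_pos]),
    cos_pos_of_mem_Ioo ⟨by linarith [hx.1, pi_pos], hx.2⟩⟩

lemma hasDerivAt_tan_pow (hd : 1 ≤ d) {x : ℝ} (hx : x ∈ Set.Ioo 0 (π / 2)) :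
    HasDerivAt (fun y => tan y ^ d) (sin x ^ (d - 1) * (d / cos x ^ (d + 1))) x := by
  obtain ⟨-, hc⟩ := sin_cos_pos hx
  convert! (hasDerivAt_tan hc.ne').pow d using 1
  obtain ⟨m, rfl⟩ := Nat.exists_eq_add_of_le' hd
  rw [tan_eq_sin_div_cos, Nat.add_sub_cancel, div_pow]
  field_simp
  ring

/-- A quadratic lower bound for `tan ^ d` as a function of `D`. -/
lemma tan_pow_ge (hd : 1 ≤ d) {a c : ℝ} (ha : a ∈ Set.Ioo 0 (π / 2))
    (hc : ∀ x ∈ Set.Ioo 0 (π / 2), 2 * c * sin x ^ (d - 1) * cos x ^ (d + 2) ≤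
      d * (d + 1) * sin x) {x : ℝ} (hx : x ∈ Set.Ioo 0 (π / 2)) :
    tan a ^ d + d / cos a ^ (d + 1) * (Dfun d x - Dfun d a) + c * (Dfun d x - Dfun d a) ^ 2 ≤
      tan x ^ d := by
  set Ψ : ℝ → ℝ := fun y => d / cos y ^ (d + 1) - 2 * c * Dfun d y with hΨ
  have hΨmono : MonotoneOn Ψ (Set.Ioo 0 (π / 2)) := by
    have hder : ∀ y ∈ Set.Ioo 0 (π / 2), HasDerivAt Ψ
        (d * (d + 1) * sin y / cos y ^ (d + 2) - 2 * c * sin y ^ (d - 1)) y := by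
      intro y hy
      obtain ⟨-, hcy⟩ := sin_cos_pos hy
      have h1 := (((hasDerivAt_cos y).pow (d + 1)).inv (pow_ne_zero _ hcy.ne')).const_mul (d : ℝ)
      have h2 := h1.sub ((hasDerivAt_Dfun (d := d) y).const_mul (2 * c))
      convert! h2 using 1
      simp only [Pi.pow_apply, Nat.add_sub_cancel]
      push_cast
      field_simp
      ring
    refine monotoneOn_of_deriv_nonneg (convex_Ioo _ _)
      (fun y hy => (hder y hy).continuousAt.continuousWithinAt)
      (fun y hy => (hder y (interior_subset hy)).differentiableAt.differentiableWithinAt)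
      fun y hy => ?_
    have hy' := interior_subset hy
    obtain ⟨-, hcy⟩ := sin_cos_pos hy'
    rw [(hder y hy').deriv, sub_nonneg, le_div_iff₀ (by positivity)]
    exact hc y hy'
  have key := le_of_deriv_sign (Φ := fun y => tan y ^ d - (d / cos a ^ (d + 1) *
      (Dfun d y - Dfun d a) + c * (Dfun d y - Dfun d a) ^ 2))
    (φ := fun y => sin y ^ (d - 1) * (Ψ y - Ψ a)) ha
    (fun y hy => by
      have h1 := (hasDerivAt_Dfun (d := d) y).sub_const (Dfun d a)
      convert! (hasDerivAt_tan_pow hd hy).sub ((h1.const_mul (d / cos a ^ (d + 1))).add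
        ((h1.pow 2).const_mul c)) using 1
      simp only [hΨ]
      ring)
    (fun y hy hya => mul_nonpos_of_nonneg_of_nonpos (pow_nonneg (sin_cos_pos hy).1.le _)
      (sub_nonpos.2 (hΨmono hy ha hya)))
    (fun y hy hya => mul_nonneg (pow_nonneg (sin_cos_pos hy).1.le _)
      (sub_nonneg.2 (hΨmono ha hy hya))) hx
  simp only [sub_self, mul_zero, ne_eq, OfNat.ofNat_ne_zero, not_false_eq_true, zero_pow,
    add_zero, sub_zero] at key
  linarith

lemma Dfun_two (x : ℝ) : Dfun 2 x = 1 - cos x := by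
  simp [Dfun, integral_sin]

lemma sin_mul_cos_le_half (x : ℝ) : sin x * cos x ≤ 1 / 2 := by
  nlinarith [sq_nonneg (sin x - cos x), sin_sq_add_cos_sq x]

lemma tan_sq_ge {a : ℝ} (ha : a ∈ Set.Ioo 0 (π / 2)) {x : ℝ} (hx : x ∈ Set.Ioo 0 (π / 2)) :
    tan a ^ 2 + 2 / cos a ^ 3 * (cos a - cos x) + 6 * sin a * (cos a - cos x) ^ 2 ≤
      tan x ^ 2 := by
  obtain ⟨hsa, hca⟩ := sin_cos_pos ha
  obtain ⟨-, hcx⟩ := sin_cos_pos hx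
  have htan : ∀ y, 0 < cos y → tan y ^ 2 = 1 / cos y ^ 2 - 1 := by
    intro y hy
    rw [tan_eq_sin_div_cos, div_pow, sin_sq]
    field_simp
  rw [htan a hca, htan x hcx]
  have hsc := sin_mul_cos_le_half a
  set s := sin a
  set ε := cos a
  set w := cos x
  have hw1 : w ≤ 1 := cos_le_one x
  have hε1 : ε ≤ 1 := cos_le_one a
  have h1 : 1 / w ^ 2 - 1 - (1 / ε ^ 2 - 1 + 2 / ε ^ 3 * (ε - w)) =
      (ε - w) ^ 2 * ((2 * w + ε) / (w ^ 2 * ε ^ 3)) := by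
    field_simp
    ring
  have h2 : 6 * s ≤ (2 * w + ε) / (w ^ 2 * ε ^ 3) := by
    rw [le_div_iff₀ (by positivity)]
    have h3 : s * ε ^ 3 ≤ ε ^ 2 / 2 := by nlinarith [sq_nonneg ε]
    have h4 : 6 * s * (w ^ 2 * ε ^ 3) ≤ 3 * ε ^ 2 * w ^ 2 := by nlinarith [sq_nonneg w]
    have h5 : ε ^ 2 * w ^ 2 ≤ ε * w := by
      have : ε * w ≤ 1 := by nlinarith
      nlinarith [mul_pos hca hcx]
    nlinarith
  have h6 := mul_le_mul_of_nonneg_left h2 (sq_nonneg (ε - w))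
  nlinarith

/-- The quadratic lower bound with the constant needed for the stability estimate. -/
lemma tan_pow_ge_stability (hd : 2 ≤ d) {a : ℝ} (ha : a ∈ Set.Ioo 0 (π / 2)) {x : ℝ}
    (hx : x ∈ Set.Ioo 0 (π / 2)) :
    tan a ^ d + d / cos a ^ (d + 1) * (Dfun d x - Dfun d a) +
      (d * (d + 1) * (Dfun d (π / 2) - Dfun d (π / 2 - a))) * (Dfun d x - Dfun d a) ^ 2 ≤
      tan x ^ d := by
  rcases hd.eq_or_lt with rfl | hd
  · have h := tan_sq_ge ha hx
    simp only [Dfun_two, cos_pi_div_two, cos_pi_div_two_sub]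
    norm_num
    convert h using 2
  · refine tan_pow_ge (by omega) ha (fun y hy => ?_) hx
    obtain ⟨hs, hc⟩ := sin_cos_pos hy
    have h1 : Dfun d (π / 2) - Dfun d (π / 2 - a) ≤ 1 := by
      have := Dfun_le_one (d := d) (by omega) (by positivity : 0 ≤ π / 2) le_rfl
      have := Dfun_nonneg (d := d) (by linarith [ha.2] : 0 ≤ π / 2 - a) (by linarith [ha.1, pi_pos])
      linarith
    obtain ⟨m, rfl⟩ := Nat.exists_eq_add_of_le' hd
    have h2 : sin y ^ (m + 1) * cos y ^ (m + 3 + 2) ≤ sin y * cos y :=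
      mul_le_mul (pow_le_of_le_one hs.le (sin_le_one y) (by omega))
        (pow_le_of_le_one hc.le (cos_le_one y) (by omega)) (by positivity) hs.le
    have h3 := h2.trans (sin_mul_cos_le_half y)
    have h4 : 0 ≤ sin y ^ (m + 1) * cos y ^ (m + 3 + 2) := by positivity
    have h5 : (Dfun (m + 3) (π / 2) - Dfun (m + 3) (π / 2 - a)) *
        (sin y ^ (m + 1) * cos y ^ (m + 3 + 2)) ≤ 1 / 2 := by nlinarith
    have hrw : m + 3 - 1 = m + 1 + 1 := by omega
    rw [show m + (2 + 1) = m + 3 from rfl, hrw, pow_succ (sin y) (m + 1)]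
    have h6 : (0 : ℝ) ≤ ((m + 3 : ℕ) : ℝ) * (((m + 3 : ℕ) : ℝ) + 1) * sin y := by positivity
    have h7 := mul_le_mul_of_nonneg_left h5 h6
    linarith

end TangentEstimates

section Stability

variable {d : ℕ} {C : Set (Esp d)} {e : Esp d} {ι : EuclideanSpace ℝ (Fin d) →ₗᵢ[ℝ] Esp d}

lemma IsAxialCone.tan_coneAngle_pow_pos (hC : IsAxialCone C e) (he : ‖e‖ = 1)
    (hι : ∀ y, ⟪e, ι y⟫ = 0) {u : EuclideanSpace ℝ (Fin d)} (hu : ‖u‖ = 1) :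
    0 < tan (coneAngle C e ι u) ^ d := by
  have h := hC.coneAngle_mem_Ioo he hι hu
  exact pow_pos (tan_pos_of_pos_of_lt_pi_div_two h.1 h.2) _

lemma IsAxialCone.measurable_tan_coneAngle_pow (hC : IsAxialCone C e) (he : ‖e‖ = 1)
    (hι : ∀ y, ⟪e, ι y⟫ = 0) : Measurable fun u => tan (coneAngle C e ι u) ^ d := by
  have h := hC.measurable_coneAngle he hι
  simp only [tan_eq_sin_div_cos]
  exact ((measurable_sin.comp h).div (measurable_cos.comp h)).pow_const d

lemma IsAxialCone.lintegral_tan_pow_ne_zero [NeZero d] (hC : IsAxialCone C e) (he : ‖e‖ = 1)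
    (hι : ∀ y, ⟪e, ι y⟫ = 0) :
    ∫⁻ u, ENNReal.ofReal (tan (coneAngle C e ι u) ^ d) ∂sphereProb d ≠ 0 := by
  intro h0
  rw [lintegral_eq_zero_iff (hC.measurable_tan_coneAngle_pow he hι).ennreal_ofReal] at h0
  obtain ⟨u, h1, hu⟩ := (h0.and ae_norm_eq_one_sphereProb).exists
  exact (ENNReal.ofReal_pos.2 (hC.tan_coneAngle_pow_pos he hι hu)).ne' h1

lemma IsAxialCone.integrable_tan_pow (hC : IsAxialCone C e) (he : ‖e‖ = 1)
    (hι : ∀ y, ⟪e, ι y⟫ = 0)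
    (hfin : ∫⁻ u, ENNReal.ofReal (tan (coneAngle C e ι u) ^ d) ∂sphereProb d ≠ ∞) :
    Integrable (fun u => tan (coneAngle C e ι u) ^ d) (sphereProb d) := by
  refine (lintegral_ofReal_ne_top_iff_integrable
    (hC.measurable_tan_coneAngle_pow he hι).aestronglyMeasurable ?_).1 hfin
  exact ae_norm_eq_one_sphereProb.mono fun u hu => (hC.tan_coneAngle_pow_pos he hι hu).le

lemma IsAxialCone.integral_tan_pow (hC : IsAxialCone C e) (he : ‖e‖ = 1)
    (hι : ∀ y, ⟪e, ι y⟫ = 0) : ∫ u, tan (coneAngle C e ι u) ^ d ∂sphereProb d =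
      (∫⁻ u, ENNReal.ofReal (tan (coneAngle C e ι u) ^ d) ∂sphereProb d).toReal :=
  integral_eq_lintegral_of_nonneg_ae
    (ae_norm_eq_one_sphereProb.mono fun _ hu => (hC.tan_coneAngle_pow_pos he hι hu).le)
    (hC.measurable_tan_coneAngle_pow he hι).aestronglyMeasurable

/-- The elementary inequality behind the stability estimate. -/
lemma stability_algebra {n t s s₀ δ V W X Y b B P p : ℝ} (hn : 0 < n) (ht : 0 < t) (hb : 0 < b)
    (hs₀ : 0 ≤ s₀) (hs : s₀ ≤ s) (hδ : 0 ≤ δ) (hδ1 : δ ≤ 1) (hV : 0 ≤ V) (hV1 : V ≤ 1)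
    (hW : W ≤ V) (hP : 2 ≤ P) (hX : t + 2 * b * δ * V ≤ X) (hY0 : 0 ≤ Y) (hXY : X * Y ≤ 1)
    (hB : B ≤ p + s / n * (Y - t⁻¹)) :
    (2 * (b * s₀ * (t ^ 2)⁻¹ / (n + n * b * P * t⁻¹)) * W) * δ ≤ p - B := by
  have hs' : 0 ≤ s := hs₀.trans hs
  set q := 2 * b * δ * V with hq
  have hq0 : 0 ≤ q := by positivity
  have htq : 0 < t + q := by linarith
  have hY : Y ≤ (t + q)⁻¹ := by
    rw [← one_div, le_div_iff₀ htq]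
    nlinarith
  have hqP : q ≤ b * P := by
    have h1 : δ * V ≤ 1 := mul_le_one₀ hδ1 hV hV1
    have h2 : b * (2 * (δ * V)) ≤ b * P := by gcongr; linarith
    linarith
  have h1 : 2 * (b * s₀ * (t ^ 2)⁻¹ / (n + n * b * P * t⁻¹)) * W * δ =
      2 * b * δ * W * s₀ / (n * t * (t + b * P)) := by
    have : t + b * P ≠ 0 := by linarith
    have : n + n * b * P * t⁻¹ = n * (t + b * P) / t := by field_simp
    rw [this]
    field_simp
  have h2 : 2 * b * δ * W * s₀ ≤ q * s := by
    rw [hq]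
    gcongr
  calc 2 * (b * s₀ * (t ^ 2)⁻¹ / (n + n * b * P * t⁻¹)) * W * δ
      = 2 * b * δ * W * s₀ / (n * t * (t + b * P)) := h1
    _ ≤ q * s / (n * t * (t + q)) := by gcongr
    _ = -(s / n * ((t + q)⁻¹ - t⁻¹)) := by field_simp; ring
    _ ≤ -(s / n * (Y - t⁻¹)) := by gcongr
    _ ≤ p - B := by linarith

/-- The stability estimate for the average radial function of the dual cone. -/
lemma IsAxialCone.stability [NeZero d] (hd : 2 ≤ d) (hC : IsAxialCone C e) (he : ‖e‖ = 1)
    (hι : ∀ y, ⟪e, ι y⟫ = 0) (hι' : ∀ x, ⟪e, x⟫ = 0 → ∃ y, ι y = x)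
    (mp : MeasurePreserving (fun p : ℝ × EuclideanSpace ℝ (Fin d) => p.1 • e + ι p.2))
    (hbar : ∀ z, ⟪e, z⟫ = 0 → ∫ x in C, ⟪e, x⟫ * ⟪z, x⟫ * exp (-⟪e, x⟫ ^ 2 / 2) = 0)
    {a a₀ : ℝ} (ha : a ∈ Set.Ioo 0 (π / 2)) (ha₀ : 0 < a₀) (ha₀a : a₀ ≤ a)
    (havg : ∫ u, Dfun d (coneAngle C e ι u) ∂sphereProb d = Dfun d a) :
    2 * ((((d + 1).choose 2 : ℝ) * sin a₀ ^ (d + 1) * (tan a ^ (2 * d))⁻¹) /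
      ((d : ℝ) + (d : ℝ) * ((d + 1).choose 2 : ℝ) * (π / 2) ^ 2 * (tan a ^ d)⁻¹)) *
      Delta2 d (C ∩ uSphere d) ^ 2 * (Dfun d (π / 2) - Dfun d (π / 2 - a)) ≤
      Dfun d (π / 2 - a) - ∫ u, Dfun d (coneAngle (dualCone C) e ι u) ∂sphereProb d := by
  have hprod := hC.lintegral_tan_pow_mul_le_one he hι
    (hC.lintegral_exp_coneHeight_le he hι mp hbar)
  have hX0 := hC.lintegral_tan_pow_ne_zero he hι
  have hY0 := hC.dual.lintegral_tan_pow_ne_zero he hι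
  have hXfin : ∫⁻ u, ENNReal.ofReal (tan (coneAngle C e ι u) ^ d) ∂sphereProb d ≠ ∞ := by
    intro h
    rw [h, ENNReal.top_mul hY0] at hprod
    simp at hprod
  have hYfin :
      ∫⁻ u, ENNReal.ofReal (tan (coneAngle (dualCone C) e ι u) ^ d) ∂sphereProb d ≠ ∞ := by
    intro h
    rw [h, ENNReal.mul_top hX0] at hprod
    simp at hprod
  have hXY : (∫ u, tan (coneAngle C e ι u) ^ d ∂sphereProb d) *
      ∫ u, tan (coneAngle (dualCone C) e ι u) ^ d ∂sphereProb d ≤ 1 := by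
    rw [hC.integral_tan_pow he hι, hC.dual.integral_tan_pow he hι, ← ENNReal.toReal_mul]
    exact ENNReal.toReal_le_of_le_ofReal zero_le_one (by simpa using hprod)
  have hiX := hC.integrable_tan_pow he hι hXfin
  have hiY := hC.dual.integrable_tan_pow he hι hYfin
  have hiD := hC.integrable_Dfun hd he hι
  have hiD' := hC.dual.integrable_Dfun hd he hι
  obtain ⟨hsa, hca⟩ := sin_cos_pos ha
  have ha' : π / 2 - a ∈ Set.Ioo 0 (π / 2) := ⟨by linarith [ha.2], by linarith [ha.1]⟩
  have hDa := Dfun_le_one hd ha.1.le ha.2.le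
  have hDa0 := Dfun_nonneg (d := d) ha.1.le (by linarith [ha.2, pi_pos])
  have hsq : ∀ u, ‖u‖ = 1 → (Dfun d (coneAngle C e ι u) - Dfun d a) ^ 2 ≤ 1 := by
    intro u hu
    have h := hC.coneAngle_mem_Ioo he hι hu
    have h1 := Dfun_le_one hd h.1.le h.2.le
    have h2 := Dfun_nonneg (d := d) h.1.le (by linarith [h.2, pi_pos])
    exact (sq_le_one_iff_abs_le_one _).2 (abs_le.2 ⟨by linarith, by linarith⟩)
  have hiV : Integrable (fun u => (Dfun d (coneAngle C e ι u) - Dfun d a) ^ 2)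
      (sphereProb d) := by
    refine Integrable.of_bound ((hiD.aestronglyMeasurable.sub aestronglyMeasurable_const).pow 2)
      1 ?_
    filter_upwards [ae_norm_eq_one_sphereProb] with u hu
    rw [Real.norm_of_nonneg (sq_nonneg _)]
    exact hsq u hu
  have hΔ := hC.Delta2_sq_le he hι hι' (by omega)
  rw [havg] at hΔ
  set V := ∫ u, (Dfun d (coneAngle C e ι u) - Dfun d a) ^ 2 ∂sphereProb d with hVdef
  have hV0 : 0 ≤ V := integral_nonneg fun u => sq_nonneg _
  have hV1 : V ≤ 1 := by
    have h := integral_mono_ae hiV (integrable_const (1 : ℝ))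
      (ae_norm_eq_one_sphereProb.mono fun u hu => hsq u hu)
    simpa using h
  set δ := Dfun d (π / 2) - Dfun d (π / 2 - a) with hδ
  have hδ0 : 0 ≤ δ := by
    have := strictMonoOn_Dfun (d := d) |>.monotoneOn (a := π / 2 - a) (b := π / 2)
      ⟨ha'.1.le, by linarith [ha'.2, pi_pos]⟩ ⟨by positivity, by linarith [pi_pos]⟩ ha'.2.le
    linarith
  have hδ1 : δ ≤ 1 := by
    have h1 := Dfun_le_one hd (by positivity : 0 ≤ π / 2) le_rfl
    have h2 := Dfun_nonneg (d := d) ha'.1.le (by linarith [ha'.2, pi_pos])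
    linarith
  have hX : tan a ^ d + d * (d + 1) * δ * V ≤ ∫ u, tan (coneAngle C e ι u) ^ d ∂sphereProb d := by
    have h1 : Integrable (fun u => Dfun d (coneAngle C e ι u) - Dfun d a) (sphereProb d) :=
      hiD.sub (integrable_const _)
    have h2 := integral_mono_ae (((integrable_const (tan a ^ d)).add
      (h1.const_mul (d / cos a ^ (d + 1)))).add (hiV.const_mul (d * (d + 1) * δ))) hiX
      (ae_norm_eq_one_sphereProb.mono fun u hu =>
        tan_pow_ge_stability hd ha (hC.coneAngle_mem_Ioo he hι hu))
    simp only [Pi.add_apply] at h2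
    have h12 : Integrable (fun u => tan a ^ d + d / cos a ^ (d + 1) *
        (Dfun d (coneAngle C e ι u) - Dfun d a)) (sphereProb d) :=
      (integrable_const _).add (h1.const_mul _)
    rw [integral_add h12 (hiV.const_mul _),
      integral_add (integrable_const _) (h1.const_mul _), integral_const_mul, integral_const_mul,
      integral_sub hiD (integrable_const _), havg] at h2
    simpa using h2
  have hB : ∫ u, Dfun d (coneAngle (dualCone C) e ι u) ∂sphereProb d ≤ Dfun d (π / 2 - a) +
      sin a ^ (d + 1) / d *
        ((∫ u, tan (coneAngle (dualCone C) e ι u) ^ d ∂sphereProb d) - (tan a ^ d)⁻¹) := by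
    have h1 : Integrable (fun u => tan (coneAngle (dualCone C) e ι u) ^ d - (tan a ^ d)⁻¹)
      (sphereProb d) := hiY.sub (integrable_const _)
    have h2 := integral_mono_ae hiD' ((integrable_const (Dfun d (π / 2 - a))).add
      (h1.const_mul (sin a ^ (d + 1) / d)))
      (ae_norm_eq_one_sphereProb.mono fun u hu => by
        have h3 := tan_pow_ge (d := d) (c := 0) (by omega) ha'
          (fun y hy => by
            have := (sin_cos_pos hy).1
            simp only [mul_zero, zero_mul]
            positivity) (hC.dual.coneAngle_mem_Ioo he hι hu)
        rw [tan_pi_div_two_sub, cos_pi_div_two_sub, inv_pow, zero_mul, add_zero] at h3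
        have h4 : (d : ℝ) / sin a ^ (d + 1) *
            (Dfun d (coneAngle (dualCone C) e ι u) - Dfun d (π / 2 - a)) ≤
            tan (coneAngle (dualCone C) e ι u) ^ d - (tan a ^ d)⁻¹ := by linarith
        have hd0 : (0 : ℝ) < d := by positivity
        have h5 := mul_le_mul_of_nonneg_left h4
          (by positivity : 0 ≤ sin a ^ (d + 1) / (d : ℝ))
        rw [← mul_assoc, div_mul_div_comm, mul_comm (sin a ^ (d + 1)) (d : ℝ),
          div_self (by positivity), one_mul] at h5
        simp only [Pi.add_apply]
        linarith)
    simp only [Pi.add_apply] at h2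
    rw [integral_add (integrable_const _) (h1.const_mul _), integral_const_mul,
      integral_sub hiY (integrable_const _)] at h2
    simpa using h2
  have hchoose : (((d + 1).choose 2 : ℕ) : ℝ) = d * (d + 1) / 2 := by
    rw [Nat.cast_choose_two]
    push_cast
    ring
  have hd0 : (0 : ℝ) < d := by positivity
  rw [hchoose, mul_comm 2 d, pow_mul]
  refine stability_algebra hd0 (pow_pos (tan_pos_of_pos_of_lt_pi_div_two ha.1 ha.2) _)
    (by positivity)
    (pow_nonneg (sin_nonneg_of_nonneg_of_le_pi ha₀.le (by linarith [ha.2, pi_pos])) _)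
    (pow_le_pow_left₀ (sin_nonneg_of_nonneg_of_le_pi ha₀.le (by linarith [ha.2, pi_pos]))
      (sin_le_sin_of_le_of_le_pi_div_two (by linarith [pi_pos]) ha.2.le ha₀a) _)
    hδ0 hδ1 hV0 hV1 hΔ (by nlinarith [pi_gt_three]) (le_trans (le_of_eq (by ring)) hX)
    ?_ hXY hB
  exact integral_nonneg_of_ae
    (ae_norm_eq_one_sphereProb.mono fun u hu => (hC.dual.tan_coneAngle_pow_pos he hι hu).le)

end Stability

section Urysohn

variable {d : ℕ} {C : Set (Esp d)}

lemma IsPointedCone.volume_ne_zero (hC : IsPointedCone C) (h : sphereProb (d + 1) C ≠ 0) :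
    volume C ≠ 0 := by
  intro h0
  have h1 := gaussMass_cone hC.isClosed.measurableSet fun x hx t ht => hC.smul_mem x hx t ht.le
  rw [gaussMass, Measure.restrict_eq_zero.2 h0, lintegral_zero_measure] at h1
  exact mul_ne_zero gaussMass_univ_ne_zero h h1.symm

lemma sphereProb_inter_uSphere (A : Set (Esp d)) :
    sphereProb (d + 1) (A ∩ uSphere d) = sphereProb (d + 1) A := by
  refine measure_congr ?_
  filter_upwards [ae_norm_eq_one_sphereProb] with x hx
  refine propext ⟨fun h => h.1, fun h => ⟨h, ?_⟩⟩
  exact mem_sphere_zero_iff_norm.2 hx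

end Urysohn

/-- Theorem 4.1 / stability of the spherical Urysohn inequality.
If `K ∈ 𝒦_s^d`, `C = B(e,α_C)` is a spherical cap with `σ_d(K) = σ_d(C) > 0`,
`α_C < π/2`, and `α₀ ∈ (0,π/2)` with `α₀ ≤ α_C`, then
`U₁(K) ≥ (1 + β Δ₂(K)²) U₁(C)` with the explicit constant `β`. -/
theorem statement0 (d : ℕ) (hd : 2 ≤ d) (K : Set (Esp d)) (hK : IsProperSphConvBody d K)
    (e : Esp d) (he : e ∈ uSphere d) (αC α0 : ℝ)
    (hvol : sigmaMeas d K = sigmaMeas d (cap e αC)) (hpos : 0 < sigmaMeas d K)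
    (hαC : 0 < αC) (hαC' : αC < π / 2)
    (hα0 : 0 < α0) (hα0' : α0 < π / 2) (h0C : α0 ≤ αC) :
    U1 d K ≥ (1 + (2 * min
        ((((d + 1).choose 2 : ℝ) * Real.sin α0 ^ (d + 1) * (Real.tan αC ^ (2 * d))⁻¹) /
          ((d : ℝ) + (d : ℝ) * ((d + 1).choose 2 : ℝ) * (π / 2) ^ 2 * (Real.tan αC ^ d)⁻¹))
        ((2 / π) ^ 2 * Dfun d (π / 2 - αC))) * Delta2 d K ^ 2) * U1 d (cap e αC) := by
  obtain ⟨C, hcl, hconv, hsmul, -, hneg, rfl⟩ := hK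
  have hC : IsPointedCone C := ⟨hcl, hconv, hsmul, hneg⟩
  have : NeZero d := ⟨by omega⟩
  by_cases hfin : sigmaMeas d Set.univ = ∞
  · have h : ∀ L, U1 d L = 0 := fun L => by simp [U1, omegaTot_eq, hfin]
    rw [h, h, mul_zero]
  have hω : sigmaMeas d Set.univ ≠ 0 := (hpos.trans_le (measure_mono (Set.subset_univ _))).ne'
  rw [sigmaMeas_eq hfin] at hvol hpos
  simp only [Measure.smul_apply, smul_eq_mul, sphereProb_inter_uSphere] at hvol hpos
  have hcap : (sphereProb (d + 1)).real C = (sphereProb (d + 1)).real (cap e αC) :=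
    congrArg ENNReal.toReal ((ENNReal.mul_right_inj hω hfin).1 hvol)
  obtain ⟨v, hv, hax, hbar⟩ := hC.exists_axis (hC.volume_ne_zero (right_ne_zero_of_mul hpos.ne'))
  obtain ⟨ι, hι, hι', mp⟩ := exists_orthogonal_splitting hv
  have he1 : ‖e‖ = 1 := mem_sphere_zero_iff_norm.1 he
  have havg := hax.integral_Dfun hv hι mp
  rw [hcap, sphereProb_cap he1 hαC hαC'] at havg
  have hstab := hax.stability hd hv hι hι' mp hbar ⟨hαC, hαC'⟩ hα0 h0C havg
  rw [hax.dual.integral_Dfun hv hι mp] at hstab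
  have hhit := hax.one_le_hit
  have hhit_cap := hit_cap_le he1 hαC hαC'
  have hmono := strictMonoOn_Dfun (d := d)
  have hDpos : 0 < Dfun d π := by
    have h := hmono (Set.left_mem_Icc.2 pi_pos.le) (Set.right_mem_Icc.2 pi_pos.le) pi_pos
    exact (Dfun_nonneg le_rfl pi_pos.le).trans_lt h
  have hδ : 0 ≤ Dfun d (π / 2) - Dfun d (π / 2 - αC) :=
    sub_nonneg.2 (hmono.monotoneOn ⟨by linarith, by linarith⟩
      ⟨by linarith, by linarith⟩ (by linarith))
  have hD' : 0 ≤ Dfun d (π / 2 - αC) := Dfun_nonneg (by linarith) (by linarith)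
  have hsin : 0 < sin α0 := sin_pos_of_pos_of_lt_pi hα0 (by linarith)
  have htan : 0 < tan αC := tan_pos_of_pos_of_lt_pi_div_two hαC hαC'
  rw [ge_iff_le, U1_eq hfin hω, U1_eq hfin hω]
  have hpi := Dfun_pi (d := d)
  set m := (((d + 1).choose 2 : ℝ) * sin α0 ^ (d + 1) * (tan αC ^ (2 * d))⁻¹) /
    ((d : ℝ) + (d : ℝ) * ((d + 1).choose 2 : ℝ) * (π / 2) ^ 2 * (tan αC ^ d)⁻¹) with hm
  set m' := (2 / π) ^ 2 * Dfun d (π / 2 - αC) with hm'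
  set W := Delta2 d (C ∩ uSphere d) ^ 2 with hW
  set H := (sphereProb (d + 1)).real {x | ∃ y ∈ C ∩ uSphere d, ⟪x, y⟫ = 0}
  set G := (sphereProb (d + 1)).real {x | ∃ y ∈ cap e αC, ⟪x, y⟫ = 0}
  set B := (sphereProb (d + 1)).real (dualCone C)
  have hW0 : 0 ≤ W := sq_nonneg _
  have hmin : 0 ≤ min m m' := le_min (by positivity) (by positivity)
  have hhit' := mul_le_mul_of_nonneg_right hhit hDpos.le
  refine le_of_mul_le_mul_right ?_ hDpos
  calc (1 + 2 * min m m' * W) * (G / 2) * Dfun d π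
      = (1 + 2 * min m m' * W) * (G * Dfun d π / 2) := by ring
    _ ≤ (1 + 2 * min m m' * W) * (Dfun d (π / 2) - Dfun d (π / 2 - αC)) := by
        gcongr
        linarith
    _ ≤ (1 + 2 * m * W) * (Dfun d (π / 2) - Dfun d (π / 2 - αC)) := by
        gcongr
        exact min_le_left _ _
    _ ≤ H / 2 * Dfun d π := by linarith

end
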